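/- Let q be a power of an odd prime. Every irreducible complex character of SU_3(q) of degree (q+1)(q²−1), and every irreducible complex character of SU_3(q) of degree (q+1)(q²−1)/3 (such characters exist only when 3 divides q+1), whose character field is not contained in ℝ, has unitary discriminant q if q ≡ 1 (mod 4) and 1 if q ≡ 3 (mod 4). -/

import Mathlib

open Matrix

noncomputable section

namespace Paper

/-- The character of a matrix representation. -/
def charOf {G : Type} [Group G] {n : ℕ} (ρ : G →* GL (Fin n) ℂ) : G → ℂ :=
  fun g => Matrix.trace ((ρ g : Matrix (Fin n) (Fin n) ℂ))

/-- Irreducibility of a complex matrix representation. -/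
def IsIrredRep {G : Type} [Group G] {n : ℕ} (ρ : G →* GL (Fin n) ℂ) : Prop :=
  0 < n ∧ ∀ W : Submodule ℂ (Fin n → ℂ),
    (∀ (g : G), ∀ v ∈ W, (ρ g : Matrix (Fin n) (Fin n) ℂ).mulVec v ∈ W) → W = ⊥ ∨ W = ⊤

/-- `χ` is an irreducible complex character of `G`. -/
def IsIrrChar {G : Type} [Group G] (χ : G → ℂ) : Prop :=
  ∃ (n : ℕ) (ρ : G →* GL (Fin n) ℂ), IsIrredRep ρ ∧ χ = charOf ρ

/-- The character field `ℚ(χ)`, as a subfield of `ℂ`. -/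
def charField {G : Type} [Group G] (χ : G → ℂ) : Subfield ℂ :=
  Subfield.closure (Set.range χ)

/-- The subfield of real numbers inside `ℂ`. -/
def realsIn : Subfield ℂ := Subfield.closure (Set.range ((↑) : ℝ → ℂ))

/-- The character field of `χ` is not contained in `ℝ`. -/
def NotReal {G : Type} [Group G] (χ : G → ℂ) : Prop := ¬ charField χ ≤ realsIn

/-- `χ` has unitary discriminant `d`. -/
def HasUnitaryDisc {G : Type} [Group G] (χ : G → ℂ) (d : ℂ) : Prop :=
  ∀ (n : ℕ) (ρ : G →* GL (Fin n) ℂ),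
    χ = charOf ρ →
    (∀ g i j, ((ρ g : Matrix (Fin n) (Fin n) ℂ)) i j ∈ charField χ) →
    ∀ H : Matrix (Fin n) (Fin n) ℂ,
      (∀ i j, H i j ∈ charField χ) →
      IsUnit H.det →
      H.conjTranspose = H →
      (∀ g, ((ρ g : Matrix (Fin n) (Fin n) ℂ)).conjTranspose * H *
        (ρ g : Matrix (Fin n) (Fin n) ℂ) = H) →
      ∃ z ∈ charField χ, z ≠ 0 ∧
        (-1 : ℂ) ^ (n * (n - 1) / 2) * H.det = d * (z * (starRingEnd ℂ) z)

/-- `χ` has orthogonal discriminant `d`. -/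
def HasOrthDisc {G : Type} [Group G] (χ : G → ℂ) (d : ℂ) : Prop :=
  ∀ (n : ℕ) (ρ : G →* GL (Fin n) ℂ),
    χ = charOf ρ →
    (∀ g i j, ((ρ g : Matrix (Fin n) (Fin n) ℂ)) i j ∈ charField χ) →
    ∀ H : Matrix (Fin n) (Fin n) ℂ,
      (∀ i j, H i j ∈ charField χ) →
      IsUnit H.det →
      H.transpose = H →
      (∀ g, ((ρ g : Matrix (Fin n) (Fin n) ℂ)).transpose * H *
        (ρ g : Matrix (Fin n) (Fin n) ℂ) = H) →
      ∃ z ∈ charField χ, z ≠ 0 ∧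
        (-1 : ℂ) ^ (n * (n - 1) / 2) * H.det = d * z ^ 2

/-- `χ` is a rational character. -/
def IsRationalChar {G : Type} [Group G] (χ : G → ℂ) : Prop :=
  ∀ g, ∃ r : ℚ, χ g = (r : ℂ)

/-- `χ` is the character of a representation over `ℚ`. -/
def RealizableOverQ {G : Type} [Group G] (χ : G → ℂ) : Prop :=
  ∃ (n : ℕ) (ρ : G →* GL (Fin n) ℂ), χ = charOf ρ ∧
    ∀ g i j, ∃ r : ℚ, ((ρ g : Matrix (Fin n) (Fin n) ℂ)) i j = (r : ℂ)

end Paper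

namespace Paper

variable (p k : ℕ) (F : Type) [Field F] [Fintype F] [ExpChar F p]

/-- The Gram matrix `Ω` (anti-diagonal ones). -/
def Om : Matrix (Fin 3) (Fin 3) F :=
  Matrix.of fun i j => if (i : ℕ) + (j : ℕ) = 2 then 1 else 0

/-- Entrywise `q`-power Frobenius `Φ` on `3×3` matrices, where `q = p^k`. -/
def Phi : Matrix (Fin 3) (Fin 3) F →+* Matrix (Fin 3) (Fin 3) F :=
  (iterateFrobenius F p k).mapMatrix

/-- The special unitary group `SU₃(q) = {g ∈ SL₃(F_{q²}) : Φ(g)ᵀ·Ω·g = Ω}`. -/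
def SU3 : Subgroup (Matrix.SpecialLinearGroup (Fin 3) F) where
  carrier := {g | (Phi p k F g.val)ᵀ * Om F * g.val = Om F}
  one_mem' := by
    show (Phi p k F (1 : Matrix.SpecialLinearGroup (Fin 3) F).val)ᵀ * Om F *
        (1 : Matrix.SpecialLinearGroup (Fin 3) F).val = Om F
    simp
  mul_mem' := by
    intro a b ha hb
    show (Phi p k F (a.val * b.val))ᵀ * Om F * (a.val * b.val) = Om F
    have ha' : (Phi p k F a.val)ᵀ * Om F * a.val = Om F := ha
    have hb' : (Phi p k F b.val)ᵀ * Om F * b.val = Om F := hb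
    calc (Phi p k F (a.val * b.val))ᵀ * Om F * (a.val * b.val)
        = (Phi p k F b.val)ᵀ * ((Phi p k F a.val)ᵀ * Om F * a.val) * b.val := by
          rw [_root_.map_mul, Matrix.transpose_mul]; simp only [Matrix.mul_assoc]
      _ = (Phi p k F b.val)ᵀ * Om F * b.val := by rw [ha']
      _ = Om F := hb'
  inv_mem' := by
    intro a ha
    show (Phi p k F (a⁻¹).val)ᵀ * Om F * (a⁻¹).val = Om F
    have ha' : (Phi p k F a.val)ᵀ * Om F * a.val = Om F := ha
    have h1 : a.val * (a⁻¹).val = 1 := by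
      rw [← Matrix.SpecialLinearGroup.coe_mul, mul_inv_cancel,
        Matrix.SpecialLinearGroup.coe_one]
    nth_rewrite 1 [← ha']
    calc (Phi p k F (a⁻¹).val)ᵀ * ((Phi p k F a.val)ᵀ * Om F * a.val) * (a⁻¹).val
        = (Phi p k F a.val * Phi p k F (a⁻¹).val)ᵀ * Om F * (a.val * (a⁻¹).val) := by
          rw [Matrix.transpose_mul]; simp only [Matrix.mul_assoc]
      _ = Om F := by rw [← _root_.map_mul, h1, _root_.map_one, Matrix.transpose_one,
            Matrix.one_mul, Matrix.mul_one]

end Paper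

namespace Paper

variable (p k : ℕ) (F : Type) [Field F] [Fintype F] [ExpChar F p]

/-- The Borel subgroup of `SU₃(q)`: the upper triangular matrices in `SU₃(q)`. -/
def Borel : Subgroup ↥(SU3 p k F) where
  carrier := {g | Matrix.BlockTriangular ((g : Matrix.SpecialLinearGroup (Fin 3) F) :
    Matrix (Fin 3) (Fin 3) F) id}
  one_mem' := by
    show Matrix.BlockTriangular ((1 : Matrix.SpecialLinearGroup (Fin 3) F) :
      Matrix (Fin 3) (Fin 3) F) id
    rw [Matrix.SpecialLinearGroup.coe_one]
    exact Matrix.blockTriangular_one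
  mul_mem' := by
    intro a b ha hb
    exact Matrix.BlockTriangular.mul ha hb
  inv_mem' := by
    intro a ha
    show Matrix.BlockTriangular (((a⁻¹ : ↥(SU3 p k F)) : Matrix.SpecialLinearGroup (Fin 3) F) :
      Matrix (Fin 3) (Fin 3) F) id
    have hcoe : (((a⁻¹ : ↥(SU3 p k F)) : Matrix.SpecialLinearGroup (Fin 3) F) :
        Matrix (Fin 3) (Fin 3) F)
        = (((a : ↥(SU3 p k F)) : Matrix.SpecialLinearGroup (Fin 3) F) :
          Matrix (Fin 3) (Fin 3) F)⁻¹ := by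
      rw [show ((a⁻¹ : ↥(SU3 p k F)) : Matrix.SpecialLinearGroup (Fin 3) F)
        = ((a : ↥(SU3 p k F)) : Matrix.SpecialLinearGroup (Fin 3) F)⁻¹ from rfl]
      rw [Matrix.SpecialLinearGroup.coe_inv, Matrix.inv_def,
        ((a : ↥(SU3 p k F)) : Matrix.SpecialLinearGroup (Fin 3) F).2]
      simp
    rw [hcoe]
    haveI : Invertible (((a : ↥(SU3 p k F)) : Matrix.SpecialLinearGroup (Fin 3) F) :
        Matrix (Fin 3) (Fin 3) F) := by
      apply Matrix.invertibleOfIsUnitDet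
      rw [((a : ↥(SU3 p k F)) : Matrix.SpecialLinearGroup (Fin 3) F).2]
      exact isUnit_one
    exact Matrix.blockTriangular_inv_of_blockTriangular ha

end Paper

namespace Paper

/-! ### Linear algebra -/

theorem det_skew_card_two {K : Type*} [Field K] (h2 : (2 : K) ≠ 0) {ι : Type*} [Fintype ι]
    [DecidableEq ι] (hc : Fintype.card ι = 2) (A : Matrix ι ι K) (hA : Aᵀ = -A) (h0 : A ≠ 0) :
    ∃ y, A.det = y ^ 2 ∧ y ≠ 0 := by
  have e : ι ≃ Fin 2 := Fintype.equivFinOfCardEq hc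
  set M := Matrix.reindex e e A with hM
  have hMt : ∀ i j, M j i = - M i j := by
    intro i j
    have := congrFun (congrFun hA (e.symm i)) (e.symm j)
    simpa [hM] using this
  have hd : ∀ i, M i i = 0 := by
    intro i
    have := hMt i i
    have h3 : 2 * M i i = 0 := by linear_combination this
    exact (mul_eq_zero.1 h3).resolve_left h2
  have hdet : A.det = M.det := by rw [hM, Matrix.det_reindex_self]
  refine ⟨M 0 1, ?_, ?_⟩
  · rw [hdet, Matrix.det_fin_two, hd, hMt 0 1]; ring
  · intro h
    apply h0
    have : M = 0 := by
      ext i j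
      fin_cases i <;> fin_cases j
      · exact hd 0
      · exact h
      · simpa [h] using hMt 0 1
      · exact hd 1
    have h4 := congrArg (Matrix.reindex e.symm e.symm) this
    simpa [hM] using h4

theorem det_skew_sq {K : Type*} [Field K] (h2 : (2 : K) ≠ 0) :
    ∀ (n : ℕ) (ι : Type) [Fintype ι] [DecidableEq ι] (_ : Fintype.card ι = n)
      (A : Matrix ι ι K) (_ : Aᵀ = -A), ∃ y, A.det = y ^ 2 := by
  intro n
  induction n using Nat.strong_induction_on with
  | _ n ih =>
  intro ι _ _ hcard A hA
  by_cases h0 : A = 0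
  · by_cases hn : n = 0
    · have : IsEmpty ι := Fintype.card_eq_zero_iff.1 (hcard.trans hn)
      exact ⟨1, by simp [Matrix.det_isEmpty]⟩
    · have : Nonempty ι := Fintype.card_pos_iff.1 (by omega)
      exact ⟨0, by rw [h0, Matrix.det_zero]; simp⟩
  have hAt : ∀ i j, A j i = - A i j := fun i j => congrFun (congrFun hA i) j
  have hd : ∀ i, A i i = 0 := by
    intro i
    have := hAt i i
    have h3 : 2 * A i i = 0 := by linear_combination this
    exact (mul_eq_zero.1 h3).resolve_left h2
  obtain ⟨i, j, hij⟩ : ∃ i j, A i j ≠ 0 := by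
    by_contra hcon
    push Not at hcon
    exact h0 (by ext i j; exact hcon i j)
  have hne : i ≠ j := by rintro rfl; exact hij (hd i)
  obtain ⟨P, hP⟩ : ∃ P : ι → Prop, ∀ x, x ∈ ({i, j} : Finset ι) ↔ P x := ⟨_, fun x => Iff.rfl⟩
  have : DecidablePred P := Classical.decPred P
  have hcP : Fintype.card {x // P x} = 2 := by
    rw [Fintype.card_of_subtype _ hP]; exact Finset.card_pair hne
  have hcN : Fintype.card {x // ¬ P x} = n - 2 := by
    rw [Fintype.card_subtype_compl, hcP, hcard]
  have hn2 : 2 ≤ n := by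
    rw [← hcard, ← hcP]; exact Fintype.card_subtype_le _
  set A1 := toBlock A P P with hA1
  set B1 := toBlock A P (fun x => ¬ P x) with hB1
  set C1 := toBlock A (fun x => ¬ P x) P with hC1
  set D1 := toBlock A (fun x => ¬ P x) (fun x => ¬ P x) with hD1
  have tA1 : A1ᵀ = -A1 := by ext x y; exact hAt _ _
  have tD1 : D1ᵀ = -D1 := by ext x y; exact hAt _ _
  have tB1 : B1ᵀ = -C1 := by ext x y; exact hAt _ _
  have tC1 : C1ᵀ = -B1 := by ext x y; exact hAt _ _
  have hA10 : A1 ≠ 0 := by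
    intro h
    exact hij (congrFun (congrFun h ⟨i, (hP i).1 (by simp)⟩) ⟨j, (hP j).1 (by simp)⟩)
  obtain ⟨y1, hy1, hy10⟩ := det_skew_card_two h2 hcP A1 tA1 hA10
  have hu : IsUnit A1.det := by rw [hy1]; exact (pow_ne_zero 2 hy10).isUnit
  have : Invertible A1 := Matrix.invertibleOfIsUnitDet _ hu
  have tinv : (⅟A1)ᵀ = -⅟A1 := by
    rw [Matrix.invOf_eq_nonsing_inv, Matrix.transpose_nonsing_inv, tA1]
    apply Matrix.inv_eq_left_inv
    rw [neg_mul_neg, Matrix.nonsing_inv_mul _ hu]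
  obtain ⟨y2, hy2⟩ := ih (n - 2) (by omega) {x // ¬ P x} hcN (D1 - C1 * ⅟A1 * B1) (by
    rw [Matrix.transpose_sub, Matrix.transpose_mul, Matrix.transpose_mul, tD1, tB1, tC1, tinv]
    simp only [Matrix.mul_neg, Matrix.neg_mul, neg_neg, Matrix.mul_assoc]
    abel)
  refine ⟨y1 * y2, ?_⟩
  rw [Matrix.det_toBlock A P, Matrix.det_fromBlocks₁₁, hy1, hy2]; ring

theorem lift_mat {n : ℕ} (L : Subfield ℂ) (A : Matrix (Fin n) (Fin n) ℂ) (hA : ∀ i j, A i j ∈ L) :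
    ∃ A' : Matrix (Fin n) (Fin n) L, A = L.subtype.mapMatrix A' :=
  ⟨Matrix.of fun i j => ⟨A i j, hA i j⟩, by ext i j; rfl⟩

theorem det_mem {n : ℕ} (L : Subfield ℂ) (A : Matrix (Fin n) (Fin n) ℂ) (hA : ∀ i j, A i j ∈ L) :
    A.det ∈ L := by
  obtain ⟨A', rfl⟩ := lift_mat L A hA
  rw [← RingHom.map_det]; exact A'.det.2

theorem inv_mem_L {n : ℕ} (L : Subfield ℂ) (A : Matrix (Fin n) (Fin n) ℂ) (hA : ∀ i j, A i j ∈ L)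
    (hu : IsUnit A.det) : ∀ i j, A⁻¹ i j ∈ L := by
  obtain ⟨A', rfl⟩ := lift_mat L A hA
  have hu' : IsUnit A'.det := by
    rw [← RingHom.map_det] at hu
    rw [isUnit_iff_ne_zero] at hu ⊢
    intro h; exact hu (by rw [h, map_zero])
  have : (L.subtype.mapMatrix A')⁻¹ = L.subtype.mapMatrix A'⁻¹ := by
    apply Matrix.inv_eq_left_inv
    rw [← map_mul, Matrix.nonsing_inv_mul _ hu', map_one]
  intro i j
  rw [this]; exact (A'⁻¹ i j).2

theorem mul_mem_L {n : ℕ} (L : Subfield ℂ) {A B : Matrix (Fin n) (Fin n) ℂ}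
    (hA : ∀ i j, A i j ∈ L) (hB : ∀ i j, B i j ∈ L) : ∀ i j, (A * B) i j ∈ L := by
  intro i j
  rw [Matrix.mul_apply]
  exact sum_mem fun x _ => mul_mem (hA _ _) (hB _ _)

theorem det_skew_sq_L {n : ℕ} (L : Subfield ℂ) (A : Matrix (Fin n) (Fin n) ℂ)
    (hA : ∀ i j, A i j ∈ L) (hs : Aᵀ = -A) : ∃ y ∈ L, A.det = y ^ 2 := by
  obtain ⟨A', rfl⟩ := lift_mat L A hA
  obtain ⟨y, hy⟩ := det_skew_sq (K := L) two_ne_zero n (Fin n) (by simp) A' (by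
    ext i j
    have := congrFun (congrFun hs i) j
    simpa using this)
  exact ⟨y, y.2, by rw [← RingHom.map_det, hy]; simp⟩

/-- Idempotent matrices: trace is a natural number, determinant of `1 + (c-1)e`. -/
theorem idem_trace {n : ℕ} (e : Matrix (Fin n) (Fin n) ℂ) (he : e * e = e) :
    e.trace = (Module.finrank ℂ (LinearMap.range (Matrix.toLin' e)) : ℂ) ∧
    ∀ c : ℂ, (1 + (c - 1) • e).det = c ^ (Module.finrank ℂ (LinearMap.range (Matrix.toLin' e))) := by
  set f := Matrix.toLin' e with hf
  have hi : IsIdempotentElem f := by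
    show f * f = f
    rw [hf, Module.End.mul_eq_comp, ← Matrix.toLin'_mul, he]
  have hp := (LinearMap.isProj_range_iff_isIdempotentElem f).2 hi
  refine ⟨?_, fun c => ?_⟩
  · rw [← hp.trace, hf, Matrix.trace_toLin'_eq]
  · have h1 : (1 + (c - 1) • e).det = LinearMap.det (1 + (c - 1) • f) := by
      rw [← LinearMap.det_toLin']; congr 1
      rw [map_add, map_smul, Matrix.toLin'_one]; rfl
    have h2 : (1 + (c - 1) • f) = (f.range.prodEquivOfIsCompl f.ker hp.isCompl).conj
        (LinearMap.prodMap (c • LinearMap.id) LinearMap.id) := by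
      conv_lhs => rw [hp.eq_conj_prodMap]
      rw [show (1 : Module.End ℂ (Fin n → ℂ)) = (f.range.prodEquivOfIsCompl f.ker hp.isCompl).conj 1
        from ((f.range.prodEquivOfIsCompl f.ker hp.isCompl).conj_id).symm]
      rw [← map_smul, ← map_add]
      congr 1
      ext x
      · simp [sub_smul]
      · simp
      · simp
      · simp
    rw [h1, h2, LinearEquiv.conj_apply, LinearMap.comp_assoc, LinearMap.det_conj, LinearMap.det_prodMap]
    simp
end Paper

namespace Paper

open Polynomial in
theorem poly_sq (L : Subfield ℂ) : ∀ (d : ℕ) (f : L[X]), f.natDegree = d → f.Monic →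
    (∀ μ : ℂ, Even ((f.map L.subtype).rootMultiplicity μ)) → ∃ P : L[X], f = P ^ 2 := by
  intro d
  induction d using Nat.strong_induction_on with
  | _ d ih =>
  intro f hd hm he
  by_cases h1 : f = 1
  · exact ⟨1, by rw [h1]; simp⟩
  have hnu : ¬ IsUnit f := fun h => h1 (hm.eq_one_of_isUnit h)
  obtain ⟨g, hgm, hgi, h, hgh⟩ := exists_monic_irreducible_factor f hnu
  have hinj : Function.Injective L.subtype := L.subtype.injective
  have hg0 : g.map L.subtype ≠ 0 := (hgm.map _).ne_zero
  have hhm : h.Monic := hgm.of_mul_monic_left (hgh ▸ hm)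
  have hh0 : h.map L.subtype ≠ 0 := (hhm.map _).ne_zero
  have hsep : (g.map L.subtype).Separable := hgi.separable.map
  have hle : ∀ μ, (g.map L.subtype).rootMultiplicity μ ≤ 1 := fun μ =>
    rootMultiplicity_le_one_of_separable hsep μ
  obtain ⟨μ, hμ⟩ : ∃ μ, (g.map L.subtype).IsRoot μ := by
    apply IsAlgClosed.exists_root
    rw [degree_map]
    exact hgi.degree_pos.ne'
  have hmin : g = minpoly L μ := by
    refine minpoly.eq_of_irreducible_of_monic hgi ?_ hgm
    rw [aeval_def, ← eval_map]; exact hμ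
  have e1 := he μ
  rw [hgh, Polynomial.map_mul, rootMultiplicity_mul (mul_ne_zero hg0 hh0)] at e1
  have hp : 0 < (g.map L.subtype).rootMultiplicity μ := (rootMultiplicity_pos hg0).2 hμ
  have hp1 := hle μ
  have hroot : (h.map L.subtype).IsRoot μ := by
    rw [← rootMultiplicity_pos hh0]
    rcases e1 with ⟨r, hr⟩
    omega
  have hdvd : g ∣ h := by
    rw [hmin]
    apply minpoly.dvd
    rw [aeval_def, ← eval_map]; exact hroot
  obtain ⟨h', hh'⟩ := hdvd
  have hf' : f = g ^ 2 * h' := by rw [hgh, hh']; ring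
  have hh'm : h'.Monic := hgm.of_mul_monic_left (hh' ▸ hhm)
  have hh'0 : h'.map L.subtype ≠ 0 := (hh'm.map _).ne_zero
  have hdeg : f.natDegree = 2 * g.natDegree + h'.natDegree := by
    rw [hf', (hgm.pow 2).natDegree_mul hh'm, hgm.natDegree_pow]
  have hgd := hgi.natDegree_pos
  obtain ⟨P, hP⟩ := ih h'.natDegree (by omega) h' rfl hh'm (by
    intro ν
    have e2 := he ν
    rw [hf', Polynomial.map_mul, Polynomial.map_pow,
      rootMultiplicity_mul (mul_ne_zero (pow_ne_zero 2 hg0) hh'0), pow_two,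
      rootMultiplicity_mul (mul_ne_zero hg0 hg0)] at e2
    rcases e2 with ⟨r, hr⟩
    exact ⟨r - (g.map L.subtype).rootMultiplicity ν, by omega⟩)
  exact ⟨g * P, by rw [hf', hP]; ring⟩

theorem even_of_anticomm {V : Type*} [AddCommGroup V] [Module ℂ V] [FiniteDimensional ℂ V]
    (a b : V →ₗ[ℂ] V) (ha : Function.Injective a) (hb : Function.Injective b)
    (hab : a ∘ₗ b = - (b ∘ₗ a)) : Even (Module.finrank ℂ V) := by
  have h := congrArg LinearMap.det hab
  rw [← neg_one_smul ℂ (b ∘ₗ a), LinearMap.det_smul, LinearMap.det_comp, LinearMap.det_comp] at h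
  have ha' : LinearMap.det a ≠ 0 := by
    intro h0
    have := LinearMap.bot_lt_ker_of_det_eq_zero h0
    rw [LinearMap.ker_eq_bot.2 ha] at this; exact lt_irrefl _ this
  have hb' : LinearMap.det b ≠ 0 := by
    intro h0
    have := LinearMap.bot_lt_ker_of_det_eq_zero h0
    rw [LinearMap.ker_eq_bot.2 hb] at this; exact lt_irrefl _ this
  by_contra hodd
  rw [Nat.not_even_iff_odd] at hodd
  rw [hodd.neg_one_pow] at h
  have : 2 * (LinearMap.det a * LinearMap.det b) = 0 := by linear_combination h
  simp [ha', hb'] at this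

/-- a matrix over `L` commuting with two invertible anticommuting matrices has square determinant -/
theorem det_sq_of_anticomm {n : ℕ} (L : Subfield ℂ) (Y A C : Matrix (Fin n) (Fin n) ℂ)
    (hY : ∀ i j, Y i j ∈ L) (hA : IsUnit A.det) (hC : IsUnit C.det) (hAC : A * C = -(C * A))
    (hYA : Y * A = A * Y) (hYC : Y * C = C * Y) (hn : Even n) :
    ∃ w ∈ L, Y.det = w ^ 2 := by
  obtain ⟨Y', rfl⟩ := lift_mat L Y hY
  have hev : ∀ μ : ℂ, Even ((Y'.charpoly.map L.subtype).rootMultiplicity μ) := by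
    intro μ
    set φ := Matrix.toLin' (L.subtype.mapMatrix Y') with hφ
    have hch : Y'.charpoly.map L.subtype = LinearMap.charpoly φ := by
      rw [hφ, ← Matrix.charpoly_map]
      exact (Matrix.charpoly_toLin' _).symm
    rw [hch, ← LinearMap.finrank_maxGenEigenspace_eq]
    have cA : Commute φ (Matrix.toLin' A) := by
      show φ * _ = _ * φ
      rw [hφ, Module.End.mul_eq_comp, Module.End.mul_eq_comp, ← Matrix.toLin'_mul,
        ← Matrix.toLin'_mul, hYA]
    have cC : Commute φ (Matrix.toLin' C) := by
      show φ * _ = _ * φ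
      rw [hφ, Module.End.mul_eq_comp, Module.End.mul_eq_comp, ← Matrix.toLin'_mul,
        ← Matrix.toLin'_mul, hYC]
    have mA := Module.End.mapsTo_maxGenEigenspace_of_comm cA μ
    have mC := Module.End.mapsTo_maxGenEigenspace_of_comm cC μ
    have iA : Function.Injective (Matrix.toLin' A) := by
      rw [Matrix.toLin'_apply'] ; exact Matrix.mulVec_injective_of_isUnit ((Matrix.isUnit_iff_isUnit_det _).2 hA)
    have iC : Function.Injective (Matrix.toLin' C) := by
      rw [Matrix.toLin'_apply'] ; exact Matrix.mulVec_injective_of_isUnit ((Matrix.isUnit_iff_isUnit_det _).2 hC)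
    refine even_of_anticomm (LinearMap.restrict _ mA) (LinearMap.restrict _ mC) ?_ ?_ ?_
    · intro x y hxy
      exact Subtype.ext (iA (congrArg Subtype.val hxy))
    · intro x y hxy
      exact Subtype.ext (iC (congrArg Subtype.val hxy))
    · ext1 x
      apply Subtype.ext
      show Matrix.toLin' A (Matrix.toLin' C x) = - (Matrix.toLin' C (Matrix.toLin' A x))
      simp only [Matrix.toLin'_apply, Matrix.mulVec_mulVec, hAC, Matrix.neg_mulVec]
  obtain ⟨P, hP⟩ := poly_sq L _ Y'.charpoly rfl (Matrix.charpoly_monic _) hev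
  refine ⟨P.coeff 0, (P.coeff 0).2, ?_⟩
  rw [← RingHom.map_det, Matrix.det_eq_sign_charpoly_coeff, hP]
  simp [hn.neg_one_pow, Polynomial.coeff_zero_eq_eval_zero]

/-- if `e ≤ f` style: naturality helper -/
theorem idem_nat {n : ℕ} (e : Matrix (Fin n) (Fin n) ℂ) (he : e * e = e) :
    ∃ k : ℕ, e.trace = (k : ℂ) ∧ ∀ c : ℂ, (1 + (c - 1) • e).det = c ^ k :=
  ⟨_, idem_trace e he⟩

theorem idem_trace_zero {n : ℕ} (e : Matrix (Fin n) (Fin n) ℂ) (he : e * e = e)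
    (h0 : e.trace = 0) : e = 0 := by
  have h := (idem_trace e he).1
  rw [h0] at h
  have h1 : Module.finrank ℂ (LinearMap.range (Matrix.toLin' e)) = 0 := by exact_mod_cast h.symm
  have h2 := Submodule.finrank_eq_zero.1 h1
  rw [LinearMap.range_eq_bot] at h2
  simpa using h2

end Paper

namespace Paper

/-! ### Representation theory -/

/-- irreducibility for matrix valued homomorphisms -/
def Irr {G : Type} [Group G] {n : ℕ} (R : G →* Matrix (Fin n) (Fin n) ℂ) : Prop :=
  0 < n ∧ ∀ W : Submodule ℂ (Fin n → ℂ),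
    (∀ (g : G), ∀ v ∈ W, (R g).mulVec v ∈ W) → W = ⊥ ∨ W = ⊤

section
variable {G : Type} [Group G] {n : ℕ} (R : G →* Matrix (Fin n) (Fin n) ℂ)

theorem R_inv_mul (g : G) : R g⁻¹ * R g = 1 := by rw [← map_mul, inv_mul_cancel, map_one]
theorem R_mul_inv (g : G) : R g * R g⁻¹ = 1 := by rw [← map_mul, mul_inv_cancel, map_one]

variable {R}

theorem ker_zero_or_unit (hR : Irr R) (A : Matrix (Fin n) (Fin n) ℂ)
    (h : ∀ g v, A.mulVec v = 0 → A.mulVec ((R g).mulVec v) = 0) : A = 0 ∨ IsUnit A.det := by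
  rcases hR.2 (LinearMap.ker (Matrix.toLin' A)) (by
    intro g v hv
    rw [LinearMap.mem_ker, Matrix.toLin'_apply] at hv ⊢
    exact h g v hv) with h0 | h0
  · right
    rw [isUnit_iff_ne_zero]
    intro hd
    have := LinearMap.bot_lt_ker_of_det_eq_zero (f := Matrix.toLin' A) (by rw [LinearMap.det_toLin', hd])
    rw [h0] at this; exact lt_irrefl _ this
  · left
    rw [LinearMap.ker_eq_top] at h0
    simpa using h0

theorem schur_unit (hR : Irr R) (R' : G → Matrix (Fin n) (Fin n) ℂ) (A : Matrix (Fin n) (Fin n) ℂ)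
    (h : ∀ g, R' g * A = A * R g) : A = 0 ∨ IsUnit A.det := by
  apply ker_zero_or_unit hR
  intro g v hv
  rw [Matrix.mulVec_mulVec, ← h, ← Matrix.mulVec_mulVec, hv, Matrix.mulVec_zero]

theorem schur_scalar (hR : Irr R) (A : Matrix (Fin n) (Fin n) ℂ)
    (h : ∀ g, R g * A = A * R g) : ∃ c : ℂ, A = c • 1 := by
  have : Nonempty (Fin n) := ⟨⟨0, hR.1⟩⟩
  have : Nontrivial (Fin n → ℂ) := inferInstance
  obtain ⟨c, hc⟩ := Module.End.exists_eigenvalue (Matrix.toLin' A)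
  refine ⟨c, ?_⟩
  rcases schur_unit hR (fun g => R g) (A - c • 1) (by
    intro g; rw [Matrix.mul_sub, Matrix.sub_mul, h]; simp) with h0 | h0
  · exact sub_eq_zero.1 h0
  · exfalso
    obtain ⟨v, hv⟩ := hc.exists_hasEigenvector
    have h1 : (A - c • (1 : Matrix (Fin n) (Fin n) ℂ)).mulVec v = 0 := by
      have := hv.apply_eq_smul
      rw [Matrix.toLin'_apply] at this
      rw [Matrix.sub_mulVec, this, Matrix.smul_mulVec, Matrix.one_mulVec, sub_self]
    have h2 := Matrix.mulVec_injective_of_isUnit ((Matrix.isUnit_iff_isUnit_det _).2 h0)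
    exact hv.2 (h2 (by rw [h1, Matrix.mulVec_zero]))

theorem trace_R_mul_comm (g h : G) : (R (g * h)).trace = (R (h * g)).trace := by
  rw [map_mul, map_mul, Matrix.trace_mul_comm]

variable [Fintype G]

/-- Schur orthogonality in matrix form -/
theorem schur_orth (hR : Irr R) (E : Matrix (Fin n) (Fin n) ℂ) :
    ∑ g, R g * E * R g⁻¹ = ((Fintype.card G : ℂ) * E.trace / n) • 1 := by
  obtain ⟨c, hc⟩ := schur_scalar hR (∑ g, R g * E * R g⁻¹) (by
    intro h
    rw [Finset.mul_sum, Finset.sum_mul]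
    refine Fintype.sum_equiv (Equiv.mulLeft h) _ _ (fun g => ?_)
    simp only [Equiv.coe_mulLeft, _root_.mul_inv_rev, map_mul, Matrix.mul_assoc]
    rw [R_inv_mul, Matrix.mul_one])
  have ht := congrArg Matrix.trace hc
  rw [Matrix.trace_sum, Matrix.trace_smul, Matrix.trace_one] at ht
  have : ∀ g, (R g * E * R g⁻¹).trace = E.trace := by
    intro g
    rw [Matrix.trace_mul_comm, ← Matrix.mul_assoc, R_inv_mul, Matrix.one_mul]
  simp only [this, Finset.sum_const, Finset.card_univ, nsmul_eq_mul, smul_eq_mul, Fintype.card_fin] at ht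
  have hn : (n : ℂ) ≠ 0 := by exact_mod_cast hR.1.ne'
  rw [hc, ht]
  congr 1
  field_simp

theorem single_sandwich (A B : Matrix (Fin n) (Fin n) ℂ) (i j k l : Fin n) :
    (A * Matrix.single i j (1 : ℂ) * B) k l = A k i * B j l := by
  simp [Matrix.mul_apply, Matrix.single_apply, ite_and, Finset.sum_ite_eq]

theorem orth_entry (hR : Irr R) (i j k l : Fin n) :
    ∑ g, R g k i * R g⁻¹ j l = if k = l ∧ i = j then (Fintype.card G : ℂ) / n else 0 := by
  have h := congrFun (congrFun (schur_orth hR (Matrix.single i j 1)) k) l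
  rw [Matrix.sum_apply] at h
  have h2 : ∀ g, (R g * Matrix.single i j (1 : ℂ) * R g⁻¹) k l = R g k i * R g⁻¹ j l := by
    intro g
    exact single_sandwich _ _ _ _ _ _
  simp only [h2] at h
  rw [h, Matrix.smul_apply, Matrix.one_apply]
  by_cases hkl : k = l <;> by_cases hij : i = j <;> simp [hkl, hij, Matrix.trace_single_eq_of_ne, Matrix.trace_single_eq_same]

theorem sum_char (hR : Irr R) : ∑ g, (R g).trace * (R g⁻¹).trace = Fintype.card G := by
  have : ∀ g, (R g).trace * (R g⁻¹).trace = ∑ k, ∑ j, R g k k * R g⁻¹ j j := by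
    intro g
    rw [Matrix.trace, Matrix.trace, Finset.sum_mul_sum]; rfl
  simp only [this]
  rw [Finset.sum_comm]
  have h2 : ∀ k : Fin n, ∑ g, ∑ j, R g k k * R g⁻¹ j j = (Fintype.card G : ℂ) / n := by
    intro k
    rw [Finset.sum_comm]
    simp only [orth_entry hR]
    simp
  simp only [h2]
  have hn : (n : ℂ) ≠ 0 := by exact_mod_cast hR.1.ne'
  simp
  field_simp

theorem irr_transfer (hR : Irr R) (R' : G →* Matrix (Fin n) (Fin n) ℂ)
    (h : ∀ g, (R' g).trace = (R g).trace) : Irr R' := by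
  have key : ∃ i j, (∑ g, R' g * Matrix.single i j 1 * R g⁻¹) ≠ 0 := by
    by_contra hcon
    push Not at hcon
    have h2 : ∑ g, (R' g).trace * (R g⁻¹).trace = 0 := by
      have : ∀ g, (R' g).trace * (R g⁻¹).trace =
          ∑ k, ∑ j, (R' g * Matrix.single k j (1 : ℂ) * R g⁻¹ : Matrix (Fin n) (Fin n) ℂ) k j := by
        intro g
        rw [Matrix.trace, Matrix.trace, Finset.sum_mul_sum]
        refine Finset.sum_congr rfl fun k _ => Finset.sum_congr rfl fun j _ => ?_
        exact (single_sandwich _ _ _ _ _ _).symm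
      simp only [this]
      rw [Finset.sum_comm]
      refine Finset.sum_eq_zero fun k _ => ?_
      rw [Finset.sum_comm]
      refine Finset.sum_eq_zero fun j _ => ?_
      rw [← Matrix.sum_apply, hcon]; rfl
    simp only [h] at h2
    rw [sum_char hR] at h2
    exact Fintype.card_ne_zero (by exact_mod_cast h2)
  obtain ⟨i, j, hij⟩ := key
  set A := (∑ g, R' g * Matrix.single i j 1 * R g⁻¹) with hA
  have hintw : ∀ g, R' g * A = A * R g := by
    intro h
    rw [hA, Finset.mul_sum, Finset.sum_mul]
    refine Fintype.sum_equiv (Equiv.mulLeft h) _ _ (fun g => ?_)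
    simp only [Equiv.coe_mulLeft, _root_.mul_inv_rev, map_mul, Matrix.mul_assoc]
    rw [R_inv_mul, Matrix.mul_one]
  have hu := (schur_unit hR (fun g => R' g) A hintw).resolve_left hij
  refine ⟨hR.1, fun W hW => ?_⟩
  have hAi : A * A⁻¹ = 1 := Matrix.mul_nonsing_inv _ hu
  rcases hR.2 (W.comap (Matrix.toLin' A)) (by
    intro g v hv
    rw [Submodule.mem_comap, Matrix.toLin'_apply] at hv ⊢
    rw [Matrix.mulVec_mulVec, ← hintw, ← Matrix.mulVec_mulVec]
    exact hW g _ hv) with h0 | h0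
  · left
    rw [Submodule.eq_bot_iff]
    intro x hx
    have : A⁻¹.mulVec x ∈ W.comap (Matrix.toLin' A) := by
      rw [Submodule.mem_comap, Matrix.toLin'_apply, Matrix.mulVec_mulVec, hAi, Matrix.one_mulVec]
      exact hx
    rw [h0, Submodule.mem_bot] at this
    have h3 := congrArg A.mulVec this
    rwa [Matrix.mulVec_mulVec, hAi, Matrix.one_mulVec, Matrix.mulVec_zero] at h3
  · right
    rw [Submodule.eq_top_iff']
    intro x
    have : A⁻¹.mulVec x ∈ W.comap (Matrix.toLin' A) := by rw [h0]; trivial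
    rwa [Submodule.mem_comap, Matrix.toLin'_apply, Matrix.mulVec_mulVec, hAi, Matrix.one_mulVec] at this

/-! invariant Hermitian forms -/
open ComplexOrder in
theorem exists_posdef (R : G →* Matrix (Fin n) (Fin n) ℂ) : ∃ P : Matrix (Fin n) (Fin n) ℂ, P.PosDef ∧ ∀ g, (R g)ᴴ * P * R g = P := by
  refine ⟨∑ g, (R g)ᴴ * R g, ?_, ?_⟩
  · classical
    rw [← Finset.add_sum_erase _ _ (Finset.mem_univ (1 : G))]
    apply Matrix.PosDef.add_posSemidef
    · simpa using Matrix.PosDef.one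
    · apply Matrix.posSemidef_sum
      intro g _
      exact Matrix.posSemidef_conjTranspose_mul_self _
  · intro h
    rw [Finset.mul_sum, Finset.sum_mul]
    refine Fintype.sum_equiv (Equiv.mulRight h) _ _ (fun g => ?_)
    simp only [Equiv.coe_mulRight, map_mul, Matrix.conjTranspose_mul, Matrix.mul_assoc]

open ComplexOrder in
theorem trace_conj (R : G →* Matrix (Fin n) (Fin n) ℂ) (g : G) :
    (starRingEnd ℂ) (R g).trace = (R g⁻¹).trace := by
  obtain ⟨P, hP, hinv⟩ := exists_posdef R
  have hu : IsUnit P.det := hP.isUnit.map Matrix.detMonoidHom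
  have h1 : (R g)ᴴ = P * R g⁻¹ * P⁻¹ := by
    have := hinv g
    calc (R g)ᴴ = (R g)ᴴ * P * (R g * R g⁻¹) * P⁻¹ := by
          rw [R_mul_inv, Matrix.mul_one, Matrix.mul_assoc, Matrix.mul_nonsing_inv _ hu, Matrix.mul_one]
      _ = ((R g)ᴴ * P * R g) * R g⁻¹ * P⁻¹ := by simp only [Matrix.mul_assoc]
      _ = _ := by rw [this]
  have h2 := congrArg Matrix.trace h1
  rw [Matrix.trace_conjTranspose, Matrix.trace_mul_comm, ← Matrix.mul_assoc,
    Matrix.nonsing_inv_mul _ hu, Matrix.one_mul] at h2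
  exact h2

open ComplexOrder in
theorem det_pos_of_inv (hR : Irr R) (H : Matrix (Fin n) (Fin n) ℂ) (hu : IsUnit H.det)
    (hH : Hᴴ = H) (hinv : ∀ g, (R g)ᴴ * H * R g = H) (hn : Even n) :
    ∃ r : ℝ, 0 < r ∧ H.det = (r : ℂ) := by
  obtain ⟨P, hP, hPinv⟩ := exists_posdef R
  have hPu : IsUnit P.det := hP.isUnit.map Matrix.detMonoidHom
  have hcomm : ∀ Q : Matrix (Fin n) (Fin n) ℂ, (∀ g, (R g)ᴴ * Q * R g = Q) →
      ∀ g, (R g)ᴴ * Q = Q * R g⁻¹ := by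
    intro Q hQ g
    conv_rhs => rw [← hQ g]
    rw [Matrix.mul_assoc _ (R g), R_mul_inv, Matrix.mul_one]
  obtain ⟨c, hc⟩ := schur_scalar hR (P⁻¹ * H) (by
    intro g
    have h1 := hcomm P hPinv g⁻¹
    have h2 := hcomm H hinv g⁻¹
    rw [inv_inv] at h1 h2
    rw [Matrix.mul_assoc, ← h2]
    have h3 : R g = P⁻¹ * ((R g⁻¹)ᴴ * P) := by
      rw [h1, ← Matrix.mul_assoc, Matrix.nonsing_inv_mul _ hPu, Matrix.one_mul]
    conv_lhs => rw [h3]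
    simp only [Matrix.mul_assoc]
    rw [← Matrix.mul_assoc P, Matrix.mul_nonsing_inv _ hPu, Matrix.one_mul])
  have hHP : H = c • P := by
    have : P * (P⁻¹ * H) = P * (c • 1) := by rw [hc]
    rwa [← Matrix.mul_assoc, Matrix.mul_nonsing_inv _ hPu, Matrix.one_mul, Matrix.mul_smul, Matrix.mul_one] at this
  have hdet : H.det = c ^ n * P.det := by rw [hHP, Matrix.det_smul, Fintype.card_fin]
  have hcr : (starRingEnd ℂ) c = c := by
    have h1 := hH
    rw [hHP, Matrix.conjTranspose_smul, hP.1.eq] at h1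
    have h2 := congrArg (· * P⁻¹) h1
    simp only [Matrix.smul_mul, Matrix.mul_nonsing_inv _ hPu] at h2
    have h3 := congrFun (congrFun h2 ⟨0, hR.1⟩) ⟨0, hR.1⟩
    simpa using h3
  obtain ⟨x, rfl⟩ := Complex.conj_eq_iff_real.1 hcr
  have hp := hP.det_pos
  rw [Complex.lt_def] at hp
  have hP' : P.det = ((P.det).re : ℂ) := Complex.ext rfl (by simpa using hp.2.symm)
  have hx : x ≠ 0 := by
    rintro rfl
    rw [hdet] at hu
    simp [hR.1.ne'] at hu
  refine ⟨x ^ n * P.det.re, mul_pos (hn.pow_pos hx) (by simpa using hp.1), ?_⟩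
  rw [hdet, hP']; push_cast; simp

theorem det_norm_one (R : G →* Matrix (Fin n) (Fin n) ℂ) (g : G) : ‖(R g).det‖ = 1 := by
  have h : (R g).det ^ Fintype.card G = 1 := by
    rw [← Matrix.det_pow, ← map_pow, pow_card_eq_one, map_one, Matrix.det_one]
  exact Complex.norm_eq_one_of_pow_eq_one h Fintype.card_ne_zero

end
end Paper

namespace Paper

/-! ### Forms twisted by an anti-involution -/
section
variable {G : Type} [Group G] {n : ℕ} {R : G →* Matrix (Fin n) (Fin n) ℂ}

theorem star_unit (hR : Irr R) (st : G → G) (h2 : ∀ g, st (st g) = g)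
    (B : Matrix (Fin n) (Fin n) ℂ) (hB : ∀ g, (R g)ᵀ * B = B * R (st g)) : B = 0 ∨ IsUnit B.det := by
  apply ker_zero_or_unit hR
  intro g v hv
  rw [← h2 g, Matrix.mulVec_mulVec, ← hB, ← Matrix.mulVec_mulVec, hv, Matrix.mulVec_zero]

theorem star_prop (hR : Irr R) (st : G → G) (h2 : ∀ g, st (st g) = g)
    (B B' : Matrix (Fin n) (Fin n) ℂ) (hB : ∀ g, (R g)ᵀ * B = B * R (st g)) (h0 : B ≠ 0)
    (hB' : ∀ g, (R g)ᵀ * B' = B' * R (st g)) : ∃ c : ℂ, B' = c • B := by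
  have hu := (star_unit hR st h2 B hB).resolve_left h0
  obtain ⟨c, hc⟩ := schur_scalar hR (B⁻¹ * B') (by
    intro g
    have h3 : R g = B⁻¹ * ((R (st g))ᵀ * B) := by
      rw [hB, h2, ← Matrix.mul_assoc, Matrix.nonsing_inv_mul _ hu, Matrix.one_mul]
    have h4 := hB' (st g)
    rw [h2] at h4
    conv_lhs => rw [h3]
    simp only [Matrix.mul_assoc]
    rw [← Matrix.mul_assoc B, Matrix.mul_nonsing_inv _ hu, Matrix.one_mul, h4])
  refine ⟨c, ?_⟩
  have : B * (B⁻¹ * B') = B * (c • 1) := by rw [hc]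
  rwa [← Matrix.mul_assoc, Matrix.mul_nonsing_inv _ hu, Matrix.one_mul, Matrix.mul_smul, Matrix.mul_one] at this

theorem star_sol_symm (hR : Irr R) (st : G → G) (h2 : ∀ g, st (st g) = g)
    (B B' : Matrix (Fin n) (Fin n) ℂ) (hB : ∀ g, (R g)ᵀ * B = B * R (st g)) (h0 : B ≠ 0)
    (hs : Bᵀ = B) (hB' : ∀ g, (R g)ᵀ * B' = B' * R (st g)) : B'ᵀ = B' := by
  obtain ⟨c, rfl⟩ := star_prop hR st h2 B B' hB h0 hB'
  rw [Matrix.transpose_smul, hs]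

variable [Fintype G]

def avg (R : G →* Matrix (Fin n) (Fin n) ℂ) (st : G → G) (E : Matrix (Fin n) (Fin n) ℂ) :
    Matrix (Fin n) (Fin n) ℂ := ∑ g, (R g⁻¹)ᵀ * E * R (st g)

theorem avg_sol (st : G → G) (h1 : ∀ g h, st (g * h) = st h * st g)
    (E : Matrix (Fin n) (Fin n) ℂ) (g : G) : (R g)ᵀ * avg R st E = avg R st E * R (st g) := by
  rw [avg, Finset.mul_sum, Finset.sum_mul]
  symm
  refine Fintype.sum_equiv (Equiv.mulLeft g) _ _ (fun k => ?_)
  have : (R g)ᵀ * (R (g * k)⁻¹)ᵀ = (R k⁻¹)ᵀ := by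
    rw [← Matrix.transpose_mul, ← map_mul]; congr 2; group
  simp only [Equiv.coe_mulLeft]
  rw [← Matrix.mul_assoc, ← Matrix.mul_assoc, this, h1, map_mul]
  simp only [Matrix.mul_assoc]

/-- a nonzero symmetric solution with entries in `L` -/
theorem exists_L_form (hR : Irr R) (L : Subfield ℂ) (hL : ∀ g i j, R g i j ∈ L) (st : G → G)
    (h1 : ∀ g h, st (g * h) = st h * st g) (h2 : ∀ g, st (st g) = g)
    (B : Matrix (Fin n) (Fin n) ℂ) (hB : ∀ g, (R g)ᵀ * B = B * R (st g)) (h0 : B ≠ 0)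
    (hs : Bᵀ = B) : ∃ B' : Matrix (Fin n) (Fin n) ℂ, (∀ g, (R g)ᵀ * B' = B' * R (st g)) ∧
      IsUnit B'.det ∧ B'ᵀ = B' ∧ ∀ i j, B' i j ∈ L := by
  have key : ∃ i j, avg R st (Matrix.single i j 1) ≠ 0 := by
    by_contra hcon
    push Not at hcon
    have h3 : avg R st B = (Fintype.card G : ℂ) • B := by
      have : ∀ g, (R g⁻¹)ᵀ * B * R (st g) = B := by
        intro g
        rw [Matrix.mul_assoc, ← hB, ← Matrix.mul_assoc, ← Matrix.transpose_mul, R_mul_inv,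
          Matrix.transpose_one, Matrix.one_mul]
      rw [avg]; simp only [this, Finset.sum_const, Finset.card_univ]
      rw [Nat.cast_smul_eq_nsmul]
    have h4 : avg R st B = ∑ i, ∑ j, B i j • avg R st (Matrix.single i j 1) := by
      conv_lhs => rw [Matrix.matrix_eq_sum_single B]
      simp only [avg, Finset.mul_sum, Finset.sum_mul, Finset.smul_sum]
      rw [Finset.sum_comm]
      refine Finset.sum_congr rfl fun i _ => ?_
      rw [Finset.sum_comm]
      refine Finset.sum_congr rfl fun j _ => ?_
      refine Finset.sum_congr rfl fun g _ => ?_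
      rw [← Matrix.smul_mul, ← Matrix.mul_smul, Matrix.smul_single, smul_eq_mul, mul_one]
    simp only [hcon, smul_zero, Finset.sum_const_zero] at h4
    rw [h3] at h4
    exact h0 ((smul_eq_zero.1 h4).resolve_left (by exact_mod_cast Fintype.card_ne_zero))
  obtain ⟨i, j, hij⟩ := key
  have hsol := avg_sol (R := R) st h1 (Matrix.single i j 1)
  refine ⟨_, hsol, (star_unit hR st h2 _ hsol).resolve_left hij,
    star_sol_symm hR st h2 B _ hB h0 hs hsol, ?_⟩
  intro a b
  rw [avg, Matrix.sum_apply]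
  refine sum_mem fun g _ => ?_
  rw [single_sandwich]
  exact mul_mem (hL _ _ _) (hL _ _ _)

theorem orth_bil (hR : Irr R) (l l' v y : Fin n → ℂ) :
    ∑ g, (l' ⬝ᵥ (R g).mulVec y) * (l ⬝ᵥ (R g⁻¹).mulVec v) =
      (Fintype.card G : ℂ) / n * ((l ⬝ᵥ y) * (l' ⬝ᵥ v)) := by
  have h := congrArg (fun M => l' ⬝ᵥ M.mulVec v) (schur_orth hR (Matrix.vecMulVec y l))
  simp only [Matrix.sum_mulVec, dotProduct_sum] at h
  have h2 : ∀ g, l' ⬝ᵥ (R g * Matrix.vecMulVec y l * R g⁻¹).mulVec v =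
      (l' ⬝ᵥ (R g).mulVec y) * (l ⬝ᵥ (R g⁻¹).mulVec v) := by
    intro g
    rw [← Matrix.mulVec_mulVec, ← Matrix.mulVec_mulVec, Matrix.vecMulVec_mulVec]
    simp [Matrix.mulVec_smul, mul_comm]
  simp only [h2] at h
  rw [h, Matrix.smul_mulVec, Matrix.one_mulVec, dotProduct_smul, Matrix.trace_vecMulVec,
    dotProduct_comm y l, smul_eq_mul]
  ring

theorem avg_bil (st : G → G) (l l' v y : Fin n → ℂ) :
    v ⬝ᵥ (avg R st (Matrix.vecMulVec l l')).mulVec y =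
      ∑ g, (l ⬝ᵥ (R g⁻¹).mulVec v) * (l' ⬝ᵥ (R (st g)).mulVec y) := by
  rw [avg, Matrix.sum_mulVec, dotProduct_sum]
  refine Finset.sum_congr rfl fun g _ => ?_
  rw [← Matrix.mulVec_mulVec, ← Matrix.mulVec_mulVec, Matrix.vecMulVec_mulVec]
  rw [Matrix.mulVec_transpose]
  simp [Matrix.smul_vecMul, dotProduct_comm v, mul_comm, Matrix.dotProduct_mulVec]

/-- Gelfand pair criterion: multiplicity one and existence of a symmetric form. -/
theorem gelfand (hR : Irr R) (st : G → G) (h1 : ∀ g h, st (g * h) = st h * st g)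
    (h2 : ∀ g, st (st g) = g) (e : Matrix (Fin n) (Fin n) ℂ) (he : e * e = e)
    (hg : ∀ g, e * R (st g) * e = e * R g * e) (h0 : e ≠ 0) :
    e.trace = 1 ∧ ∃ B : Matrix (Fin n) (Fin n) ℂ, (∀ g, (R g)ᵀ * B = B * R (st g)) ∧ B ≠ 0 ∧ Bᵀ = B := by
  obtain ⟨i, j, hij⟩ : ∃ i j, e i j ≠ 0 := by
    by_contra hcon
    push Not at hcon
    exact h0 (by ext i j; exact hcon i j)
  have st1 : st 1 = 1 := by
    have := h1 1 1
    rw [mul_one] at this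
    exact (mul_eq_left.1 this.symm)
  have stinv : ∀ g, st g⁻¹ = (st g)⁻¹ := by
    intro g
    rw [eq_inv_iff_mul_eq_one, ← h1, mul_inv_cancel, st1]
  let ste : G ≃ G := ⟨st, st, h2, h2⟩
  have hdot : ∀ a b, (e a) ⬝ᵥ (fun x => e x b) = e a b := by
    intro a b
    conv_rhs => rw [← he]
    rfl
  have hJ : ∀ g b, (e i) ⬝ᵥ (R (st g)).mulVec (fun x => e x b) = (e i) ⬝ᵥ (R g).mulVec (fun x => e x b) := by
    intro g b
    have h := congrFun (congrFun (hg g) i) b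
    have h3 : ∀ M : Matrix (Fin n) (Fin n) ℂ, (e * M * e) i b = (e i) ⬝ᵥ M.mulVec (fun x => e x b) := by
      intro M
      rw [Matrix.mul_assoc]; rfl
    rw [h3, h3] at h
    exact h
  have hform : ∀ (l' : Fin n → ℂ) b y, (fun x => e x b) ⬝ᵥ (avg R st (Matrix.vecMulVec (e i) l')).mulVec y =
      (Fintype.card G : ℂ) / n * ((e i ⬝ᵥ y) * (l' ⬝ᵥ (fun x => e x b))) := by
    intro l' b y
    rw [avg_bil, ← orth_bil hR]
    refine Fintype.sum_equiv ste _ _ (fun g => ?_)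
    show _ = (l' ⬝ᵥ R (st g) *ᵥ y) * (e i ⬝ᵥ R (st g)⁻¹ *ᵥ fun x => e x b)
    rw [← stinv, hJ, mul_comm]
  have hc : (Fintype.card G : ℂ) / n ≠ 0 := by
    apply div_ne_zero
    · exact_mod_cast Fintype.card_ne_zero
    · exact_mod_cast hR.1.ne'
  set B := avg R st (Matrix.vecMulVec (e i) (e i)) with hB
  have hBsol := avg_sol (R := R) st h1 (Matrix.vecMulVec (e i) (e i))
  rw [← hB] at hBsol
  have hB0 : B ≠ 0 := by
    intro hB0
    have := hform (e i) j (fun x => e x j)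
    rw [← hB, hB0, Matrix.zero_mulVec, dotProduct_zero, hdot] at this
    simp [hc, hij] at this
  have hBs : Bᵀ = B := by
    rw [hB, avg, Matrix.transpose_sum]
    refine Fintype.sum_equiv (ste.trans (Equiv.inv G)) _ _ (fun g => ?_)
    show _ = (R ((st g)⁻¹)⁻¹)ᵀ * Matrix.vecMulVec (e i) (e i) * R (st (st g)⁻¹)
    rw [inv_inv, stinv, h2, Matrix.transpose_mul, Matrix.transpose_mul, Matrix.transpose_transpose,
      Matrix.transpose_vecMulVec, Matrix.mul_assoc]
  refine ⟨?_, B, hBsol, hB0, hBs⟩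
  have hrow : ∀ k, ∃ c : ℂ, ∀ b, e k b = c * e i b := by
    intro k
    obtain ⟨c, hck⟩ := star_prop hR st h2 B _ hBsol hB0 (avg_sol (R := R) st h1 (Matrix.vecMulVec (e i) (e k)))
    refine ⟨c, fun b => ?_⟩
    have h3 := hform (e k) b (fun x => e x j)
    rw [hck, Matrix.smul_mulVec, dotProduct_smul, hB, hform, hdot, hdot, hdot, smul_eq_mul] at h3
    have h4 : (Fintype.card G : ℂ) / n * e i j * (e k b - c * e i b) = 0 := by linear_combination -h3
    simpa [hc, hij, sub_eq_zero] using h4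
  choose c hcc using hrow
  have h5 : e i j = (∑ k, e i k * c k) * e i j := by
    rw [Finset.sum_mul]
    conv_lhs => rw [← hdot, dotProduct]
    refine Finset.sum_congr rfl fun k _ => ?_
    rw [hcc k j]; ring
  have h6 : (∑ k, e i k * c k) = 1 := by
    have : ((∑ k, e i k * c k) - 1) * e i j = 0 := by linear_combination -h5
    rcases mul_eq_zero.1 this with h | h
    · exact sub_eq_zero.1 h
    · exact absurd h hij
  rw [Matrix.trace, ← h6]
  refine Finset.sum_congr rfl fun k _ => ?_
  rw [Matrix.diag_apply, hcc k k]; ring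

/-- central characters are integral -/
theorem class_sum_int (hR : Irr R) (C : Finset G) (g0 : G) (hC : ∀ g, g ∈ C ↔ IsConj g0 g)
    (m : ℤ) (hm : (R g0).trace = (m : ℂ)) : ∃ w : ℤ, (C.card : ℤ) * m = n * w := by
  obtain ⟨c, hc⟩ := schur_scalar hR (∑ g ∈ C, R g) (by
    intro h
    rw [Finset.mul_sum, Finset.sum_mul]
    refine Finset.sum_equiv (MulAut.conj h).toEquiv ?_ ?_
    · intro g
      rw [hC, hC]
      have : IsConj g ((MulAut.conj h).toEquiv g) := isConj_iff.2 ⟨h, rfl⟩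
      exact ⟨fun h' => h'.trans this, fun h' => h'.trans this.symm⟩
    · intro g _
      show _ = R (h * g * h⁻¹) * R h
      rw [← map_mul, ← map_mul]; congr 1; group)
  have hintw : IsIntegral ℤ c := by
    refine isIntegral_of_smul_mem_submodule (M := Matrix (Fin n) (Fin n) ℂ)
      (Submodule.span ℤ (Set.range R)) ?_ (Submodule.fg_span (Set.finite_range _)) c ?_
    · intro h
      have h1 : R 1 ∈ Submodule.span ℤ (Set.range R) := Submodule.subset_span ⟨1, rfl⟩
      rw [h, Submodule.mem_bot, map_one] at h1
      have := congrFun (congrFun h1 ⟨0, hR.1⟩) ⟨0, hR.1⟩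
      simp at this
    · intro x hx
      have : c • x = (∑ g ∈ C, R g) * x := by rw [hc, Matrix.smul_mul, Matrix.one_mul]
      rw [this, Finset.sum_mul]
      refine sum_mem fun g _ => ?_
      induction hx using Submodule.span_induction with
      | mem x h =>
        obtain ⟨k, rfl⟩ := h
        rw [← map_mul]; exact Submodule.subset_span ⟨_, rfl⟩
      | zero => rw [Matrix.mul_zero]; exact zero_mem _
      | add x y _ _ hx hy => rw [Matrix.mul_add]; exact add_mem (hx (by
          rw [hc, Matrix.smul_mul, Matrix.one_mul])) (hy (by rw [hc, Matrix.smul_mul, Matrix.one_mul]))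
      | smul a x _ hx => rw [Matrix.mul_smul]; exact Submodule.smul_mem _ _ (hx (by
          rw [hc, Matrix.smul_mul, Matrix.one_mul]))
  have ht := congrArg Matrix.trace hc
  have hcl : ∀ g ∈ C, (R g).trace = (m : ℂ) := by
    intro g hg
    obtain ⟨k, rfl⟩ := isConj_iff.1 ((hC g).1 hg)
    rw [trace_R_mul_comm, ← mul_assoc, inv_mul_cancel, one_mul, hm]
  rw [Matrix.trace_sum, Finset.sum_congr rfl hcl, Matrix.trace_smul, Matrix.trace_one] at ht
  simp only [Finset.sum_const, nsmul_eq_mul, smul_eq_mul, Fintype.card_fin] at ht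
  have hn : (n : ℂ) ≠ 0 := by exact_mod_cast hR.1.ne'
  have hcq : c = algebraMap ℚ ℂ ((C.card * m : ℚ) / n) := by
    simp only [eq_ratCast]
    push_cast
    rw [ht]; field_simp
  rw [hcq] at hintw
  have hint2 : IsIntegral ℤ ((C.card * m : ℚ) / n) :=
    (isIntegral_algebraMap_iff (algebraMap ℚ ℂ).injective).1 hintw
  obtain ⟨w, hw⟩ := IsIntegrallyClosed.isIntegral_iff.1 hint2
  refine ⟨w, ?_⟩
  have hnq : (n : ℚ) ≠ 0 := by exact_mod_cast hR.1.ne'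
  have h7 : (w : ℚ) = (C.card * m : ℚ) / n := hw
  have : ((C.card : ℤ) * m : ℚ) = n * w := by
    rw [h7]; push_cast; field_simp
  exact_mod_cast this

end
end Paper

namespace Paper
section
variable {G : Type} [Group G] {n : ℕ} {R : G →* Matrix (Fin n) (Fin n) ℂ}

theorem herm_prop (hR : Irr R) (P H : Matrix (Fin n) (Fin n) ℂ) (hPu : IsUnit P.det)
    (hPinv : ∀ g, (R g)ᴴ * P * R g = P) (hinv : ∀ g, (R g)ᴴ * H * R g = H) :
    ∃ c : ℂ, H = c • P := by
  have hcomm : ∀ Q : Matrix (Fin n) (Fin n) ℂ, (∀ g, (R g)ᴴ * Q * R g = Q) →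
      ∀ g, (R g)ᴴ * Q = Q * R g⁻¹ := by
    intro Q hQ g
    conv_rhs => rw [← hQ g]
    rw [Matrix.mul_assoc _ (R g), R_mul_inv, Matrix.mul_one]
  obtain ⟨c, hc⟩ := schur_scalar hR (P⁻¹ * H) (by
    intro g
    have h1 := hcomm P hPinv g⁻¹
    have h2 := hcomm H hinv g⁻¹
    rw [inv_inv] at h1 h2
    rw [Matrix.mul_assoc, ← h2]
    have h3 : R g = P⁻¹ * ((R g⁻¹)ᴴ * P) := by
      rw [h1, ← Matrix.mul_assoc, Matrix.nonsing_inv_mul _ hPu, Matrix.one_mul]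
    conv_lhs => rw [h3]
    simp only [Matrix.mul_assoc]
    rw [← Matrix.mul_assoc P, Matrix.mul_nonsing_inv _ hPu, Matrix.one_mul])
  refine ⟨c, ?_⟩
  have : P * (P⁻¹ * H) = P * (c • 1) := by rw [hc]
  rwa [← Matrix.mul_assoc, Matrix.mul_nonsing_inv _ hPu, Matrix.one_mul, Matrix.mul_smul, Matrix.mul_one] at this

variable [Fintype G]

theorem det_H_B (hR : Irr R) (L : Subfield ℂ) (hLc : ∀ x ∈ L, (starRingEnd ℂ) x ∈ L)
    (m : ℕ) (hnm : n = 4 * m)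
    (H : Matrix (Fin n) (Fin n) ℂ) (hHL : ∀ i j, H i j ∈ L) (hu : IsUnit H.det)
    (hH : Hᴴ = H) (hinv : ∀ g, (R g)ᴴ * H * R g = H)
    (st : G → G) (h2 : ∀ g, st (st g) = g)
    (B : Matrix (Fin n) (Fin n) ℂ) (hBL : ∀ i j, B i j ∈ L) (hBu : IsUnit B.det) (hBs : Bᵀ = B)
    (hB : ∀ g, (R g)ᵀ * B = B * R (st g)) :
    ∃ c ∈ L, c ≠ 0 ∧ (starRingEnd ℂ) c = c ∧ H.det * c ^ (2 * m) = (‖B.det‖ : ℂ) := by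
  have hTu : IsUnit Hᵀ.det := by rwa [Matrix.det_transpose]
  set M := Bᴴ * (Hᵀ)⁻¹ * B with hM
  have hMinv : ∀ g, (R g)ᴴ * M * R g = M := by
    intro g
    have e1 : B * R g = (R (st g))ᵀ * B := by rw [hB, h2]
    have e2 : (R g)ᴴ * Bᴴ = Bᴴ * ((R (st g))ᵀ)ᴴ := by
      rw [← Matrix.conjTranspose_mul, e1, Matrix.conjTranspose_mul]
    have e3 : ((R (st g))ᵀ)ᴴ * (Hᵀ)⁻¹ * (R (st g))ᵀ = (Hᵀ)⁻¹ := by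
      have h4 := congrArg Matrix.transpose (hinv (st g))
      rw [Matrix.transpose_mul, Matrix.transpose_mul, ← Matrix.mul_assoc] at h4
      have hc : ((R (st g))ᴴ)ᵀ = ((R (st g))ᵀ)ᴴ := rfl
      rw [hc] at h4
      set S := (R (st g))ᵀ with hS
      have hSu : IsUnit S.det := by
        rw [hS, Matrix.det_transpose, isUnit_iff_ne_zero]
        intro h
        have := det_norm_one R (st g)
        rw [h] at this; simp at this
      have hSu' : IsUnit Sᴴ.det := by
        rw [Matrix.det_conjTranspose]; exact hSu.star
      conv_lhs => rw [← h4]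
      rw [Matrix.mul_inv_rev, Matrix.mul_inv_rev, Matrix.mul_assoc, Matrix.mul_assoc, Matrix.mul_assoc,
        Matrix.nonsing_inv_mul _ hSu, Matrix.mul_one, ← Matrix.mul_assoc,
        Matrix.mul_nonsing_inv _ hSu', Matrix.one_mul]
    calc (R g)ᴴ * M * R g = ((R g)ᴴ * Bᴴ) * (Hᵀ)⁻¹ * (B * R g) := by
          rw [hM]; simp only [Matrix.mul_assoc]
      _ = Bᴴ * (((R (st g))ᵀ)ᴴ * (Hᵀ)⁻¹ * (R (st g))ᵀ) * B := by
          rw [e1, e2]; simp only [Matrix.mul_assoc]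
      _ = M := by rw [e3]
  obtain ⟨c, hc⟩ := herm_prop hR H M hu hinv hMinv
  have hMh : Mᴴ = M := by
    rw [hM, Matrix.conjTranspose_mul, Matrix.conjTranspose_mul, Matrix.conjTranspose_conjTranspose,
      Matrix.conjTranspose_nonsing_inv, Matrix.mul_assoc]
    congr 3
    show (Hᴴ)ᵀ = Hᵀ
    rw [hH]
  obtain ⟨i, j, hij⟩ : ∃ i j, H i j ≠ 0 := by
    by_contra hcon
    push Not at hcon
    have : Nonempty (Fin n) := ⟨⟨0, hR.1⟩⟩
    have h0 : H = 0 := by ext i j; exact hcon i j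
    rw [h0, Matrix.det_zero] at hu
    simp at hu
  have hcr : (starRingEnd ℂ) c = c := by
    have h1 := hMh
    rw [hc, Matrix.conjTranspose_smul, hH] at h1
    have h3 := congrFun (congrFun h1 i) j
    simp only [Matrix.smul_apply, smul_eq_mul] at h3
    exact mul_right_cancel₀ hij h3
  have hcL : c ∈ L := by
    have h3 := congrFun (congrFun hc i) j
    simp only [Matrix.smul_apply, smul_eq_mul] at h3
    have h4 : c = M i j / H i j := by rw [h3]; field_simp
    rw [h4]
    refine div_mem ?_ (hHL i j)
    rw [hM]
    refine mul_mem_L L (mul_mem_L L ?_ ?_) hBL i j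
    · intro a b; exact hLc _ (hBL b a)
    · exact inv_mem_L L _ (fun a b => hHL b a) hTu
  obtain ⟨r, hr, hrd⟩ := det_pos_of_inv hR H hu hH hinv ⟨2 * m, by omega⟩
  have hd := congrArg Matrix.det hc
  rw [hM, Matrix.det_mul, Matrix.det_mul, Matrix.det_smul, Matrix.det_conjTranspose,
    Matrix.det_nonsing_inv, Matrix.det_transpose, Ring.inverse_eq_inv', Fintype.card_fin] at hd
  obtain ⟨x, rfl⟩ := Complex.conj_eq_iff_real.1 hcr
  have hd2 : ‖B.det‖ ^ 2 = (r * x ^ (2 * m)) ^ 2 := by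
    have h5 : (‖B.det‖ : ℂ) ^ 2 = ((r * x ^ (2 * m)) ^ 2 : ℝ) := by
      rw [← Complex.conj_mul']
      have hrc : (r : ℂ) ≠ 0 := by exact_mod_cast hr.ne'
      rw [hrd] at hd
      have h6 : (starRingEnd ℂ) B.det * B.det = ((x : ℂ) ^ n * r) * r := by
        rw [← hd]; field_simp; rw [mul_comm]; rfl
      rw [h6, hnm]; push_cast; ring
    exact_mod_cast h5
  have hx0 : x ≠ 0 := by
    rintro rfl
    have hm : 2 * m ≠ 0 := by have := hR.1; omega
    rw [zero_pow hm, mul_zero] at hd2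
    have : B.det = 0 := by simpa using hd2
    rw [this] at hBu; simp at hBu
  refine ⟨x, hcL, by exact_mod_cast hx0, hcr, ?_⟩
  have h7 : ‖B.det‖ = r * x ^ (2 * m) := by
    have hpos : 0 ≤ r * x ^ (2 * m) := by
      rw [pow_mul]; positivity
    exact (pow_left_inj₀ (norm_nonneg _) hpos two_ne_zero).1 hd2
  rw [hrd, h7]; push_cast; ring
end
end Paper

namespace Paper

/-! ### Abstract configuration -/

/-- The group theoretic data of `SU₃(q)` used in the proof. -/
structure Cfg (F : Type) [Field F] [Fintype F] (G : Type) [Group G] where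
  q : ℕ
  q_odd : Odd q
  q_ge : 3 ≤ q
  cardF : Fintype.card F = q ^ 2
  cj : F →+* F
  cj_eq : ∀ x, cj x = x ^ q
  two_ne : (2 : F) ≠ 0
  K : Subfield F
  memK : ∀ x, x ∈ K ↔ cj x = x
  eps : F
  eps_ne : eps ≠ 0
  cj_eps : cj eps = - eps
  u : F → K → G
  beta : F → F → K
  beta_eq : ∀ a a', (beta a a' : F) = (a' * cj a - a * cj a') / (2 * eps)
  u_mul : ∀ a r a' r', u a r * u a' r' = u (a + a') (r + r' + beta a a')
  T : Fˣ →* G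
  Nm : Fˣ → K
  Nm_eq : ∀ t, (Nm t : F) = t * cj t
  T_u : ∀ t a r, T t * u a r = u (t ^ 2 / cj t * a) (Nm t * r) * T t
  w : G
  bruhat : ∀ g, (∃ a r t, g = u a r * T t) ∨ ∃ a r t a' r', g = u a r * (w * T t) * u a' r'
  st : F → G → G
  st_mul : ∀ s, s * cj s = 1 → ∀ g h, st s (g * h) = st s h * st s g
  st_st : ∀ s, s * cj s = 1 → ∀ g, st s (st s g) = g
  st_u : ∀ s, s * cj s = 1 → ∀ a r, st s (u a r) = u (-s * cj a) r
  st_T : ∀ s, s * cj s = 1 → ∀ t, st s (T t) = T (Units.map cj.toMonoidHom t)⁻¹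
  st_w : ∀ s, s * cj s = 1 → ∀ t, st s (w * T t) = w * T t
  T_neg : T (-1) ≠ 1
  comm_T : ∀ c : Fˣ, (c : F) * cj c ≠ 1 → (c : F) ^ 2 ≠ cj c → ∀ g : G, g * g = 1 →
    T c * g = g * T c → g = 1 ∨ g = T (-1)

namespace Cfg
variable {F : Type} [Field F] [Fintype F] {G : Type} [Group G] (c : Cfg F G)

theorem cj_cj (x : F) : c.cj (c.cj x) = x := by
  rw [c.cj_eq, c.cj_eq, ← pow_mul, ← pow_two, ← c.cardF, FiniteField.pow_card]

theorem cj_ne {x : F} (h : x ≠ 0) : c.cj x ≠ 0 := by simpa using h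

theorem cj_K (r : c.K) : c.cj r = r := (c.memK r).1 r.2

noncomputable instance : Fintype c.K := Fintype.ofFinite _

def rePart (x : F) : c.K := ⟨(x + c.cj x) / 2, (c.memK _).2 (by
  rw [map_div₀, map_add, c.cj_cj, map_ofNat, add_comm])⟩

def imPart (x : F) : c.K := ⟨(x - c.cj x) / (2 * c.eps), (c.memK _).2 (by
  rw [map_div₀, map_sub, c.cj_cj, map_mul, map_ofNat, c.cj_eps, mul_neg, div_neg, ← neg_div, neg_sub])⟩

def decomp : F ≃ c.K × c.K where
  toFun x := (c.rePart x, c.imPart x)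
  invFun y := y.1 + c.eps * y.2
  left_inv x := by
    have := c.two_ne
    have := c.eps_ne
    simp only [rePart, imPart]
    field_simp
    ring
  right_inv y := by
    have h2 := c.two_ne
    have he := c.eps_ne
    have h1 := c.cj_K y.1
    have h3 := c.cj_K y.2
    apply Prod.ext <;> apply Subtype.ext <;>
      simp only [rePart, imPart, map_add, map_mul, h1, h3, c.cj_eps] <;> field_simp <;> ring

theorem cardK : Fintype.card c.K = c.q := by
  have h := Fintype.card_congr c.decomp
  rw [Fintype.card_prod, c.cardF, ← pow_two] at h
  exact (Nat.pow_left_injective (n := 2) (by norm_num) h).symm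

theorem u_zero : c.u 0 0 = 1 := by
  have h := c.u_mul 0 0 0 0
  have hb : c.beta 0 0 = 0 := Subtype.ext (by rw [c.beta_eq]; simp)
  rw [hb] at h
  simpa using h

theorem exists_gen : ∃ g0 : Fˣ, (∀ x : Fˣ, ∃ j : ℕ, x = g0 ^ j) ∧ orderOf g0 = c.q ^ 2 - 1 := by
  classical
  obtain ⟨g, hg⟩ := IsCyclic.exists_generator (α := Fˣ)
  refine ⟨g, fun x => ?_, ?_⟩
  · obtain ⟨j, hj⟩ := (mem_powers_iff_mem_zpowers.2 (hg x))
    exact ⟨j, hj.symm⟩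
  · rw [orderOf_eq_card_of_forall_mem_zpowers hg, Nat.card_eq_fintype_card, Fintype.card_units, c.cardF]

theorem q_sq : c.q ^ 2 - 1 = (c.q + 1) * (c.q - 1) := by
  have := c.q_ge
  obtain ⟨m, hm⟩ : ∃ m, c.q = m + 1 := ⟨c.q - 1, by omega⟩
  rw [hm]
  simp only [Nat.add_sub_cancel]
  have : (m + 1) ^ 2 = (m + 1 + 1) * m + 1 := by ring
  omega

theorem Nm_gen_pow {g0 : Fˣ} (hg : ∀ x : Fˣ, ∃ j : ℕ, x = g0 ^ j) (ho : orderOf g0 = c.q ^ 2 - 1)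
    (r : Fˣ) (hr : c.cj r = r) : ∃ j : ℕ, r = (g0 ^ (c.q + 1)) ^ j := by
  obtain ⟨j, rfl⟩ := hg r
  have h := c.q_ge
  have h1 : g0 ^ (j * (c.q - 1)) = 1 := by
    have h2 : (g0 ^ j) ^ c.q = g0 ^ j := Units.ext (by
      rw [c.cj_eq] at hr; simpa using hr)
    rw [pow_mul]
    have h3 : c.q = (c.q - 1) + 1 := by omega
    rw [h3, pow_succ] at h2
    simpa using h2
  have h2 := orderOf_dvd_of_pow_eq_one h1
  rw [ho, c.q_sq] at h2
  obtain ⟨i, hi⟩ := Nat.dvd_of_mul_dvd_mul_right (by omega) h2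
  exact ⟨i, by rw [← pow_mul, hi]⟩

theorem Nm_surj (r : c.K) (hr : r ≠ 0) : ∃ t : Fˣ, c.Nm t = r := by
  obtain ⟨g0, hg, ho⟩ := c.exists_gen
  have hr' : (r : F) ≠ 0 := by simpa using hr
  obtain ⟨j, hj⟩ := c.Nm_gen_pow hg ho (Units.mk0 _ hr') (c.cj_K r)
  refine ⟨g0 ^ j, Subtype.ext ?_⟩
  rw [c.Nm_eq, c.cj_eq, ← pow_succ', ← Units.val_pow_eq_pow_val, ← pow_mul, mul_comm, pow_mul, ← hj]
  rfl

/-- the root of `T t` on the short part -/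
def lam (t : Fˣ) : F := (t : F) ^ 2 / c.cj t

theorem lam_ne (t : Fˣ) : c.lam t ≠ 0 := div_ne_zero (by simp) (c.cj_ne (by simp))

theorem T_conj (t : Fˣ) (a : F) (r : c.K) : c.T t * c.u a r * (c.T t)⁻¹ = c.u (c.lam t * a) (c.Nm t * r) := by
  rw [c.T_u, mul_inv_cancel_right]; rfl

theorem st_one (s : F) (hs : s * c.cj s = 1) : c.st s 1 = 1 := by
  have := c.st_mul s hs 1 1
  rw [mul_one] at this
  exact (mul_eq_left.1 this.symm)

/-- the diagonal elements over the small field -/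
def kU (r : c.Kˣ) : Fˣ := Units.map c.K.subtype.toMonoidHom r

theorem kU_val (r : c.Kˣ) : ((c.kU r : Fˣ) : F) = ((r : c.K) : F) := rfl

theorem cj_kU (r : c.Kˣ) : c.cj (c.kU r) = c.kU r := c.cj_K _

theorem lam_kU (r : c.Kˣ) : c.lam (c.kU r) = ((r : c.K) : F) := by
  rw [lam, cj_kU, kU_val]
  have : ((r : c.K) : F) ≠ 0 := by simp
  field_simp

theorem Nm_kU (r : c.Kˣ) : c.Nm (c.kU r) = (r : c.K) ^ 2 := by
  apply Subtype.ext
  rw [c.Nm_eq, cj_kU, kU_val]; push_cast; ring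

theorem beta_surj (a : F) (ha : a ≠ 0) (r : c.K) : ∃ a', 2 * c.beta a' a = r := by
  have h2 := c.two_ne
  have he := c.eps_ne
  have hc := c.cj_ne ha
  refine ⟨-(c.eps * r / (2 * c.cj a)) , Subtype.ext ?_⟩
  have h1 : ((2 : c.K) : F) = 2 := rfl
  push_cast
  rw [c.beta_eq, h1]
  simp only [map_neg, map_div₀, map_mul, map_ofNat, c.cj_cj, c.cj_eps, c.cj_K]
  field_simp
  ring

theorem beta_self_K (r r' : c.K) : c.beta r r' = 0 := Subtype.ext (by
  rw [c.beta_eq, c.cj_K, c.cj_K, mul_comm, sub_self, zero_div]; rfl)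

theorem beta_zero_left (a : F) : c.beta 0 a = 0 := Subtype.ext (by rw [c.beta_eq]; simp)
theorem beta_zero_right (a : F) : c.beta a 0 = 0 := Subtype.ext (by rw [c.beta_eq]; simp)
theorem beta_neg_self (a : F) : c.beta (-a) a = 0 := Subtype.ext (by
  rw [c.beta_eq]; simp [mul_comm])
theorem beta_self_neg (a : F) : c.beta a (-a) = 0 := Subtype.ext (by
  rw [c.beta_eq]; simp [mul_comm])

theorem u_inv (a : F) (r : c.K) : (c.u a r)⁻¹ = c.u (-a) (-r) := by
  rw [inv_eq_iff_mul_eq_one, c.u_mul, beta_self_neg]; simp [u_zero]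

theorem u_conj (a' a : F) : c.u a' 0 * c.u a 0 * (c.u a' 0)⁻¹ = c.u a (2 * c.beta a' a) := by
  rw [u_inv, c.u_mul, c.u_mul]
  congr 1
  · ring
  · apply Subtype.ext
    have h2 := c.two_ne
    have he := c.eps_ne
    have h1 : ((2 : c.K) : F) = 2 := rfl
    push_cast
    rw [c.beta_eq, c.beta_eq, h1]
    simp only [map_neg, map_add]
    field_simp
    ring

end Cfg
end Paper

namespace Paper

section averages
variable {n : ℕ}

/-- average of a projective-free multiplicative family against an additive character -/
def avA {A : Type} [AddCommGroup A] [Fintype A] (ψ : A → ℂ) (V : A → Matrix (Fin n) (Fin n) ℂ) :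
    Matrix (Fin n) (Fin n) ℂ := (Fintype.card A : ℂ)⁻¹ • ∑ a, ψ (-a) • V a

/-- average over a finite commutative group -/
def avM {A : Type} [CommGroup A] [Fintype A] (V : A → Matrix (Fin n) (Fin n) ℂ) :
    Matrix (Fin n) (Fin n) ℂ := (Fintype.card A : ℂ)⁻¹ • ∑ a, V a

section A
variable {A : Type} [AddCommGroup A] [Fintype A] (ψ : A → ℂ) (V : A → Matrix (Fin n) (Fin n) ℂ)

theorem avA_left (h0 : ψ 0 = 1) (h1 : ∀ a b, ψ (a + b) = ψ a * ψ b)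
    (hV : ∀ a b, V (a + b) = V a * V b) (b : A) : V b * avA ψ V = ψ b • avA ψ V := by
  unfold avA
  rw [Matrix.mul_smul, Finset.mul_sum, smul_comm]
  congr 1
  rw [Finset.smul_sum]
  refine Fintype.sum_equiv (Equiv.addLeft b) _ _ fun a => ?_
  simp only [Equiv.coe_addLeft]
  rw [Matrix.mul_smul, ← hV, smul_smul, ← h1]
  congr 2
  abel

theorem avA_right (h0 : ψ 0 = 1) (h1 : ∀ a b, ψ (a + b) = ψ a * ψ b)
    (hV : ∀ a b, V (a + b) = V a * V b) (b : A) : avA ψ V * V b = ψ b • avA ψ V := by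
  rw [← avA_left ψ V h0 h1 hV b]
  unfold avA
  rw [Matrix.mul_smul, Finset.mul_sum, Matrix.smul_mul, Finset.sum_mul]
  congr 1
  refine Finset.sum_congr rfl fun a _ => ?_
  rw [Matrix.smul_mul, Matrix.mul_smul, ← hV, ← hV, add_comm]

theorem avA_idem (h0 : ψ 0 = 1) (h1 : ∀ a b, ψ (a + b) = ψ a * ψ b)
    (hV : ∀ a b, V (a + b) = V a * V b) : avA ψ V * avA ψ V = avA ψ V := by
  conv_lhs => arg 1; unfold avA
  rw [Matrix.smul_mul, Finset.sum_mul]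
  have : ∀ a, ψ (-a) • V a * avA ψ V = avA ψ V := by
    intro a
    rw [Matrix.smul_mul, avA_left ψ V h0 h1 hV, smul_smul, ← h1]; simp [h0]
  simp only [this]
  rw [Finset.sum_const, Finset.card_univ, ← Nat.cast_smul_eq_nsmul ℂ, smul_smul,
    inv_mul_cancel₀ (by simp), one_smul]

theorem avA_comm (P : Matrix (Fin n) (Fin n) ℂ) (h : ∀ a, P * V a = V a * P) :
    P * avA ψ V = avA ψ V * P := by
  unfold avA
  simp only [Matrix.mul_smul, Matrix.smul_mul, Finset.mul_sum, Finset.sum_mul, h]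

theorem avA_orth (φ : A → ℂ) (h0 : ψ 0 = 1) (h1 : ∀ a b, ψ (a + b) = ψ a * ψ b)
    (k0 : φ 0 = 1) (k1 : ∀ a b, φ (a + b) = φ a * φ b)
    (hV : ∀ a b, V (a + b) = V a * V b) (a : A) (ha : ψ a ≠ φ a) : avA ψ V * avA φ V = 0 := by
  have h2 : ψ a • (avA ψ V * avA φ V) = φ a • (avA ψ V * avA φ V) := by
    rw [← Matrix.smul_mul, ← avA_right ψ V h0 h1 hV, Matrix.mul_assoc, avA_left φ V k0 k1 hV,
      Matrix.mul_smul]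
  by_contra h
  exact ha (smul_left_injective ℂ h h2)

end A

section M
variable {A : Type} [CommGroup A] [Fintype A] (V : A → Matrix (Fin n) (Fin n) ℂ)

theorem avM_left (hV : ∀ a b, V (a * b) = V a * V b) (b : A) : V b * avM V = avM V := by
  unfold avM
  rw [Matrix.mul_smul, Finset.mul_sum]
  congr 1
  refine Fintype.sum_equiv (Equiv.mulLeft b) _ _ fun a => ?_
  simp [hV]

theorem avM_comm (P : Matrix (Fin n) (Fin n) ℂ) (h : ∀ a, P * V a = V a * P) :
    P * avM V = avM V * P := by
  unfold avM
  simp only [Matrix.mul_smul, Matrix.smul_mul, Finset.mul_sum, Finset.sum_mul, h]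

theorem avM_idem (hV : ∀ a b, V (a * b) = V a * V b) : avM V * avM V = avM V := by
  conv_lhs => arg 1; unfold avM
  rw [Matrix.smul_mul, Finset.sum_mul]
  simp only [avM_left V hV]
  rw [Finset.sum_const, Finset.card_univ, ← Nat.cast_smul_eq_nsmul ℂ, smul_smul,
    inv_mul_cancel₀ (by simp), one_smul]

theorem avM_trace (hV1 : V 1 = 1) (e f : Matrix (Fin n) (Fin n) ℂ)
    (h : ∀ a, a ≠ 1 → (V a * e).trace = (V a * f).trace) :
    (Fintype.card A : ℂ) * ((avM V * e).trace - (avM V * f).trace) = e.trace - f.trace := by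
  classical
  rw [← Matrix.trace_sub, ← Matrix.mul_sub]
  unfold avM
  rw [Matrix.smul_mul, Matrix.trace_smul, smul_eq_mul, ← mul_assoc, mul_inv_cancel₀ (by simp), one_mul,
    Finset.sum_mul, Matrix.trace_sum, Finset.sum_eq_single 1]
  · rw [hV1, Matrix.one_mul, Matrix.trace_sub]
  · intro a _ ha
    rw [Matrix.mul_sub, Matrix.trace_sub, h a ha, sub_self]
  · simp

end M

theorem mul_idem {e f : Matrix (Fin n) (Fin n) ℂ} (he : e * e = e) (hf : f * f = f)
    (h : e * f = f * e) : (e * f) * (e * f) = e * f := by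
  rw [Matrix.mul_assoc, ← Matrix.mul_assoc f e f, ← h, Matrix.mul_assoc e f f, hf, ← Matrix.mul_assoc, he]

theorem one_sub_idem {e : Matrix (Fin n) (Fin n) ℂ} (he : e * e = e) : (1 - e) * (1 - e) = 1 - e := by
  rw [Matrix.mul_sub, Matrix.sub_mul, Matrix.sub_mul, he]; simp

theorem tr_zero {P e f : Matrix (Fin n) (Fin n) ℂ} (h : P * e = f * P) (he : e * e = e) (hef : e * f = 0) :
    (P * e).trace = 0 := by
  rw [← he, ← Matrix.mul_assoc, h, Matrix.trace_mul_comm, ← Matrix.mul_assoc, hef, Matrix.zero_mul,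
    Matrix.trace_zero]

end averages

end Paper

namespace Paper

section fieldav
variable {n : ℕ} {E : Type} [Field E] [Fintype E]

/-- isotypic projections for a family indexed by a field -/
def fe (ψ : AddChar E ℂ) (V : E → Matrix (Fin n) (Fin n) ℂ) (κ : E) : Matrix (Fin n) (Fin n) ℂ :=
  avA (fun a => ψ (κ * a)) V

set_option linter.unusedSectionVars false in
theorem fe_add (ψ : AddChar E ℂ) (κ a b : E) : ψ (κ * (a + b)) = ψ (κ * a) * ψ (κ * b) := by
  rw [mul_add, AddChar.map_add_eq_mul]

variable (ψ : AddChar E ℂ) (V : E → Matrix (Fin n) (Fin n) ℂ)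

theorem fe_left (hV : ∀ a b, V (a + b) = V a * V b) (κ a : E) :
    V a * fe ψ V κ = ψ (κ * a) • fe ψ V κ :=
  avA_left _ V (by simp) (fe_add ψ κ) hV a

theorem fe_right (hV : ∀ a b, V (a + b) = V a * V b) (κ a : E) :
    fe ψ V κ * V a = ψ (κ * a) • fe ψ V κ :=
  avA_right _ V (by simp) (fe_add ψ κ) hV a

theorem fe_idem (hV : ∀ a b, V (a + b) = V a * V b) (κ : E) :
    fe ψ V κ * fe ψ V κ = fe ψ V κ :=
  avA_idem _ V (by simp) (fe_add ψ κ) hV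

theorem fe_orth (hψ : ψ.IsPrimitive) (hV : ∀ a b, V (a + b) = V a * V b) (κ κ' : E) (h : κ ≠ κ') :
    fe ψ V κ * fe ψ V κ' = 0 := by
  have h1 := hψ (sub_ne_zero.2 h)
  obtain ⟨a, ha⟩ := AddChar.ne_one_iff.1 h1
  refine avA_orth _ V _ (by simp) (fe_add ψ κ) (by simp) (fe_add ψ κ') hV a ?_
  intro h2
  apply ha
  rw [AddChar.mulShift_apply, sub_mul, AddChar.map_sub_eq_div, h2, div_self]
  intro h0
  have h3 := AddChar.map_zero_eq_one ψ
  rw [← add_neg_cancel (κ' * a), AddChar.map_add_eq_mul, h0, zero_mul] at h3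
  exact zero_ne_one h3

theorem fe_sum (hψ : ψ.IsPrimitive) : ∑ κ, fe ψ V κ = V 0 := by
  classical
  unfold fe avA
  rw [← Finset.smul_sum, Finset.sum_comm]
  simp only [← Finset.sum_smul]
  have h : ∀ a : E, ∑ κ, ψ (κ * (-a)) = if a = 0 then (Fintype.card E : ℂ) else 0 := by
    intro a
    rw [AddChar.sum_mulShift (-a) hψ]
    simp
  simp only [h, ite_smul, zero_smul, Finset.sum_ite_eq', Finset.mem_univ, if_true]
  rw [smul_smul, inv_mul_cancel₀ (by simp), one_smul]

theorem fe_move (P : Matrix (Fin n) (Fin n) ℂ) (l : E) (hl : l ≠ 0) (h : ∀ a, P * V a = V (l * a) * P)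
    (κ : E) : P * fe ψ V κ = fe ψ V (κ / l) * P := by
  unfold fe avA
  simp only [Matrix.mul_smul, Matrix.smul_mul, Finset.mul_sum, Finset.sum_mul, h]
  congr 1
  refine Fintype.sum_equiv (Equiv.mulLeft₀ l hl) _ _ fun a => ?_
  simp only [Equiv.mulLeft₀_apply]
  congr 2
  field_simp

theorem fe_trace_zero (hψ : ψ.IsPrimitive) (hV : ∀ a b, V (a + b) = V a * V b)
    (P : Matrix (Fin n) (Fin n) ℂ) (l : E) (hl : l ≠ 0) (hl1 : l ≠ 1) (h : ∀ a, P * V a = V (l * a) * P) :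
    (P * (V 0 - fe ψ V 0)).trace = 0 := by
  classical
  have h1 : V 0 - fe ψ V 0 = ∑ κ ∈ Finset.univ.erase 0, fe ψ V κ := by
    rw [← fe_sum ψ V hψ, ← Finset.add_sum_erase _ _ (Finset.mem_univ 0)]; simp
  rw [h1, Finset.mul_sum, Matrix.trace_sum]
  refine Finset.sum_eq_zero fun κ hκ => ?_
  have hκ0 : κ ≠ 0 := Finset.ne_of_mem_erase hκ
  refine tr_zero (fe_move ψ V P l hl h κ) (fe_idem ψ V hV κ) (fe_orth ψ V hψ hV _ _ ?_)
  intro h2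
  rw [eq_div_iff hl] at h2
  exact hl1 (mul_left_cancel₀ hκ0 (h2.trans (mul_one κ).symm))

end fieldav

namespace Cfg
variable {F : Type} [Field F] [Fintype F] {G : Type} [Group G] (c : Cfg F G)

theorem exists_phi : ∃ φ : AddChar c.K ℂ, φ ≠ 1 := by
  obtain ⟨φ, h⟩ := (AddChar.exists_apply_ne_zero (a := (1 : c.K))).2 one_ne_zero
  exact ⟨φ, AddChar.ne_one_iff.2 ⟨1, h⟩⟩

/-- a nontrivial additive character of `K` -/
def phi : AddChar c.K ℂ := Classical.choose c.exists_phi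

theorem phi_prim : c.phi.IsPrimitive := AddChar.IsPrimitive.of_ne_one (Classical.choose_spec c.exists_phi)

/-- a nontrivial `cj`-invariant additive character of `F` -/
def psi : AddChar F ℂ where
  toFun x := c.phi (c.rePart x)
  map_zero_eq_one' := by
    have : c.rePart 0 = 0 := Subtype.ext (by simp [rePart])
    rw [this, AddChar.map_zero_eq_one]
  map_add_eq_mul' a b := by
    rw [← AddChar.map_add_eq_mul]
    congr 1
    apply Subtype.ext
    simp only [rePart, map_add]
    push_cast
    ring

theorem psi_cj (x : F) : c.psi (c.cj x) = c.psi x := by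
  show c.phi _ = c.phi _
  congr 1
  apply Subtype.ext
  simp only [rePart, c.cj_cj, add_comm]

theorem psi_prim : c.psi.IsPrimitive := by
  apply AddChar.IsPrimitive.of_ne_one
  obtain ⟨r, hr⟩ := AddChar.ne_one_iff.1 (Classical.choose_spec c.exists_phi)
  refine AddChar.ne_one_iff.2 ⟨r, ?_⟩
  show c.phi _ ≠ 1
  have h1 : c.rePart (r : F) = r := by
    apply Subtype.ext
    have := c.two_ne
    simp only [rePart, c.cj_K]
    field_simp
    norm_num
  rw [h1]
  exact hr

variable {n : ℕ} (R : G →* Matrix (Fin n) (Fin n) ℂ)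

/-- the action of the centre of the unipotent radical -/
def VZ (r : c.K) : Matrix (Fin n) (Fin n) ℂ := R (c.u 0 r)

theorem VZ_add (a b : c.K) : c.VZ R (a + b) = c.VZ R a * c.VZ R b := by
  unfold VZ
  rw [← map_mul, c.u_mul, beta_zero_left]; simp

theorem VZ_zero : c.VZ R 0 = 1 := by unfold VZ; rw [u_zero, map_one]

/-- projection to the fixed points of the centre -/
def eZ : Matrix (Fin n) (Fin n) ℂ := fe c.phi (c.VZ R) 0

theorem eZ_idem : c.eZ R * c.eZ R = c.eZ R := fe_idem _ _ (c.VZ_add R) 0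

theorem VZ_eZ (r : c.K) : c.VZ R r * c.eZ R = c.eZ R := by
  unfold eZ; rw [fe_left _ _ (c.VZ_add R)]; simp

theorem T_VZ (t : Fˣ) (r : c.K) : R (c.T t) * c.VZ R r = c.VZ R (c.Nm t * r) * R (c.T t) := by
  unfold VZ
  rw [← map_mul, ← map_mul, c.T_u, mul_zero]

theorem Nm_ne (t : Fˣ) : c.Nm t ≠ 0 := by
  intro h
  have := congrArg (fun x : c.K => (x : F)) h
  simp only [c.Nm_eq] at this
  exact mul_ne_zero (by simp) (c.cj_ne (by simp)) this

theorem T_eZ (t : Fˣ) : R (c.T t) * c.eZ R = c.eZ R * R (c.T t) := by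
  unfold eZ
  rw [fe_move _ _ _ _ (c.Nm_ne t) (c.T_VZ R t), zero_div]

theorem u_VZ (a : F) (s r : c.K) : R (c.u a s) * c.VZ R r = c.VZ R r * R (c.u a s) := by
  unfold VZ
  rw [← map_mul, ← map_mul, c.u_mul, c.u_mul, beta_zero_left, beta_zero_right]
  congr 2 <;> abel

theorem u_eZ (a : F) (s : c.K) : R (c.u a s) * c.eZ R = c.eZ R * R (c.u a s) := by
  unfold eZ fe
  exact avA_comm _ _ _ (c.u_VZ R a s)

/-- the action of the quotient -/
def v (a : F) : Matrix (Fin n) (Fin n) ℂ := R (c.u a 0) * c.eZ R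

theorem u_eq (a : F) (r : c.K) : c.u a r = c.u a 0 * c.u 0 r := by
  rw [c.u_mul, beta_zero_right]; simp

theorem u_mul_eZ (a : F) (r : c.K) : R (c.u a r) * c.eZ R = c.v R a := by
  rw [u_eq, map_mul, Matrix.mul_assoc]
  exact congrArg _ (c.VZ_eZ R r)

theorem v_add (a b : F) : c.v R (a + b) = c.v R a * c.v R b := by
  conv_rhs => unfold v
  rw [Matrix.mul_assoc, ← Matrix.mul_assoc (c.eZ R), ← u_eZ, Matrix.mul_assoc _ (c.eZ R), eZ_idem,
    ← Matrix.mul_assoc, ← map_mul, c.u_mul, u_mul_eZ]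

theorem v_zero : c.v R 0 = c.eZ R := by unfold v; rw [u_zero, map_one, Matrix.one_mul]

theorem T_v (t : Fˣ) (a : F) : R (c.T t) * c.v R a = c.v R (c.lam t * a) * R (c.T t) := by
  unfold v
  rw [← Matrix.mul_assoc, ← map_mul, c.T_u, map_mul, Matrix.mul_assoc, T_eZ, ← Matrix.mul_assoc, mul_zero]
  rfl

/-- isotypic projections of the unipotent radical -/
def e (κ : F) : Matrix (Fin n) (Fin n) ℂ := fe c.psi (c.v R) κ

theorem e_idem (κ : F) : c.e R κ * c.e R κ = c.e R κ := fe_idem _ _ (c.v_add R) κ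

theorem v_eZ (a : F) : c.v R a * c.eZ R = c.v R a := by
  unfold v; rw [Matrix.mul_assoc, eZ_idem]
theorem eZ_v (a : F) : c.eZ R * c.v R a = c.v R a := by
  rw [← v_zero, ← v_add, zero_add]

theorem e_eZ (κ : F) : c.e R κ * c.eZ R = c.e R κ := by
  unfold e; rw [← v_zero, fe_right _ _ (c.v_add R)]; simp
theorem eZ_e (κ : F) : c.eZ R * c.e R κ = c.e R κ := by
  unfold e; rw [← v_zero, fe_left _ _ (c.v_add R)]; simp

theorem u_e (κ a : F) (r : c.K) : R (c.u a r) * c.e R κ = c.psi (κ * a) • c.e R κ := by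
  rw [← eZ_e, ← Matrix.mul_assoc, u_mul_eZ]
  unfold e
  rw [fe_left _ _ (c.v_add R), ← v_zero, fe_left _ _ (c.v_add R)]; simp

theorem e_u (κ a : F) (r : c.K) : c.e R κ * R (c.u a r) = c.psi (κ * a) • c.e R κ := by
  rw [← e_eZ, Matrix.mul_assoc, ← u_eZ, u_mul_eZ]
  unfold e
  rw [fe_right _ _ (c.v_add R), ← v_zero, fe_right _ _ (c.v_add R)]; simp

theorem e_sum : ∑ κ, c.e R κ = c.eZ R := by
  rw [← v_zero]; exact fe_sum _ _ c.psi_prim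

theorem T_e (t : Fˣ) (κ : F) : R (c.T t) * c.e R κ = c.e R (κ / c.lam t) * R (c.T t) :=
  fe_move _ _ _ _ (c.lam_ne t) (c.T_v R t) κ

theorem e_orth (κ κ' : F) (h : κ ≠ κ') : c.e R κ * c.e R κ' = 0 := fe_orth _ _ c.psi_prim (c.v_add R) _ _ h

theorem trT (t : Fˣ) (h : c.lam t ≠ 1) : (R (c.T t) * (c.eZ R - c.e R 0)).trace = 0 := by
  have := fe_trace_zero c.psi (c.v R) c.psi_prim (c.v_add R) (R (c.T t)) _ (c.lam_ne t) h (c.T_v R t)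
  rwa [v_zero] at this

theorem trT' (t : Fˣ) (h : c.Nm t ≠ 1) : (R (c.T t) * (1 - c.eZ R)).trace = 0 := by
  have := fe_trace_zero c.phi (c.VZ R) c.phi_prim (c.VZ_add R) (R (c.T t)) _ (c.Nm_ne t) h (c.T_VZ R t)
  rwa [VZ_zero] at this

end Cfg
end Paper

namespace Paper
namespace Cfg
variable {F : Type} [Field F] [Fintype F] {G : Type} [Group G] (c : Cfg F G)
variable {n : ℕ} (R : G →* Matrix (Fin n) (Fin n) ℂ)

theorem lam_cj_inv (t : Fˣ) : c.lam (Units.map c.cj.toMonoidHom t)⁻¹ = (c.cj (c.lam t))⁻¹ := by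
  have h1 : (t : F) ≠ 0 := by simp
  have h2 := c.cj_ne h1
  have h3 : ((Units.map c.cj.toMonoidHom t : Fˣ) : F) = c.cj t := rfl
  unfold lam
  simp only [Units.val_inv_eq_inv_val, map_inv₀, map_div₀, map_pow, c.cj_cj, h3]
  field_simp

theorem e_T_e_zero (t : Fˣ) (κ : F) (hκ : κ ≠ 0) (h : c.lam t ≠ 1) :
    c.e R κ * R (c.T t) * c.e R κ = 0 := by
  rw [Matrix.mul_assoc, T_e, ← Matrix.mul_assoc, e_orth, Matrix.zero_mul]
  intro h2
  rw [eq_div_iff (c.lam_ne t)] at h2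
  exact h (mul_left_cancel₀ hκ (h2.trans (mul_one κ).symm))

/-- the parameter of the involution attached to `κ` -/
def sK (κ : F) : F := -(c.cj κ / κ)

theorem sK_mul (κ : F) (hκ : κ ≠ 0) : c.sK κ * c.cj (c.sK κ) = 1 := by
  have h2 := c.cj_ne hκ
  unfold sK
  simp only [map_neg, map_div₀, c.cj_cj]
  field_simp

theorem psi_sK (κ : F) (hκ : κ ≠ 0) (a : F) : c.psi (κ * (-c.sK κ * c.cj a)) = c.psi (κ * a) := by
  rw [← c.psi_cj (κ * a)]
  congr 1
  unfold sK
  rw [map_mul]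
  field_simp

theorem e_gel_cond (κ : F) (hκ : κ ≠ 0) (g : G) :
    c.e R κ * R (c.st (c.sK κ) g) * c.e R κ = c.e R κ * R g * c.e R κ := by
  have hs := c.sK_mul κ hκ
  rcases c.bruhat g with ⟨a, r, t, rfl⟩ | ⟨a, r, t, a', r', rfl⟩
  · rw [c.st_mul _ hs, c.st_u _ hs, c.st_T _ hs]
    rw [map_mul, map_mul, ← Matrix.mul_assoc, ← Matrix.mul_assoc, e_u]
    rw [Matrix.mul_assoc, u_e, psi_sK _ _ hκ]
    simp only [Matrix.smul_mul, Matrix.mul_smul]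
    congr 1
    by_cases h : c.lam t = 1
    · congr 4
      have h1 : (t : F) ≠ 0 := by simp
      have h2 := c.cj_ne h1
      have h3 : ((Units.map c.cj.toMonoidHom t : Fˣ) : F) = c.cj t := rfl
      apply Units.ext
      rw [Units.val_inv_eq_inv_val, h3]
      unfold lam at h
      rw [div_eq_one_iff_eq h2] at h
      have h4 := congrArg c.cj h
      rw [map_pow, c.cj_cj, ← h] at h4
      rw [← h]
      refine inv_eq_of_mul_eq_one_right ?_
      apply mul_right_cancel₀ h1
      rw [one_mul]
      linear_combination h4
    · rw [e_T_e_zero _ _ _ _ hκ h, e_T_e_zero _ _ _ _ hκ]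
      rw [lam_cj_inv, Ne, inv_eq_one]
      intro h2
      apply h
      rw [← c.cj_cj (c.lam t), h2, map_one]
  · rw [c.st_mul _ hs, c.st_mul _ hs, c.st_u _ hs, c.st_u _ hs, c.st_w _ hs]
    simp only [map_mul R (c.u _ _), map_mul R (c.u _ _ * _), map_mul R (c.w * c.T t)]
    have h1 : ∀ X Y : Matrix (Fin n) (Fin n) ℂ, ∀ x y x' y', c.e R κ * (R (c.u x x') * (X * R (c.u y y'))) * c.e R κ =
      (c.psi (κ * x) * c.psi (κ * y)) • (c.e R κ * X * c.e R κ) := by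
      intro X Y x y x' y'
      rw [← Matrix.mul_assoc, ← Matrix.mul_assoc, e_u, Matrix.mul_assoc, u_e]
      simp only [Matrix.smul_mul, Matrix.mul_smul, smul_smul]
      rw [mul_comm]
    rw [h1 _ 1, psi_sK _ _ hκ, psi_sK _ _ hκ, mul_comm]
    rw [Matrix.mul_assoc (R (c.u a r)), h1 _ 1]

theorem e_gel [Fintype G] (hR : Irr R) (κ : F) (hκ : κ ≠ 0) (h0 : c.e R κ ≠ 0) :
    (c.e R κ).trace = 1 ∧ ∃ B, (∀ g, (R g)ᵀ * B = B * R (c.st (c.sK κ) g)) ∧ B ≠ 0 ∧ Bᵀ = B :=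
  gelfand hR _ (c.st_mul _ (c.sK_mul κ hκ)) (c.st_st _ (c.sK_mul κ hκ)) _ (c.e_idem R κ)
    (c.e_gel_cond R κ hκ) h0

theorem dZ_le [Fintype G] (hR : Irr R) (h0 : c.e R 0 = 0) :
    ∃ d : ℕ, (c.eZ R).trace = d ∧ d ≤ c.q ^ 2 - 1 := by
  classical
  have h : ∀ κ, ∃ d : ℕ, (c.e R κ).trace = d ∧ d ≤ if κ = 0 then 0 else 1 := by
    intro κ
    by_cases hk : κ = 0
    · exact ⟨0, by rw [hk, h0]; simp, by simp⟩
    · by_cases h1 : c.e R κ = 0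
      · exact ⟨0, by rw [h1]; simp, by simp⟩
      · exact ⟨1, by rw [(c.e_gel R hR κ hk h1).1]; simp, by simp [hk]⟩
  choose d hd hd' using h
  refine ⟨∑ κ, d κ, ?_, ?_⟩
  · rw [← e_sum, Matrix.trace_sum, Nat.cast_sum]
    exact Finset.sum_congr rfl fun κ _ => hd κ
  · refine (Finset.sum_le_sum fun κ _ => hd' κ).trans ?_
    rw [← Finset.add_sum_erase _ _ (Finset.mem_univ (0 : F))]
    simp only [if_true, zero_add]
    rw [Finset.sum_congr rfl (g := fun _ => 1) (fun κ hκ => if_neg (Finset.ne_of_mem_erase hκ))]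
    simp [c.cardF]

/-! traces -/

theorem u0_trace (r : c.K) (hr : r ≠ 0) : (c.VZ R r).trace = (c.VZ R 1).trace := by
  obtain ⟨t, ht⟩ := c.Nm_surj r hr
  have h := c.T_VZ R t 1
  rw [mul_one, ht] at h
  have h2 : c.VZ R r = R (c.T t) * c.VZ R 1 * R (c.T t)⁻¹ := by
    rw [h, Matrix.mul_assoc, R_mul_inv, Matrix.mul_one]
  rw [h2, Matrix.trace_mul_comm, ← Matrix.mul_assoc, R_inv_mul, Matrix.one_mul]

theorem dvd1 : ∃ m : ℕ, (n : ℂ) - (c.eZ R).trace = ((c.q : ℂ) - 1) * m := by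
  classical
  obtain ⟨m, hm, -⟩ := idem_nat _ (fe_idem c.phi (c.VZ R) (c.VZ_add R) 1)
  refine ⟨m, ?_⟩
  have hq : (c.q : ℂ) ≠ 0 := by have := c.q_ge; exact_mod_cast (by omega)
  have key : ∀ κ : c.K, (c.q : ℂ) * (fe c.phi (c.VZ R) κ).trace =
      n + (∑ r : c.K, c.phi (κ * r) - 1) * (c.VZ R 1).trace := by
    intro κ
    unfold fe avA
    rw [Matrix.trace_smul, c.cardK, smul_eq_mul, ← mul_assoc, mul_inv_cancel₀ hq, one_mul, Matrix.trace_sum,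
      ← Finset.add_sum_erase _ _ (Finset.mem_univ (0 : c.K)), ← Finset.add_sum_erase _ (fun r => c.phi (κ * r)) (Finset.mem_univ (0 : c.K))]
    simp only [neg_zero, mul_zero, AddChar.map_zero_eq_one, one_smul, VZ_zero, Matrix.trace_one, Fintype.card_fin,
      add_sub_cancel_left]
    congr 1
    rw [Finset.sum_mul]
    refine Finset.sum_equiv (Equiv.neg _) (by simp) ?_
    intro r hr
    rw [Matrix.trace_smul, u0_trace _ _ _ (Finset.ne_of_mem_erase hr)]; simp
  have k0 := key 0
  have k1 := key 1
  simp only [zero_mul, one_mul, AddChar.map_zero_eq_one, Finset.sum_const, Finset.card_univ, c.cardK, nsmul_eq_mul, mul_one] at k0 k1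
  have k2 : ∑ r, c.phi r = 0 := AddChar.sum_eq_zero_of_ne_one (Classical.choose_spec c.exists_phi)
  rw [k2] at k1
  change (c.q : ℂ) * (c.eZ R).trace = _ at k0
  rw [hm] at k1
  apply mul_left_cancel₀ hq
  linear_combination (-1 : ℂ) * k0 - ((c.q : ℂ) - 1) * k1

theorem u_tr (a : F) (ha : a ≠ 0) : (R (c.u a 0) * (1 - c.eZ R)).trace = 0 := by
  have h : ∀ r : c.K, (R (c.u a 0) * (1 - c.eZ R)).trace = (R (c.u a 0) * (c.VZ R r * (1 - c.eZ R))).trace := by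
    intro r
    obtain ⟨a', rfl⟩ := c.beta_surj a ha r
    have h1 := c.u_conj a' a
    rw [c.u_eq a (2 * _)] at h1
    unfold VZ
    rw [← Matrix.mul_assoc, ← map_mul, ← h1, map_mul, map_mul, Matrix.mul_assoc]
    have h2 : R (c.u a' 0)⁻¹ * (1 - c.eZ R) = (1 - c.eZ R) * R (c.u a' 0)⁻¹ := by
      rw [u_inv, Matrix.mul_sub, Matrix.sub_mul, u_eZ]; simp
    rw [h2, ← Matrix.mul_assoc, Matrix.trace_mul_comm _ (R (c.u a' 0)⁻¹), ← Matrix.mul_assoc, ← Matrix.mul_assoc,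
      R_inv_mul, Matrix.one_mul]
  have h3 : (Fintype.card c.K : ℂ) * (R (c.u a 0) * (1 - c.eZ R)).trace = 0 := by
    rw [← nsmul_eq_mul, ← Finset.card_univ, ← Finset.sum_const, Finset.sum_congr rfl (fun r _ => h r),
      ← Matrix.trace_sum, ← Finset.mul_sum, ← Finset.sum_mul]
    have h4 : ∑ r, c.VZ R r = (Fintype.card c.K : ℂ) • c.eZ R := by
      unfold eZ fe avA
      rw [smul_smul, mul_inv_cancel₀ (by simp), one_smul]; simp
    rw [h4, Matrix.smul_mul, Matrix.mul_sub, eZ_idem]; simp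
  exact (mul_eq_zero.1 h3).resolve_left (by simp)

theorem dvd2 : ∃ m : ℕ, (n : ℂ) - (c.eZ R).trace = (c.q : ℂ) * m := by
  let V : Multiplicative c.K → Matrix (Fin n) (Fin n) ℂ := fun r => R (c.u (r.toAdd : F) 0)
  have hV : ∀ a b, V (a * b) = V a * V b := by
    intro a b
    simp only [V]
    rw [← map_mul, c.u_mul, beta_self_K]; simp
  have hc : (1 - c.eZ R) * avM V = avM V * (1 - c.eZ R) := avM_comm _ _ (fun a => by
    simp only [V]
    rw [Matrix.mul_sub, Matrix.sub_mul, u_eZ]; simp)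
  obtain ⟨m, hm, -⟩ := idem_nat _ (mul_idem (avM_idem V hV) (one_sub_idem (c.eZ_idem R)) hc.symm)
  refine ⟨m, ?_⟩
  have h := avM_trace V (by simp [V, u_zero]) (1 - c.eZ R) 0 (by
    intro a ha
    rw [Matrix.mul_zero, Matrix.trace_zero]
    refine c.u_tr R _ ?_
    intro h; apply ha
    have h1 : a.toAdd = 0 := by simpa using h
    exact toAdd_eq_zero.1 h1)
  rw [hm] at h
  simp only [Fintype.card_multiplicative, c.cardK, Matrix.mul_zero, Matrix.trace_zero, sub_zero,
    Matrix.trace_sub, Matrix.trace_one, Fintype.card_fin] at h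
  exact h.symm

end Cfg
end Paper

namespace Paper
namespace Cfg
variable {F : Type} [Field F] [Fintype F] {G : Type} [Group G] (c : Cfg F G)
variable {n : ℕ} (R : G →* Matrix (Fin n) (Fin n) ℂ)

theorem T_e0 (t : Fˣ) : R (c.T t) * c.e R 0 = c.e R 0 * R (c.T t) := by
  rw [T_e, zero_div]

theorem lam_neg_one : c.lam (-1) = -1 := by
  unfold lam; simp

theorem lam_ne_one_of (x : Fˣ) (hx : x ^ (2 * (c.q - 1)) = 1) (h1 : x ≠ 1) : c.lam x ≠ 1 := by
  intro hl
  have hq := c.q_ge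
  have hx0 : (x : F) ≠ 0 := by simp
  have h2 : ((x : F) ^ (c.q - 1)) ^ 2 = 1 := by
    rw [← pow_mul, mul_comm]; rw [← Units.val_pow_eq_pow_val, hx, Units.val_one]
  have h3 : c.cj x = x ^ (c.q - 1) * x := by
    rw [c.cj_eq, ← pow_succ]; congr 1; omega
  unfold lam at hl
  rw [div_eq_one_iff_eq (c.cj_ne hx0), h3] at hl
  have h4 : (x : F) = x ^ (c.q - 1) := mul_right_cancel₀ hx0 (by rw [← hl]; ring)
  rw [← h4] at h2
  rcases sq_eq_one_iff.1 h2 with h | h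
  · exact h1 (Units.ext h)
  · rw [← h4, h, map_neg, map_one] at h3
    have : (2 : F) = 0 := by linear_combination -h3
    exact c.two_ne this

theorem dvd3 : ∃ m : ℤ, (c.eZ R).trace - (c.e R 0).trace = (2 * ((c.q : ℂ) - 1)) * m := by
  obtain ⟨g0, hg, ho⟩ := c.exists_gen
  have hq := c.q_ge
  obtain ⟨h, hh⟩ : ∃ h, c.q = 2 * h + 1 := c.q_odd
  have hord : orderOf (g0 ^ (h + 1)) = 2 * (c.q - 1) := by
    rw [orderOf_pow_of_dvd (by omega), ho, c.q_sq, hh]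
    · have : (2 * h + 1 + 1) * (2 * h + 1 - 1) = (h + 1) * (2 * (2 * h + 1 - 1)) := by
        rw [Nat.add_sub_cancel]; ring
      rw [this, Nat.mul_div_cancel_left _ (by omega)]
    · rw [ho, c.q_sq, hh]
      exact ⟨2 * (2 * h + 1 - 1), by rw [Nat.add_sub_cancel]; ring⟩
  let C := Subgroup.zpowers (g0 ^ (h + 1))
  have : Fintype C := Fintype.ofFinite _
  have hcard : Fintype.card C = 2 * (c.q - 1) := by
    rw [← Nat.card_eq_fintype_card, Nat.card_zpowers, hord]
  let V : C → Matrix (Fin n) (Fin n) ℂ := fun x => R (c.T x)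
  have hV : ∀ a b, V (a * b) = V a * V b := by intro a b; simp [V]
  have hc1 : c.eZ R * avM V = avM V * c.eZ R := avM_comm _ _ fun a => (c.T_eZ R _).symm
  have hc2 : c.e R 0 * avM V = avM V * c.e R 0 := avM_comm _ _ fun a => (c.T_e0 R _).symm
  obtain ⟨m1, hm1, -⟩ := idem_nat _ (mul_idem (avM_idem V hV) (c.eZ_idem R) hc1.symm)
  obtain ⟨m2, hm2, -⟩ := idem_nat _ (mul_idem (avM_idem V hV) (c.e_idem R 0) hc2.symm)
  have key := avM_trace V (by simp [V]) (c.eZ R) (c.e R 0) (by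
    intro a ha
    rw [← sub_eq_zero, ← Matrix.trace_sub, ← Matrix.mul_sub]
    refine c.trT R _ (c.lam_ne_one_of _ ?_ ?_)
    · rw [← hord]
      have h1 := a.2
      obtain ⟨j, hj⟩ := Subgroup.mem_zpowers_iff.1 h1
      rw [← hj, ← zpow_natCast, ← _root_.zpow_mul, mul_comm, _root_.zpow_mul, zpow_natCast, pow_orderOf_eq_one, _root_.one_zpow]
    · intro h; exact ha (Subtype.ext h))
  refine ⟨(m1 : ℤ) - m2, ?_⟩
  rw [hm1, hm2, hcard] at key
  rw [← key]
  push_cast [Nat.cast_sub (show 1 ≤ c.q by omega)]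
  ring

theorem exists_eigen (h0 : c.e R 0 ≠ 0) : ∃ v : Fin n → ℂ, v ≠ 0 ∧ c.e R 0 *ᵥ v = v ∧
    ∀ t, ∃ x : ℂ, R (c.T t) *ᵥ v = x • v := by
  obtain ⟨g0, hg, -⟩ := c.exists_gen
  let W := LinearMap.range (Matrix.toLin' (c.e R 0))
  have hW : ∀ w ∈ W, c.e R 0 *ᵥ w = w := by
    rintro w ⟨y, rfl⟩
    rw [Matrix.toLin'_apply, Matrix.mulVec_mulVec, e_idem]
  have hmap : ∀ w ∈ W, Matrix.toLin' (R (c.T g0)) w ∈ W := by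
    intro w hw
    refine ⟨R (c.T g0) *ᵥ w, ?_⟩
    rw [Matrix.toLin'_apply, Matrix.toLin'_apply, Matrix.mulVec_mulVec, ← T_e0, ← Matrix.mulVec_mulVec, hW w hw]
  have : Nontrivial W := by
    rw [Submodule.nontrivial_iff_ne_bot]
    intro h
    rw [LinearMap.range_eq_bot] at h
    exact h0 (by simpa using h)
  obtain ⟨μ, hμ⟩ := Module.End.exists_eigenvalue ((Matrix.toLin' (R (c.T g0))).restrict hmap)
  obtain ⟨w, hw⟩ := hμ.exists_hasEigenvector
  have hw1 : R (c.T g0) *ᵥ (w : Fin n → ℂ) = μ • (w : Fin n → ℂ) := by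
    have := congrArg (fun x : W => (x : Fin n → ℂ)) hw.apply_eq_smul
    simpa using this
  refine ⟨w, fun h => hw.2 (Subtype.ext h), hW w w.2, fun t => ?_⟩
  obtain ⟨j, rfl⟩ := hg t
  refine ⟨μ ^ j, ?_⟩
  rw [map_pow, map_pow]
  induction j with
  | zero => simp
  | succ j ih => rw [pow_succ', ← Matrix.mulVec_mulVec, ih, Matrix.mulVec_smul, hw1, smul_smul, ← pow_succ]

theorem e0_bound (hR : Irr R) (h0 : c.e R 0 ≠ 0) : n ≤ c.q ^ 3 + 1 ∧
    ∃ k : ℕ, (c.e R 0).trace = k ∧ k ≤ 2 := by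
  obtain ⟨v, hv0, hv, hT⟩ := c.exists_eigen R h0
  let S : Option (F × c.K) → (Fin n → ℂ) := fun o => o.elim v (fun x => R (c.u x.1 x.2) *ᵥ (R c.w *ᵥ v))
  have huv : ∀ a r, R (c.u a r) *ᵥ v = v := by
    intro a r
    conv_lhs => rw [← hv]
    rw [Matrix.mulVec_mulVec, u_e]; simp [hv]
  have hmem : ∀ g, R g *ᵥ v ∈ Submodule.span ℂ (Set.range S) := by
    intro g
    rcases c.bruhat g with ⟨a, r, t, rfl⟩ | ⟨a, r, t, a', r', rfl⟩
    · obtain ⟨x, hx⟩ := hT t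
      rw [map_mul, ← Matrix.mulVec_mulVec, hx, Matrix.mulVec_smul, huv]
      exact Submodule.smul_mem _ _ (Submodule.subset_span ⟨none, rfl⟩)
    · obtain ⟨x, hx⟩ := hT t
      rw [map_mul, ← Matrix.mulVec_mulVec, huv, map_mul, map_mul, ← Matrix.mulVec_mulVec, ← Matrix.mulVec_mulVec, hx,
        Matrix.mulVec_smul, Matrix.mulVec_smul]
      exact Submodule.smul_mem _ _ (Submodule.subset_span ⟨some (a, r), rfl⟩)
  have htop : Submodule.span ℂ (Set.range S) = ⊤ := by
    have h1 : Submodule.span ℂ (Set.range fun g => R g *ᵥ v) = ⊤ := by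
      rcases hR.2 (Submodule.span ℂ (Set.range fun g => R g *ᵥ v)) (by
        intro g w hw
        have : Submodule.span ℂ (Set.range fun g => R g *ᵥ v) ≤
          (Submodule.span ℂ (Set.range fun g => R g *ᵥ v)).comap (Matrix.toLin' (R g)) := by
          rw [Submodule.span_le]
          rintro _ ⟨h, rfl⟩
          simp only [Submodule.comap_coe, Set.mem_preimage, Matrix.toLin'_apply, Matrix.mulVec_mulVec, ← map_mul]
          exact Submodule.subset_span ⟨g * h, rfl⟩
        exact this hw) with h | h
      · exfalso
        rw [Submodule.span_eq_bot] at h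
        apply hv0
        have := h _ ⟨1, rfl⟩
        simpa using this
      · exact h
    rw [eq_top_iff, ← h1, Submodule.span_le]
    rintro _ ⟨g, rfl⟩
    exact hmem g
  constructor
  · have h1 := finrank_range_le_card (R := ℂ) S
    rw [Set.finrank, htop, finrank_top, Module.finrank_fin_fun, Fintype.card_option, Fintype.card_prod, c.cardF, c.cardK] at h1
    calc n ≤ _ := h1
      _ = _ := by ring
  · refine ⟨_, (idem_trace _ (c.e_idem R 0)).1, ?_⟩
    have h2 : LinearMap.range (Matrix.toLin' (c.e R 0)) ≤
        Submodule.span ℂ (Set.range ![v, c.e R 0 *ᵥ (R c.w *ᵥ v)]) := by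
      rw [LinearMap.range_eq_map, ← htop, Submodule.map_span, Submodule.span_le]
      rintro _ ⟨_, ⟨o, rfl⟩, rfl⟩
      rcases o with _ | ⟨a, r⟩
      · apply Submodule.subset_span
        exact ⟨0, by simp [S, hv]⟩
      · apply Submodule.subset_span
        refine ⟨1, ?_⟩
        simp only [S, Option.elim, Matrix.toLin'_apply, Matrix.mulVec_mulVec]
        rw [← Matrix.mul_assoc, e_u]; simp
    refine (Submodule.finrank_mono h2).trans ?_
    have h3 := finrank_range_le_card (R := ℂ) ![v, c.e R 0 *ᵥ (R c.w *ᵥ v)]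
    simpa [Set.finrank] using h3

/-- the key numerical assumptions on the degree -/
def Deg (n g b : ℕ) : Prop := (g = 1 ∨ g = 3) ∧ g * b = c.q + 1 ∧ n = b * (c.q + 1) * (c.q - 1)

theorem e0_zero (hR : Irr R) (g b : ℕ) (hd : c.Deg n g b) : c.e R 0 = 0 := by
  by_contra h0
  obtain ⟨hn, k, hk, hk2⟩ := c.e0_bound R hR h0
  have hk0 : k ≠ 0 := by
    rintro rfl
    exact h0 (idem_trace_zero _ (c.e_idem R 0) (by simpa using hk))
  obtain ⟨m1, h1⟩ := c.dvd1 R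
  obtain ⟨m3, h3⟩ := c.dvd3 R
  obtain ⟨hg, hb, hn'⟩ := hd
  have hq := c.q_ge
  obtain ⟨m, hm⟩ : ∃ m, c.q = m + 1 := ⟨c.q - 1, by omega⟩
  rw [hk] at h3
  have hdvd : ((m : ℤ)) ∣ k := by
    refine ⟨b * (c.q + 1) - m1 - 2 * m3, ?_⟩
    have : (k : ℂ) = m * (b * (c.q + 1) - m1 - 2 * m3) := by
      have hnc : (n : ℂ) = b * (m + 1 + 1) * m := by
        rw [hm, Nat.add_sub_cancel] at hn'
        exact_mod_cast hn'
      rw [hm] at h1 h3 ⊢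
      push_cast at h1 h3 ⊢
      linear_combination -h1 - h3 + hnc
    exact_mod_cast this
  have hmk := Nat.le_of_dvd (by omega) (Int.natCast_dvd_natCast.1 hdvd)
  have hq3 : c.q = 3 := by
    obtain ⟨j, hj⟩ := c.q_odd
    omega
  rw [hq3] at hn hn' hb
  rcases hg with rfl | rfl <;> omega

end Cfg
end Paper

namespace Paper
namespace Cfg
variable {F : Type} [Field F] [Fintype F] {G : Type} [Group G] (c : Cfg F G)
variable {n : ℕ} (R : G →* Matrix (Fin n) (Fin n) ℂ)

theorem deg_even {n g b : ℕ} (hd : c.Deg n g b) : Even b := by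
  obtain ⟨hg, hb, -⟩ := hd
  obtain ⟨j, hj⟩ := c.q_odd
  rw [Nat.even_iff]
  rcases hg with rfl | rfl <;> omega

theorem dZ_eq [Fintype G] (hR : Irr R) (g b : ℕ) (hd : c.Deg n g b) :
    (c.eZ R).trace = ((c.q : ℂ) - 1) * b := by
  have h0 := c.e0_zero R hR g b hd
  obtain ⟨d, hdZ, hle⟩ := c.dZ_le R hR h0
  obtain ⟨m2, h2⟩ := c.dvd2 R
  obtain ⟨m3, h3⟩ := c.dvd3 R
  obtain ⟨e, he⟩ := c.deg_even hd
  obtain ⟨hg, hb, hn⟩ := hd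
  have hq := c.q_ge
  rw [h0, hdZ, Matrix.trace_zero, sub_zero] at h3
  rw [hdZ] at h2 ⊢
  rw [c.q_sq] at hle
  obtain ⟨j, hj⟩ := c.q_odd
  obtain ⟨m, hm⟩ : ∃ m, c.q = m + 1 := ⟨c.q - 1, by omega⟩
  rw [hm] at h2 h3 hn hle hb hq ⊢
  simp only [Nat.add_sub_cancel] at hle hn
  have h3' : (d : ℤ) = 2 * m * m3 := by
    have : (d : ℂ) = 2 * m * m3 := by rw [h3]; push_cast; ring
    exact_mod_cast this
  have h2' : (n : ℤ) - d = (m + 1) * m2 := by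
    have : (n : ℂ) - d = (m + 1) * m2 := by rw [h2]; push_cast; ring
    exact_mod_cast this
  have hn' : (n : ℤ) = b * (m + 2) * m := by rw [hn]; push_cast; ring
  have hcop : IsCoprime ((m : ℤ) + 1) m := ⟨1, -1, by ring⟩
  have hdv : ((m : ℤ) + 1) ∣ m * (b - 2 * m3) := ⟨m2 - b * m, by linear_combination h2' - hn' + h3'⟩
  obtain ⟨i, hi⟩ := hcop.dvd_of_dvd_mul_left hdv
  have hm0 : (0 : ℤ) < m := by omega
  have hm3 : m3 * 2 ≤ m + 2 := by
    have : (d : ℤ) ≤ (m + 2) * m := by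
      have : (d : ℤ) ≤ (m + 1 + 1) * m := by exact_mod_cast hle
      linarith
    rw [h3'] at this
    exact le_of_mul_le_mul_right (by linarith) hm0
  have hm3' : 0 ≤ m3 := by
    by_contra h
    push Not at h
    have : (0 : ℤ) ≤ d := by positivity
    nlinarith
  have hb' : (b : ℤ) ≤ m + 2 ∧ 2 ≤ b := by rcases hg with rfl | rfl <;> omega
  have hi0 : i = 0 := by
    have h1 : i < 2 := by
      by_contra h
      push Not at h
      nlinarith
    have h2 : -1 < i := by
      by_contra h
      push Not at h
      nlinarith
    interval_cases i
    · rfl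
    · exfalso
      omega
  rw [hi0, mul_zero] at hi
  have : (d : ℤ) = m * b := by rw [h3']; linear_combination -(m : ℤ) * hi
  have h4 : (d : ℂ) = m * b := by exact_mod_cast this
  rw [h4]; push_cast; ring

noncomputable instance : Fintype c.Kˣ := Fintype.ofFinite _

/-- projection to the fixed points of the small torus -/
def eD : Matrix (Fin n) (Fin n) ℂ := avM (fun r : c.Kˣ => R (c.T (c.kU r)))

theorem kU_mul (a b : c.Kˣ) : c.kU (a * b) = c.kU a * c.kU b := map_mul _ _ _

theorem eD_mul (a b : c.Kˣ) : R (c.T (c.kU (a * b))) = R (c.T (c.kU a)) * R (c.T (c.kU b)) := by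
  rw [kU_mul, map_mul, map_mul]

theorem eD_idem : c.eD R * c.eD R = c.eD R := avM_idem _ (c.eD_mul R)

theorem eZ_eD : c.eZ R * c.eD R = c.eD R * c.eZ R := avM_comm _ _ fun _ => (c.T_eZ R _).symm

theorem T_eD (t : Fˣ) : R (c.T t) * c.eD R = c.eD R * R (c.T t) :=
  avM_comm _ _ fun a => by rw [← map_mul, ← map_mul, ← map_mul, ← map_mul, mul_comm]

theorem cardKu : (Fintype.card c.Kˣ : ℂ) = (c.q : ℂ) - 1 := by
  classical
  rw [← Nat.card_eq_fintype_card, Nat.card_units, Nat.card_eq_fintype_card, c.cardK]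
  push_cast [Nat.cast_sub (show 1 ≤ c.q by have := c.q_ge; omega)]
  rfl

theorem q1_ne : (c.q : ℂ) - 1 ≠ 0 := by
  have := c.q_ge
  rw [sub_ne_zero]
  exact_mod_cast (by omega : c.q ≠ 1)

theorem tr_eD_eZ [Fintype G] (hR : Irr R) (g b : ℕ) (hd : c.Deg n g b) :
    (c.eD R * c.eZ R).trace = b := by
  have h0 := c.e0_zero R hR g b hd
  have h := avM_trace (fun r : c.Kˣ => R (c.T (c.kU r))) (by simp [kU]) (c.eZ R) 0 (by
    intro r hr
    have h1 := c.trT R (c.kU r) (by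
      rw [lam_kU]; intro h; apply hr; apply Units.ext; apply Subtype.ext; exact h)
    rw [h0, sub_zero] at h1
    rw [h1]; simp)
  rw [c.cardKu, Matrix.mul_zero, Matrix.trace_zero, sub_zero, sub_zero, c.dZ_eq R hR g b hd] at h
  exact mul_left_cancel₀ c.q1_ne h

theorem tr_eD' [Fintype G] (hR : Irr R) (g b : ℕ) (hd : c.Deg n g b) :
    ((c.q : ℂ) - 1) * (c.eD R * (1 - c.eZ R)).trace =
      n - ((c.q : ℂ) - 1) * b + (R (c.T (-1))).trace := by
  classical
  have h0 := c.e0_zero R hR g b hd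
  have hneg : (-1 : c.Kˣ) ≠ 1 := by
    intro h
    have := congrArg (fun x : c.Kˣ => ((x : c.K) : F)) h
    simp only [Units.val_neg, Units.val_one] at this
    push_cast at this
    exact c.two_ne (by linear_combination -this)
  have hk : c.kU (-1) = -1 := by apply Units.ext; rw [kU_val]; simp
  unfold eD avM
  rw [Matrix.smul_mul, Matrix.trace_smul, smul_eq_mul, ← mul_assoc, c.cardKu, mul_inv_cancel₀ c.q1_ne, one_mul,
    Finset.sum_mul, Matrix.trace_sum, Finset.sum_eq_add (1 : c.Kˣ) (-1) hneg.symm]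
  · have h1 := c.trT R (-1) (by rw [lam_neg_one]; intro h; exact c.two_ne (by linear_combination -h))
    rw [h0, sub_zero] at h1
    rw [hk, Matrix.mul_sub, Matrix.trace_sub, Matrix.mul_sub, Matrix.trace_sub, h1]
    simp [kU, c.dZ_eq R hR g b hd]
  · intro r _ hr
    apply c.trT'
    rw [Nm_kU]
    intro h
    rcases sq_eq_one_iff.1 h with h | h
    · exact hr.1 (Units.ext h)
    · exact hr.2 (Units.ext h)
  · simp
  · simp

end Cfg
end Paper

namespace Paper

theorem odd_class {G : Type} [Group G] [Fintype G] (C : Finset G) (i h : G) (hC : ∀ g, g ∈ C ↔ IsConj i g)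
    (k : ℕ) (hk : h ^ (2 ^ k) = 1) (hi : h * i = i * h) (huniq : ∀ g, IsConj i g → h * g = g * h → g = i) :
    Odd C.card := by
  classical
  have hmem : ∀ g : C, h * g * h⁻¹ ∈ C := by
    intro g
    rw [hC]
    exact ((hC _).1 g.2).trans (isConj_iff.2 ⟨h, rfl⟩)
  let f : Function.End C := fun g => ⟨h * g * h⁻¹, hmem g⟩
  have hfp : ∀ j : ℕ, ∀ g : C, (((f ^ j) g : C) : G) = h ^ j * g * (h ^ j)⁻¹ := by
    intro j
    induction j with
    | zero => intro g; simp [Function.End.one_def]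
    | succ j ih =>
      intro g
      have : (f ^ (j + 1)) g = f ((f ^ j) g) := by rw [pow_succ']; rfl
      rw [this]
      show h * (((f ^ j) g : C) : G) * h⁻¹ = _
      rw [ih, pow_succ']; group
  have hf : f ^ 2 ^ k = 1 := by
    funext g
    apply Subtype.ext
    rw [hfp, hk]; simp [Function.End.one_def]
  have : Fact (Nat.Prime 2) := ⟨Nat.prime_two⟩
  have h1 := Equiv.Perm.card_fixedPoints_modEq hf
  have h2 : Fintype.card (Function.fixedPoints f) = 1 := by
    rw [Fintype.card_eq_one_iff]
    have hii : i ∈ C := (hC i).2 (IsConj.refl i)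
    refine ⟨⟨⟨i, hii⟩, ?_⟩, ?_⟩
    · apply Subtype.ext
      show h * i * h⁻¹ = i
      rw [hi, mul_inv_cancel_right]
    · rintro ⟨⟨g, hg⟩, hfix⟩
      apply Subtype.ext
      apply Subtype.ext
      show g = i
      have h3 : h * g * h⁻¹ = g := congrArg Subtype.val hfix
      refine huniq g ((hC g).1 hg) ?_
      rw [mul_inv_eq_iff_eq_mul] at h3
      exact h3
  rw [Fintype.card_coe] at h1
  rw [Nat.odd_iff]
  rw [h2] at h1
  exact h1

namespace Cfg
variable {F : Type} [Field F] [Fintype F] {G : Type} [Group G] (c : Cfg F G)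
variable {n : ℕ} (R : G →* Matrix (Fin n) (Fin n) ℂ)

theorem iota_sq : c.T (-1) * c.T (-1) = 1 := by rw [← map_mul]; simp

theorem odd_iota [Fintype G] (C : Finset G) (hC : ∀ g, g ∈ C ↔ IsConj (c.T (-1)) g) : Odd C.card := by
  obtain ⟨g0, hg, ho⟩ := c.exists_gen
  have hq := c.q_ge
  obtain ⟨j, hj⟩ := c.q_odd
  have hpos : c.q ^ 2 - 1 ≠ 0 := by rw [c.q_sq]; exact Nat.mul_ne_zero (by omega) (by omega)
  obtain ⟨k, m, hm, hkm⟩ := Nat.exists_eq_two_pow_mul_odd hpos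
  set x := g0 ^ m with hx
  have hox : orderOf x = 2 ^ k := by
    rw [hx, orderOf_pow_of_dvd (by rintro rfl; simp at hm) ⟨2 ^ k, by rw [ho, hkm, mul_comm]⟩, ho, hkm,
      Nat.mul_div_cancel _ hm.pos]
  have hk0 : k ≠ 0 := by
    rintro rfl
    rw [pow_zero, one_mul, c.q_sq] at hkm
    rw [← hkm, hj, Nat.add_sub_cancel] at hm
    rcases Nat.odd_mul.1 hm with ⟨_, h⟩
    rw [Nat.odd_iff] at h
    omega
  have h2k : 2 ∣ 2 ^ k := dvd_pow_self 2 hk0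
  refine odd_class C (c.T (-1)) (c.T x) hC k ?_ ?_ ?_
  · rw [← map_pow, ← hox, pow_orderOf_eq_one, map_one]
  · rw [← map_mul, ← map_mul, mul_comm]
  · intro g hg1 hg2
    have hgg : g * g = 1 := by
      obtain ⟨y, rfl⟩ := isConj_iff.1 hg1
      have : y * c.T (-1) * y⁻¹ * (y * c.T (-1) * y⁻¹) = y * (c.T (-1) * c.T (-1)) * y⁻¹ := by group
      rw [this, iota_sq]; simp
    refine (c.comm_T x ?_ ?_ g hgg hg2).resolve_left ?_
    · intro h
      have h1 : x ^ (c.q + 1) = 1 := by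
        apply Units.ext
        rw [c.cj_eq] at h
        rw [Units.val_pow_eq_pow_val, pow_succ', h]; rfl
      rw [hx, ← pow_mul] at h1
      have h2 := orderOf_dvd_of_pow_eq_one h1
      rw [ho, c.q_sq, mul_comm] at h2
      have h3 := Nat.dvd_of_mul_dvd_mul_right (by omega) h2
      have h4 : 2 ∣ m := (show 2 ∣ c.q - 1 from ⟨j, by omega⟩).trans h3
      rw [Nat.odd_iff] at hm
      omega
    · intro h
      have h1 : x ^ (c.q - 2) = 1 := by
        apply Units.ext
        rw [c.cj_eq] at h
        have h5 : c.q = (c.q - 2) + 2 := by omega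
        rw [h5, pow_add] at h
        have h6 : (x : F) ^ 2 ≠ 0 := by simp
        rw [Units.val_pow_eq_pow_val]
        exact mul_right_cancel₀ h6 (by rw [← h]; simp)
      have h2 := orderOf_dvd_of_pow_eq_one h1
      rw [hox] at h2
      have h3 := h2k.trans h2
      omega
    · rintro rfl
      exact c.T_neg (isConj_one_left.1 hg1)

theorem N1_exists [Fintype G] (hR : Irr R) (g b : ℕ) (hd : c.Deg n g b) :
    ∃ N1 : ℕ, (c.eD R * (1 - c.eZ R)).trace = ((2 * N1 : ℕ) : ℂ) ∧ (Even (b + N1) ↔ c.q % 4 = 3) := by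
  classical
  have htr := c.tr_eD' R hR g b hd
  obtain ⟨m1, hm1, -⟩ := idem_nat _ (mul_idem (c.eD_idem R) (one_sub_idem (c.eZ_idem R)) (by
    rw [Matrix.mul_sub, Matrix.sub_mul, c.eZ_eD]; simp))
  obtain ⟨e, he⟩ := c.deg_even hd
  obtain ⟨hg, hb, hn⟩ := hd
  have hq := c.q_ge
  obtain ⟨j, hj⟩ := c.q_odd
  rw [hm1] at htr
  -- the value at the involution
  have hnc : (n : ℂ) = b * (c.q + 1) * (c.q - 1) := by
    have h1 : (((c.q - 1 : ℕ) : ℕ) : ℂ) = (c.q : ℂ) - 1 := by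
      push_cast [Nat.cast_sub (show 1 ≤ c.q by omega)]; rfl
    rw [← h1]; exact_mod_cast hn
  have hval : (R (c.T (-1))).trace = (((c.q - 1 : ℤ) * (m1 - c.q * b) : ℤ) : ℂ) := by
    push_cast
    linear_combination -htr - hnc
  obtain ⟨w, hw⟩ := class_sum_int hR (Finset.univ.filter fun x => IsConj (c.T (-1)) x) (c.T (-1)) (by simp) _ hval
  have hodd := c.odd_iota (Finset.univ.filter fun x => IsConj (c.T (-1)) x) (by simp)
  set N := (Finset.univ.filter fun x => IsConj (c.T (-1)) x).card
  set x : ℤ := m1 - c.q * b with hx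
  have hq1 : (c.q : ℤ) - 1 ≠ 0 := by omega
  have hnz : (n : ℤ) = b * (c.q + 1) * (c.q - 1) := by
    have : (n : ℂ) = ((b * (c.q + 1) * (c.q - 1) : ℤ) : ℂ) := by rw [hnc]; push_cast; ring
    exact_mod_cast this
  have h4 : (4 : ℤ) ∣ x := by
    have h1 : (N : ℤ) * x = b * (c.q + 1) * w := by
      apply mul_left_cancel₀ hq1
      rw [hnz] at hw
      linear_combination hw
    have h2 : (4 : ℤ) ∣ N * x := by
      rw [h1, he, hj]
      exact ⟨e * (j + 1) * w, by push_cast; ring⟩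
    have h3 : IsCoprime (4 : ℤ) N := by
      have : Nat.Coprime 4 N := by
        rw [show (4 : ℕ) = 2 ^ 2 by norm_num]
        exact Nat.Coprime.pow_left 2 (Nat.coprime_two_left.2 hodd)
      exact_mod_cast Nat.isCoprime_iff_coprime.2 this
    exact h3.dvd_of_dvd_mul_left h2
  obtain ⟨y, hy⟩ := h4
  have hm : (m1 : ℤ) = 2 * (c.q * e + 2 * y) := by
    have : (m1 : ℤ) = c.q * b + x := by rw [hx]; ring
    rw [this, hy, he]; push_cast; ring
  obtain ⟨N1, hN⟩ : ∃ N1 : ℕ, (N1 : ℤ) = c.q * e + 2 * y := ⟨(c.q * e + 2 * y : ℤ).toNat, by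
    rw [Int.toNat_of_nonneg]; omega⟩
  refine ⟨N1, ?_, ?_⟩
  · rw [hm1]
    congr 1
    omega
  · have h5 : (N1 : ℤ) = e + 2 * (j * e + y) := by rw [hN, hj]; push_cast; ring
    rw [Nat.even_iff]
    generalize (j * e + y : ℤ) = z at h5
    have h6 : (b + N1) % 2 = e % 2 := by omega
    rw [h6]
    rcases hg with rfl | rfl <;> omega

end Cfg
end Paper

namespace Paper

section gauss
variable {n : ℕ} {E : Type} [Field E] [Fintype E]

open Classical in
/-- the complex valued quadratic character -/
def qc (E : Type) [Field E] [Fintype E] : MulChar E ℂ := (quadraticChar E).ringHomComp (Int.castRingHom ℂ)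

theorem qc_cases (a : E) (ha : a ≠ 0) : qc E a = 1 ∨ qc E a = -1 := by
  classical
  have h := quadraticChar_dichotomy ha
  unfold qc
  rw [MulChar.ringHomComp_apply]
  rcases h with h | h
  · left; convert congrArg (Int.cast : ℤ → ℂ) h using 1
    · simp
    · simp
  · right; convert congrArg (Int.cast : ℤ → ℂ) h using 1
    · simp
    · simp

theorem qc_one_iff (a : E) (ha : a ≠ 0) : qc E a = 1 ↔ IsSquare a := by
  classical
  rw [← quadraticChar_one_iff_isSquare ha]
  unfold qc
  rw [MulChar.ringHomComp_apply]
  simp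

theorem qc_neg (a : E) (ha : a ≠ 0) (h : ¬ IsSquare a) : qc E a = -1 :=
  (qc_cases a ha).resolve_left (fun h1 => h ((qc_one_iff a ha).1 h1))

theorem qc_mul_self (a : E) (ha : a ≠ 0) : qc E a * qc E a = 1 := by
  rcases qc_cases a ha with h | h <;> rw [h] <;> norm_num

theorem qc_ne_one (h2 : (2 : E) ≠ 0) : qc E ≠ 1 := by
  classical
  intro h
  obtain ⟨a, ha⟩ := FiniteField.exists_nonsquare (F := E) (fun h => h2 (by
    have := ringChar.Nat.cast_ringChar (R := E); rw [h] at this; exact_mod_cast this))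
  have ha0 : a ≠ 0 := by rintro rfl; exact ha (by simp)
  have h1 := qc_neg a ha0 ha
  rw [h, MulChar.one_apply (by simpa using ha0)] at h1
  norm_num at h1

theorem qc_inv : (qc E)⁻¹ = qc E := by
  ext a
  rw [MulChar.inv_apply_eq_inv', inv_eq_of_mul_eq_one_left (qc_mul_self _ (by simp))]

/-- Gauss sum of a matrix family -/
def gs (V : E → Matrix (Fin n) (Fin n) ℂ) : Matrix (Fin n) (Fin n) ℂ := ∑ a, qc E a • V a

open Classical in
theorem qc_conv (h2 : (2 : E) ≠ 0) (x : E) : ∑ a, qc E a * qc E (x - a) =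
    qc E (-1) * ((if x = 0 then (Fintype.card E : ℂ) else 0) - 1) := by
  classical
  by_cases hx : x = 0
  · subst hx
    have h : ∀ a : E, qc E a * qc E (0 - a) = if a = 0 then 0 else qc E (-1) := by
      intro a
      split_ifs with h
      · subst h; rw [MulChar.map_zero, zero_mul]
      · rw [zero_sub, neg_eq_neg_one_mul, map_mul]
        linear_combination qc E (-1) * qc_mul_self a h
    simp only [h]
    rw [Finset.sum_ite, Finset.sum_const_zero, zero_add, Finset.sum_const, Finset.filter_ne',
      Finset.card_erase_of_mem (Finset.mem_univ _), Finset.card_univ, nsmul_eq_mul, if_pos trivial,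
      Nat.cast_sub Fintype.card_pos]
    push_cast; ring
  · rw [if_neg hx]
    have h := jacobiSum_nontrivial_inv (qc_ne_one h2)
    rw [qc_inv, jacobiSum] at h
    rw [← Equiv.sum_comp (Equiv.mulLeft₀ x hx)]
    have h3 : ∀ a : E, qc E (x * a) * qc E (x - x * a) = qc E a * qc E (1 - a) := by
      intro a
      rw [show x - x * a = x * (1 - a) by ring, map_mul, map_mul]
      linear_combination qc E a * qc E (1 - a) * qc_mul_self x hx
    simp only [Equiv.mulLeft₀_apply, h3]
    rw [h]; ring

theorem gs_sq (h2 : (2 : E) ≠ 0) (V : E → Matrix (Fin n) (Fin n) ℂ) (hV : ∀ a b, V (a + b) = V a * V b) :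
    gs V * gs V = qc E (-1) • ((Fintype.card E : ℂ) • V 0 - ∑ a, V a) := by
  classical
  have h1 : gs V * gs V = ∑ x, (∑ a, qc E a * qc E (x - a)) • V x := by
    unfold gs
    simp only [Finset.sum_mul_sum, Finset.sum_smul]
    conv_rhs => rw [Finset.sum_comm]
    refine Finset.sum_congr rfl fun a _ => ?_
    conv_rhs => rw [← Equiv.sum_comp (Equiv.addLeft a)]
    refine Finset.sum_congr rfl fun b _ => ?_
    rw [Matrix.smul_mul, Matrix.mul_smul, smul_smul]
    simp [hV]
  rw [h1]
  simp only [qc_conv h2, mul_smul, sub_smul, ite_smul, zero_smul, one_smul]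
  rw [← Finset.smul_sum, Finset.sum_sub_distrib]
  simp

theorem gs_move (V : E → Matrix (Fin n) (Fin n) ℂ) (P : Matrix (Fin n) (Fin n) ℂ) (l : E) (hl : l ≠ 0)
    (h : ∀ a, P * V a = V (l * a) * P) : P * gs V = qc E l • (gs V * P) := by
  unfold gs
  rw [Finset.mul_sum, Finset.sum_mul, Finset.smul_sum]
  refine Fintype.sum_equiv (Equiv.mulLeft₀ l hl) _ _ fun a => ?_
  simp only [Equiv.mulLeft₀_apply, Matrix.mul_smul, Matrix.smul_mul, h, smul_smul, map_mul]
  congr 1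
  linear_combination (- qc E a) * qc_mul_self l hl

theorem gs_mem (L : Subfield ℂ) (V : E → Matrix (Fin n) (Fin n) ℂ) (hV : ∀ a i j, V a i j ∈ L) (i j : Fin n) :
    gs V i j ∈ L := by
  unfold gs
  rw [Matrix.sum_apply]
  refine sum_mem fun a _ => ?_
  rw [Matrix.smul_apply, smul_eq_mul]
  refine mul_mem ?_ (hV a i j)
  by_cases h : a = 0
  · rw [h, MulChar.map_zero]; exact zero_mem _
  · rcases qc_cases a h with h | h <;> rw [h]
    · exact one_mem _
    · exact neg_mem (one_mem _)

end gauss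
end Paper

namespace Paper
namespace Cfg
variable {F : Type} [Field F] [Fintype F] {G : Type} [Group G] (c : Cfg F G)

theorem qcF_K (r : F) (h0 : r ≠ 0) (hr : c.cj r = r) : qc F r = 1 := by
  obtain ⟨g0, hg, ho⟩ := c.exists_gen
  obtain ⟨j, hj⟩ := c.Nm_gen_pow hg ho (Units.mk0 r h0) hr
  rw [qc_one_iff r h0]
  obtain ⟨m, hm⟩ : Even (c.q + 1) := c.q_odd.add_one
  refine ⟨((g0 ^ (m * j) : Fˣ) : F), ?_⟩
  rw [← Units.val_mul, ← pow_add, ← add_mul, ← hm, pow_mul, ← hj]; rfl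

theorem qcF_lam {g0 : Fˣ} (hg : ∀ x : Fˣ, ∃ j : ℕ, x = g0 ^ j) (ho : orderOf g0 = c.q ^ 2 - 1) :
    qc F (c.lam g0) = -1 := by
  refine qc_neg _ (c.lam_ne g0) ?_
  rintro ⟨y, hy⟩
  have hy0 : y ≠ 0 := by rintro rfl; exact c.lam_ne g0 (by rw [hy, mul_zero])
  obtain ⟨j, hj⟩ := hg (Units.mk0 y hy0)
  have h1 : g0 ^ 2 = g0 ^ (j + j + c.q) := by
    apply Units.ext
    rw [pow_add, pow_add, ← hj]
    rw [lam, c.cj_eq, div_eq_iff (by simp)] at hy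
    simpa using hy
  rw [pow_eq_pow_iff_modEq, ho] at h1
  have h2 : 2 ∣ c.q ^ 2 - 1 := by
    rw [c.q_sq]; exact Dvd.dvd.mul_right (even_iff_two_dvd.1 c.q_odd.add_one) _
  have h3 := h1.of_dvd h2
  obtain ⟨m, hm⟩ := c.q_odd
  unfold Nat.ModEq at h3
  omega

theorem qcK_Nm {g0 : Fˣ} (hg : ∀ x : Fˣ, ∃ j : ℕ, x = g0 ^ j) (ho : orderOf g0 = c.q ^ 2 - 1) :
    qc c.K (c.Nm g0) = -1 := by
  refine qc_neg _ (c.Nm_ne g0) ?_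
  rintro ⟨y, hy⟩
  have hy0 : (y : F) ≠ 0 := by
    intro h
    have : y = 0 := Subtype.ext h
    rw [this, mul_zero] at hy
    exact c.Nm_ne g0 hy
  obtain ⟨j, hj⟩ := c.Nm_gen_pow hg ho (Units.mk0 (y : F) hy0) (c.cj_K y)
  have h1 : g0 ^ (c.q + 1) = g0 ^ ((c.q + 1) * (j + j)) := by
    apply Units.ext
    rw [pow_mul, pow_add _ j j, ← hj]
    have := congrArg (fun x : c.K => (x : F)) hy
    simp only [c.Nm_eq, c.cj_eq] at this
    rw [pow_succ']
    simpa using this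
  rw [pow_eq_pow_iff_modEq, ho, c.q_sq] at h1
  have h3 : 1 ≡ j + j [MOD c.q - 1] := Nat.ModEq.mul_left_cancel' (c := c.q + 1) (by omega) (by rw [mul_one]; exact h1)
  obtain ⟨m, hm⟩ := c.q_odd
  have h4 := h3.of_dvd (show 2 ∣ c.q - 1 by omega)
  unfold Nat.ModEq at h4
  omega

theorem qcF_cj (a : F) : qc F (c.cj a) = qc F a := by
  rw [c.cj_eq, map_pow]
  by_cases h : a = 0
  · rw [h, MulChar.map_zero, zero_pow (by have := c.q_ge; omega)]
  · rcases qc_cases a h with h | h <;> rw [h]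
    · simp
    · exact c.q_odd.neg_one_pow

theorem qcF_sK (κ : F) (hκ : κ ≠ 0) : qc F (-c.sK κ) = 1 := by
  have hn : -c.sK κ ≠ 0 := by unfold sK; simp [hκ]
  rw [qc_one_iff _ hn]
  obtain ⟨m, hm⟩ := c.q_odd
  refine ⟨κ ^ m, ?_⟩
  rw [sK, neg_neg, c.cj_eq, hm, div_eq_iff hκ]; ring

theorem two_neK : (2 : c.K) ≠ 0 := by
  intro h
  exact c.two_ne (congrArg (fun x : c.K => (x : F)) h)

variable {n : ℕ} (R : G →* Matrix (Fin n) (Fin n) ℂ)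

/-- the Gauss operator -/
def Ga : Matrix (Fin n) (Fin n) ℂ := gs (c.v R) + gs (c.VZ R)

theorem eZ_expand : c.eZ R = (c.q : ℂ)⁻¹ • ∑ r, c.VZ R r := by
  unfold eZ fe avA
  rw [c.cardK]
  simp

theorem sumVZ : ∑ r, c.VZ R r = (c.q : ℂ) • c.eZ R := by
  rw [eZ_expand, smul_smul, mul_inv_cancel₀, one_smul]
  have := c.q_ge
  exact_mod_cast (by omega : c.q ≠ 0)

theorem sumv (h0 : c.e R 0 = 0) : ∑ a, c.v R a = 0 := by
  unfold e fe avA at h0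
  simp only [zero_mul, AddChar.map_zero_eq_one, neg_zero, mul_neg, one_smul] at h0
  exact (smul_eq_zero.1 h0).resolve_left (by simp)

theorem gv_eZ : gs (c.v R) * c.eZ R = gs (c.v R) := by
  unfold gs; rw [Finset.sum_mul]; simp only [Matrix.smul_mul, v_eZ]
theorem eZ_gv : c.eZ R * gs (c.v R) = gs (c.v R) := by
  unfold gs; rw [Finset.mul_sum]; simp only [Matrix.mul_smul, eZ_v]

theorem eZ_VZ (r : c.K) : c.eZ R * c.VZ R r = c.eZ R := by
  unfold eZ; rw [fe_right _ _ (c.VZ_add R)]; simp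

theorem qcK_sum : ∑ a, qc c.K a = 0 := MulChar.sum_eq_zero_of_ne_one (qc_ne_one c.two_neK)

theorem gz_eZ : gs (c.VZ R) * c.eZ R = 0 := by
  unfold gs; rw [Finset.sum_mul]; simp only [Matrix.smul_mul, VZ_eZ]
  rw [← Finset.sum_smul, qcK_sum, zero_smul]
theorem eZ_gz : c.eZ R * gs (c.VZ R) = 0 := by
  unfold gs; rw [Finset.mul_sum]; simp only [Matrix.mul_smul, eZ_VZ]
  rw [← Finset.sum_smul, qcK_sum, zero_smul]

theorem eZ_Ga : c.eZ R * c.Ga R = c.Ga R * c.eZ R := by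
  unfold Ga; rw [Matrix.mul_add, Matrix.add_mul, eZ_gv, gv_eZ, eZ_gz, gz_eZ]

/-- the sign `η(-1)` times `q` -/
def qs : ℂ := qc c.K (-1) * c.q

theorem Ga_sq (h0 : c.e R 0 = 0) : c.Ga R * c.Ga R = (c.q : ℂ) ^ 2 • c.eZ R + c.qs • (1 - c.eZ R) := by
  have h1 : gs (c.v R) * gs (c.VZ R) = 0 := by
    rw [← gv_eZ, Matrix.mul_assoc, eZ_gz, Matrix.mul_zero]
  have h2 : gs (c.VZ R) * gs (c.v R) = 0 := by
    rw [← eZ_gv, ← Matrix.mul_assoc, gz_eZ, Matrix.zero_mul]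
  unfold Ga
  rw [Matrix.mul_add, Matrix.add_mul, Matrix.add_mul, h1, h2, gs_sq c.two_ne _ (c.v_add R),
    gs_sq c.two_neK _ (c.VZ_add R), c.sumv R h0, c.sumVZ, c.v_zero, c.VZ_zero, c.cardF, c.cardK,
    c.qcF_K (-1) (by simp) (by simp)]
  simp only [qs, smul_sub, smul_smul]
  push_cast
  simp

theorem tau_Ga {g0 : Fˣ} (hg : ∀ x : Fˣ, ∃ j : ℕ, x = g0 ^ j) (ho : orderOf g0 = c.q ^ 2 - 1) :
    R (c.T g0) * c.Ga R = -(c.Ga R * R (c.T g0)) := by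
  unfold Ga
  rw [Matrix.mul_add, Matrix.add_mul, gs_move _ _ _ (c.lam_ne g0) (c.T_v R g0),
    gs_move _ _ _ (c.Nm_ne g0) (c.T_VZ R g0), c.qcF_lam hg ho, c.qcK_Nm hg ho]
  simp only [neg_smul, one_smul, neg_add]

theorem kU_Ga (r : c.Kˣ) : R (c.T (c.kU r)) * c.Ga R = c.Ga R * R (c.T (c.kU r)) := by
  unfold Ga
  rw [Matrix.mul_add, Matrix.add_mul, gs_move _ _ _ (c.lam_ne _) (c.T_v R _),
    gs_move _ _ _ (c.Nm_ne _) (c.T_VZ R _), c.Nm_kU, c.lam_kU, c.qcF_K _ (by simp) (c.cj_K _),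
    pow_two, map_mul, qc_mul_self _ (by simp), one_smul, one_smul]

theorem eD_Ga : c.eD R * c.Ga R = c.Ga R * c.eD R :=
  (avM_comm _ _ fun r => (c.kU_Ga R r).symm).symm

theorem smul_mem_L {L : Subfield ℂ} {m : ℂ} (hm : m ∈ L) {A : Matrix (Fin n) (Fin n) ℂ} (hA : ∀ i j, A i j ∈ L) :
    ∀ i j, (m • A) i j ∈ L := fun i j => by
  rw [Matrix.smul_apply]; exact mul_mem hm (hA i j)

theorem eZ_mem (L : Subfield ℂ) (hL : ∀ g i j, R g i j ∈ L) : ∀ i j, c.eZ R i j ∈ L := by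
  rw [eZ_expand]
  refine smul_mem_L (inv_mem (natCast_mem L _)) fun i j => ?_
  rw [Matrix.sum_apply]
  exact sum_mem fun r _ => hL _ i j

theorem Ga_mem (L : Subfield ℂ) (hL : ∀ g i j, R g i j ∈ L) : ∀ i j, c.Ga R i j ∈ L := fun i j => by
  unfold Ga
  rw [Matrix.add_apply]
  exact add_mem (gs_mem L _ (fun a => mul_mem_L L (hL _) (c.eZ_mem R L hL)) i j) (gs_mem L _ (fun a => hL _) i j)

theorem eD_mem (L : Subfield ℂ) (hL : ∀ g i j, R g i j ∈ L) : ∀ i j, c.eD R i j ∈ L := by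
  unfold eD avM
  refine smul_mem_L (inv_mem (natCast_mem L _)) fun i j => ?_
  rw [Matrix.sum_apply]
  exact sum_mem fun r _ => hL _ i j

section form
variable (B : Matrix (Fin n) (Fin n) ℂ) (s : F)

theorem eZ_B (hs : s * c.cj s = 1) (hB : ∀ g, (R g)ᵀ * B = B * R (c.st s g)) : (c.eZ R)ᵀ * B = B * c.eZ R := by
  rw [eZ_expand, Matrix.transpose_smul, Matrix.transpose_sum, Matrix.smul_mul, Matrix.mul_smul, Finset.sum_mul,
    Finset.mul_sum]
  congr 1
  refine Finset.sum_congr rfl fun r _ => ?_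
  unfold VZ
  rw [hB, c.st_u s hs]; simp

theorem v_B (hs : s * c.cj s = 1) (hB : ∀ g, (R g)ᵀ * B = B * R (c.st s g)) (a : F) :
    (c.v R a)ᵀ * B = B * c.v R (-s * c.cj a) := by
  unfold v
  rw [Matrix.transpose_mul, Matrix.mul_assoc, hB, c.st_u s hs, ← Matrix.mul_assoc, c.eZ_B R B s hs hB,
    Matrix.mul_assoc, ← c.u_eZ]

theorem Ga_B (hs : s * c.cj s = 1) (hB : ∀ g, (R g)ᵀ * B = B * R (c.st s g)) (hq : qc F (-s) = 1) :
    (c.Ga R)ᵀ * B = B * c.Ga R := by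
  unfold Ga
  rw [Matrix.transpose_add, Matrix.add_mul, Matrix.mul_add]
  have hs0 : -s ≠ 0 := by rintro h; rw [neg_eq_zero] at h; rw [h, zero_mul] at hs; exact zero_ne_one hs
  congr 1
  · unfold gs
    rw [Matrix.transpose_sum, Finset.sum_mul, Finset.mul_sum]
    let φ : F ≃ F := (Equiv.ofBijective c.cj ⟨c.cj.injective, fun x => ⟨c.cj x, c.cj_cj x⟩⟩).trans
      (Equiv.mulLeft₀ (-s) hs0)
    refine Fintype.sum_equiv φ _ _ fun a => ?_
    have h : φ a = -s * c.cj a := rfl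
    rw [h, Matrix.transpose_smul, Matrix.smul_mul, c.v_B R B s hs hB, Matrix.mul_smul, map_mul, hq, one_mul,
      c.qcF_cj]
  · unfold gs
    rw [Matrix.transpose_sum, Finset.sum_mul, Finset.mul_sum]
    refine Finset.sum_congr rfl fun r _ => ?_
    unfold VZ
    rw [Matrix.transpose_smul, Matrix.smul_mul, hB, c.st_u s hs]; simp

theorem eD_B (hs : s * c.cj s = 1) (hB : ∀ g, (R g)ᵀ * B = B * R (c.st s g)) : (c.eD R)ᵀ * B = B * c.eD R := by
  unfold eD avM
  rw [Matrix.transpose_smul, Matrix.transpose_sum, Matrix.smul_mul, Matrix.mul_smul, Finset.sum_mul,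
    Finset.mul_sum]
  congr 1
  refine Fintype.sum_equiv (Equiv.inv c.Kˣ) _ _ fun r => ?_
  rw [hB, c.st_T s hs]
  congr 3
  simp only [Equiv.inv_apply]
  have : Units.map c.cj.toMonoidHom (c.kU r) = c.kU r := Units.ext (c.cj_kU r)
  rw [this]
  exact (map_inv (Units.map c.K.subtype.toMonoidHom) r).symm

end form

end Cfg
end Paper

namespace Paper

theorem psi_sq_aux {n : ℕ} {Γ E D : Matrix (Fin n) (Fin n) ℂ} {x y : ℂ} (hE : E * E = E) (hD : D * D = D)
    (hED : E * D = D * E) (hDG : D * Γ = Γ * D) (hG : Γ * Γ = x • E + y • (1 - E)) :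
    (Γ * D + 1 - D) * (Γ * D + 1 - D) = (1 + (x - 1) • (D * E)) * (1 + (y - 1) • (D * (1 - E))) := by
  have h1 : Γ * D * (Γ * D) = x • (D * E) + y • (D * (1 - E)) := by
    rw [Matrix.mul_assoc, ← Matrix.mul_assoc D, hDG, Matrix.mul_assoc, hD, ← Matrix.mul_assoc, hG, Matrix.add_mul,
      Matrix.smul_mul, Matrix.smul_mul, hED, Matrix.sub_mul, hED]
    simp [Matrix.mul_sub]
  have h2 : D * E * (D * (1 - E)) = 0 := by
    rw [Matrix.mul_assoc, ← Matrix.mul_assoc E, hED, Matrix.mul_assoc, Matrix.mul_sub, hE, Matrix.mul_one, sub_self,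
      Matrix.mul_zero, Matrix.mul_zero]
  have h3 : Γ * D * D = Γ * D := by rw [Matrix.mul_assoc, hD]
  have h4 : D * (Γ * D) = Γ * D := by rw [← Matrix.mul_assoc, hDG, Matrix.mul_assoc, hD]
  have h5 : (Γ * D + 1 - D) * (Γ * D + 1 - D) = Γ * D * (Γ * D) + 1 - D := by
    simp only [Matrix.mul_sub, Matrix.mul_add, Matrix.sub_mul, Matrix.add_mul, Matrix.mul_one, Matrix.one_mul, h3, h4, hD]
    abel
  rw [h5, h1, Matrix.mul_add, Matrix.add_mul, Matrix.smul_mul, Matrix.mul_smul, Matrix.add_mul, Matrix.smul_mul, h2]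
  simp only [Matrix.mul_one, Matrix.one_mul, smul_zero, add_zero, sub_smul, one_smul, Matrix.mul_sub, smul_sub]
  abel

theorem gam_sq_aux {n : ℕ} {E : Matrix (Fin n) (Fin n) ℂ} {x y : ℂ} (hE : E * E = E) :
    x • E + y • (1 - E) = (1 + (x - 1) • E) * (1 + (y - 1) • (1 - E)) := by
  simp only [Matrix.mul_sub, Matrix.mul_add, Matrix.sub_mul, Matrix.add_mul, Matrix.mul_one, Matrix.one_mul,
    Matrix.smul_mul, Matrix.mul_smul, hE, sub_smul, smul_sub, one_smul, smul_smul, smul_add]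
  rw [mul_comm y x]
  abel

namespace Cfg
variable {F : Type} [Field F] [Fintype F] {G : Type} [Group G] (c : Cfg F G)
variable {n : ℕ} (R : G →* Matrix (Fin n) (Fin n) ℂ)

theorem qpos : (0 : ℝ) < c.q := by have := c.q_ge; exact_mod_cast (by omega : 0 < c.q)

theorem norm_qs : ‖c.qs‖ = c.q := by
  unfold qs
  rcases qc_cases (-1 : c.K) (by simp) with h | h <;> rw [h] <;> simp

theorem qs_ne : c.qs ≠ 0 := by
  rw [← norm_pos_iff, norm_qs]; exact c.qpos

theorem Ga_unit (h0 : c.e R 0 = 0) : IsUnit (c.Ga R).det := by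
  have h := congrArg Matrix.det (c.Ga_sq R h0)
  rw [gam_sq_aux (c.eZ_idem R), Matrix.det_mul, Matrix.det_mul] at h
  obtain ⟨k1, _, hk1⟩ := idem_nat _ (c.eZ_idem R)
  obtain ⟨k2, _, hk2⟩ := idem_nat _ (one_sub_idem (c.eZ_idem R))
  rw [hk1, hk2] at h
  rw [isUnit_iff_ne_zero]
  intro h1
  rw [h1, zero_mul] at h
  have hq : (c.q : ℂ) ≠ 0 := by exact_mod_cast c.qpos.ne'
  exact mul_ne_zero (pow_ne_zero _ (pow_ne_zero _ hq)) (pow_ne_zero _ c.qs_ne) h.symm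

/-- the corrected Gauss operator -/
def Ps : Matrix (Fin n) (Fin n) ℂ := c.Ga R * c.eD R + 1 - c.eD R

theorem Ps_det (h0 : c.e R 0 = 0) (b N1 : ℕ) (h1 : (c.eD R * c.eZ R).trace = b)
    (h2 : (c.eD R * (1 - c.eZ R)).trace = ((2 * N1 : ℕ) : ℂ)) : ‖(c.Ps R).det‖ = (c.q : ℝ) ^ (b + N1) := by
  have h := congrArg Matrix.det (psi_sq_aux (c.eZ_idem R) (c.eD_idem R) (c.eZ_eD R) (c.eD_Ga R) (c.Ga_sq R h0))
  rw [Matrix.det_mul, Matrix.det_mul] at h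
  obtain ⟨k1, hk1', hk1⟩ := idem_nat _ (mul_idem (c.eD_idem R) (c.eZ_idem R) (c.eZ_eD R).symm)
  obtain ⟨k2, hk2', hk2⟩ := idem_nat _ (mul_idem (c.eD_idem R) (one_sub_idem (c.eZ_idem R))
    (by rw [Matrix.mul_sub, Matrix.sub_mul, c.eZ_eD]; simp))
  rw [h1] at hk1'
  rw [h2] at hk2'
  have e1 : b = k1 := by exact_mod_cast hk1'
  have e2 : 2 * N1 = k2 := by exact_mod_cast hk2'
  rw [hk1, hk2, ← e1, ← e2] at h
  have h3 := congrArg norm h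
  simp only [norm_mul, norm_pow, norm_qs, Complex.norm_natCast] at h3
  change ‖(c.Ps R).det‖ * ‖(c.Ps R).det‖ = _ at h3
  have h4 : ‖(c.Ps R).det‖ ^ 2 = ((c.q : ℝ) ^ (b + N1)) ^ 2 := by
    rw [pow_two, h3]; ring
  exact (pow_left_inj₀ (norm_nonneg _) (pow_nonneg c.qpos.le _) (by norm_num)).1 h4

/-- the element `N(g₀)⁻¹` of the small torus -/
def nn (g0 : Fˣ) : c.Kˣ := (Units.mk0 (c.Nm g0) (c.Nm_ne g0))⁻¹

theorem kU_nn (g0 : Fˣ) : c.kU (c.nn g0) = (g0 ^ (c.q + 1))⁻¹ := by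
  have h : c.kU (c.nn g0) = (c.kU (Units.mk0 (c.Nm g0) (c.Nm_ne g0)))⁻¹ :=
    (map_inv (Units.map c.K.subtype.toMonoidHom) _)
  rw [h]
  congr 1
  apply Units.ext
  rw [c.kU_val, Units.val_mk0, c.Nm_eq, c.cj_eq, pow_succ']
  simp

/-- the commuting factor -/
def Yo (g0 : Fˣ) : Matrix (Fin n) (Fin n) ℂ := 1 - R (c.T (c.kU (c.nn g0))) + c.eD R

theorem kU_eD (r : c.Kˣ) : R (c.T (c.kU r)) * c.eD R = c.eD R :=
  avM_left (fun r : c.Kˣ => R (c.T (c.kU r))) (c.eD_mul R) r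

theorem Yo_ne {g0 : Fˣ} (hg : ∀ x : Fˣ, ∃ j : ℕ, x = g0 ^ j) (ho : orderOf g0 = c.q ^ 2 - 1) :
    (c.Yo R g0).det ≠ 0 := by
  intro h
  obtain ⟨x, hx0, hx⟩ := Matrix.exists_mulVec_eq_zero_iff.2 h
  have hDY : c.eD R * c.Yo R g0 = c.eD R := by
    unfold Yo
    rw [Matrix.mul_add, Matrix.mul_sub, ← c.T_eD, c.kU_eD, c.eD_idem]; simp
  have h1 : c.eD R *ᵥ x = 0 := by
    rw [← hDY, ← Matrix.mulVec_mulVec, hx, Matrix.mulVec_zero]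
  have h2 : R (c.T (c.kU (c.nn g0))) *ᵥ x = x := by
    unfold Yo at hx
    rw [Matrix.add_mulVec, h1, add_zero, Matrix.sub_mulVec, Matrix.one_mulVec, sub_eq_zero] at hx
    exact hx.symm
  have h3 : ∀ j : ℕ, R (c.T (c.kU (c.nn g0 ^ j))) *ᵥ x = x := by
    intro j
    induction j with
    | zero => simp [kU]
    | succ j ih => rw [pow_succ, c.eD_mul, ← Matrix.mulVec_mulVec, h2, ih]
  have h4 : ∀ r : c.Kˣ, R (c.T (c.kU r)) *ᵥ x = x := by
    intro r
    obtain ⟨j, hj⟩ := c.Nm_gen_pow hg ho (c.kU r⁻¹) (c.cj_kU _)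
    have : r = c.nn g0 ^ j := by
      have h5 : c.kU r = c.kU (c.nn g0 ^ j) := by
        have e1 : c.kU r = (c.kU r⁻¹)⁻¹ := by
          show _ = ((Units.map c.K.subtype.toMonoidHom) r⁻¹)⁻¹
          rw [← map_inv, inv_inv]; rfl
        have e2 : c.kU (c.nn g0 ^ j) = c.kU (c.nn g0) ^ j := map_pow (Units.map c.K.subtype.toMonoidHom) _ _
        rw [e1, hj, e2, c.kU_nn, inv_pow]
      apply Units.ext
      apply Subtype.ext
      exact congrArg Units.val h5
    rw [this]; exact h3 j
  have h5 : c.eD R *ᵥ x = x := by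
    unfold eD avM
    rw [Matrix.smul_mulVec, Matrix.sum_mulVec]
    simp only [h4]
    rw [Finset.sum_const, Finset.card_univ, ← Nat.cast_smul_eq_nsmul ℂ, smul_smul, inv_mul_cancel₀, one_smul]
    exact_mod_cast Fintype.card_ne_zero
  exact hx0 (h5.symm.trans h1)

theorem tau_star (s : F) (hs : s * c.cj s = 1) (g0 : Fˣ) :
    c.st s (c.T g0) = c.T g0 * c.T (c.kU (c.nn g0)) := by
  rw [c.st_T s hs, ← map_mul, c.kU_nn]
  congr 1
  have : Units.map c.cj.toMonoidHom g0 = g0 ^ c.q := Units.ext (by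
    show c.cj g0 = _; rw [c.cj_eq]; simp)
  rw [this, pow_succ, _root_.mul_inv_rev, mul_inv_cancel_left]

theorem Xo_skew {B : Matrix (Fin n) (Fin n) ℂ} {s : F} (hs : s * c.cj s = 1) (hBs : Bᵀ = B)
    (hB : ∀ g, (R g)ᵀ * B = B * R (c.st s g)) (hq : qc F (-s) = 1)
    {g0 : Fˣ} (hg : ∀ x : Fˣ, ∃ j : ℕ, x = g0 ^ j) (ho : orderOf g0 = c.q ^ 2 - 1) :
    (B * (R (c.T g0) * c.Yo R g0 * c.Ps R))ᵀ = -(B * (R (c.T g0) * c.Yo R g0 * c.Ps R)) := by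
  set P := R (c.T g0) with hP
  set N := R (c.T (c.kU (c.nn g0))) with hN
  set D := c.eD R with hD
  set Γ := c.Ga R with hΓ
  have hND : N * D = D := c.kU_eD R _
  have hDN : D * N = D := by rw [hD, ← c.T_eD]; exact hND
  have hNG : N * Γ = Γ * N := c.kU_Ga R _
  have hDG : D * Γ = Γ * D := c.eD_Ga R
  have hDD : D * D = D := c.eD_idem R
  have hPD : P * D = D * P := c.T_eD R _
  have hPG : P * Γ = -(Γ * P) := c.tau_Ga R hg ho
  have hYP : c.Yo R g0 * c.Ps R = 1 - N + Γ * D := by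
    show (1 - N + D) * (Γ * D + 1 - D) = _
    have a1 : N * (Γ * D) = Γ * D := by rw [← Matrix.mul_assoc, hNG, Matrix.mul_assoc, hND]
    have a2 : D * (Γ * D) = Γ * D := by rw [← Matrix.mul_assoc, hDG, Matrix.mul_assoc, hDD]
    simp only [Matrix.mul_sub, Matrix.mul_add, Matrix.sub_mul, Matrix.add_mul, Matrix.mul_one, Matrix.one_mul,
      a1, a2, hDD, hND]
    abel
  rw [Matrix.mul_assoc P, hYP]
  have hPB : Pᵀ * B = B * (P * N) := by rw [hP, hB, c.tau_star s hs, map_mul]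
  have hDB : Dᵀ * B = B * D := c.eD_B R B s hs hB
  have hGB : Γᵀ * B = B * Γ := c.Ga_B R B s hs hB hq
  have hPNB : (P * N)ᵀ * B = B * P := by
    rw [hP, hN, ← map_mul, ← c.tau_star s hs, hB, c.st_st s hs]
  have hexp : P * (1 - N + Γ * D) = P - P * N + P * (Γ * D) := by
    rw [Matrix.mul_add, Matrix.mul_sub, Matrix.mul_one]
  rw [hexp, Matrix.transpose_mul, hBs, Matrix.transpose_add, Matrix.transpose_sub, Matrix.add_mul, Matrix.sub_mul,
    hPB, hPNB]
  have h7 : (P * (Γ * D))ᵀ * B = -(B * (P * (Γ * D))) := by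
    rw [Matrix.transpose_mul, Matrix.transpose_mul, Matrix.mul_assoc, hPB, Matrix.mul_assoc, ← Matrix.mul_assoc Γᵀ,
      hGB, Matrix.mul_assoc, ← Matrix.mul_assoc Dᵀ, hDB, Matrix.mul_assoc, ← Matrix.mul_neg]
    congr 1
    rw [← Matrix.mul_assoc P, hPG, Matrix.neg_mul, neg_neg]
    have h8 : D * (Γ * (P * N)) = Γ * P * D := by
      rw [← Matrix.mul_assoc D, hDG, Matrix.mul_assoc, ← Matrix.mul_assoc D, ← hPD, Matrix.mul_assoc P, hDN,
        Matrix.mul_assoc]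
    rw [← h8]
  rw [h7]
  simp only [Matrix.mul_sub, Matrix.mul_add]
  abel

end Cfg
end Paper

namespace Paper

theorem final_arith (L : Subfield ℂ) (q : ℕ) (hq : 0 < q) (hdet cB y w cc dd : ℂ) (m k : ℕ) (par : Prop) [Decidable par]
    (hpar : Even k ↔ par) (hy : y ∈ L) (hw : w ∈ L) (hw0 : w ≠ 0) (hcc : cc ∈ L) (hc0 : cc ≠ 0)
    (hcr : (starRingEnd ℂ) cc = cc) (hH : hdet * cc ^ (2 * m) = (‖cB‖ : ℂ)) (hd0 : hdet ≠ 0)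
    (hn : ‖cB‖ * (‖w‖ ^ 2 * (q : ℝ) ^ k) = ‖y‖ ^ 2) (hdd : dd = if par then 1 else (q : ℂ)) :
    ∃ z ∈ L, z ≠ 0 ∧ hdet = dd * (z * (starRingEnd ℂ) z) := by
  have hqc : (q : ℂ) ≠ 0 := by exact_mod_cast hq.ne'
  have hn' : (‖cB‖ : ℂ) * (w * (starRingEnd ℂ) w * (q : ℂ) ^ k) = y * (starRingEnd ℂ) y := by
    rw [Complex.mul_conj', Complex.mul_conj']
    exact_mod_cast congrArg (Complex.ofReal) hn
  have hwc : (starRingEnd ℂ) w ≠ 0 := by simpa using hw0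
  suffices h : ∃ z ∈ L, hdet = dd * (z * (starRingEnd ℂ) z) by
    obtain ⟨z, hz, h1⟩ := h
    refine ⟨z, hz, ?_, h1⟩
    rintro rfl
    simp at h1
    exact hd0 h1
  rw [← hH] at hn'
  rcases Nat.even_or_odd k with hk | hk
  · have := hpar.1 hk
    rw [if_pos this] at hdd
    obtain ⟨h, rfl⟩ := hk
    refine ⟨y / (w * (q : ℂ) ^ h * cc ^ m), div_mem hy (mul_mem (mul_mem hw (pow_mem (natCast_mem L _) _))
      (pow_mem hcc _)), ?_⟩
    simp only [map_div₀, map_mul, map_pow, Complex.conj_natCast, hcr, hdd]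
    field_simp
    rw [← hn']; ring
  · have : ¬ par := fun h => (Nat.not_even_iff_odd.2 hk) (hpar.2 h)
    rw [if_neg this] at hdd
    obtain ⟨h, rfl⟩ := hk
    refine ⟨y / (w * (q : ℂ) ^ (h + 1) * cc ^ m), div_mem hy (mul_mem (mul_mem hw (pow_mem (natCast_mem L _) _))
      (pow_mem hcc _)), ?_⟩
    simp only [map_div₀, map_mul, map_pow, Complex.conj_natCast, hcr, hdd]
    field_simp
    rw [mul_assoc (q : ℂ), ← hn']; ring

namespace Cfg
variable {F : Type} [Field F] [Fintype F] {G : Type} [Group G] (c : Cfg F G)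
variable {n : ℕ} (R : G →* Matrix (Fin n) (Fin n) ℂ)

theorem main_disc [Fintype G] (hR : Irr R) (g b : ℕ) (hd : c.Deg n g b) (L : Subfield ℂ)
    (hLc : ∀ x ∈ L, (starRingEnd ℂ) x ∈ L) (hL : ∀ g i j, R g i j ∈ L)
    (H : Matrix (Fin n) (Fin n) ℂ) (hHL : ∀ i j, H i j ∈ L) (hu : IsUnit H.det) (hH : Hᴴ = H)
    (hinv : ∀ g, (R g)ᴴ * H * R g = H) :
    ∃ z ∈ L, z ≠ 0 ∧ (-1 : ℂ) ^ (n * (n - 1) / 2) * H.det =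
      (if c.q % 4 = 3 then 1 else (c.q : ℂ)) * (z * (starRingEnd ℂ) z) := by
  have hq3 := c.q_ge
  obtain ⟨m, hm⟩ : ∃ m, n = 4 * m := by
    obtain ⟨x, hx⟩ := c.q_odd
    obtain ⟨-, -, h⟩ := hd
    refine ⟨b * (x + 1) * x, ?_⟩
    rw [h, hx]
    simp only [Nat.add_sub_cancel]
    ring
  have hsign : (-1 : ℂ) ^ (n * (n - 1) / 2) = 1 := by
    apply Even.neg_one_pow
    rw [hm, show 4 * m * (4 * m - 1) / 2 = 2 * (m * (4 * m - 1)) by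
      rw [show 4 * m * (4 * m - 1) = 2 * (2 * (m * (4 * m - 1))) by ring]; omega]
    exact even_two_mul _
  rw [hsign, one_mul]
  have h0 := c.e0_zero R hR g b hd
  obtain ⟨κ, hκ⟩ : ∃ κ, c.e R κ ≠ 0 := by
    by_contra hcon
    push Not at hcon
    have h1 := c.dZ_eq R hR g b hd
    rw [← c.e_sum] at h1
    simp only [hcon, Finset.sum_const_zero, Matrix.trace_zero] at h1
    have hb : b ≠ 0 := by
      rintro rfl
      obtain ⟨-, h2, -⟩ := hd
      omega
    exact mul_ne_zero c.q1_ne (by exact_mod_cast hb) h1.symm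
  have hκ0 : κ ≠ 0 := by rintro rfl; exact hκ h0
  have hs := c.sK_mul κ hκ0
  obtain ⟨-, B0, hB0, hB0ne, hB0s⟩ := c.e_gel R hR κ hκ0 hκ
  obtain ⟨B, hB, hBu, hBs, hBL⟩ := exists_L_form hR L hL _ (c.st_mul _ hs) (c.st_st _ hs) B0 hB0 hB0ne hB0s
  obtain ⟨cc, hccL, hcc0, hccr, hccd⟩ := det_H_B hR L hLc m hm H hHL hu hH hinv _ (c.st_st _ hs) B hBL hBu hBs hB
  obtain ⟨g0, hg, ho⟩ := c.exists_gen
  obtain ⟨N1, hN1, hpar⟩ := c.N1_exists R hR g b hd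
  have hGL := c.Ga_mem R L hL
  have hDL := c.eD_mem R L hL
  have h1L : ∀ i j, (1 : Matrix (Fin n) (Fin n) ℂ) i j ∈ L := fun i j => by
    rw [Matrix.one_apply]; split_ifs
    · exact one_mem _
    · exact zero_mem _
  have hYL : ∀ i j, c.Yo R g0 i j ∈ L := fun i j => add_mem (sub_mem (h1L i j) (hL _ i j)) (hDL i j)
  have hPL : ∀ i j, c.Ps R i j ∈ L := fun i j =>
    sub_mem (add_mem (mul_mem_L L hGL hDL i j) (h1L i j)) (hDL i j)
  obtain ⟨y, hyL, hy⟩ := det_skew_sq_L L _ (mul_mem_L L hBL (mul_mem_L L (mul_mem_L L (hL _) hYL) hPL))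
    (c.Xo_skew R hs hBs hB (c.qcF_sK κ hκ0) hg ho)
  have hRu : IsUnit (R (c.T g0)).det := by
    rw [isUnit_iff_ne_zero, ← norm_pos_iff, det_norm_one]; norm_num
  have hcommA : c.Yo R g0 * c.Ga R = c.Ga R * c.Yo R g0 := by
    unfold Yo
    rw [Matrix.add_mul, Matrix.mul_add, Matrix.sub_mul, Matrix.mul_sub, c.kU_Ga, c.eD_Ga]; simp
  have hcommC : c.Yo R g0 * R (c.T g0) = R (c.T g0) * c.Yo R g0 := by
    unfold Yo
    rw [Matrix.add_mul, Matrix.mul_add, Matrix.sub_mul, Matrix.mul_sub, c.T_eD, ← map_mul, ← map_mul, ← map_mul,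
      ← map_mul, mul_comm g0]; simp
  obtain ⟨w, hwL, hw⟩ := det_sq_of_anticomm L (c.Yo R g0) (R (c.T g0)) (c.Ga R) hYL hRu (c.Ga_unit R h0)
    (c.tau_Ga R hg ho) hcommC hcommA (by rw [hm]; exact ⟨2 * m, by ring⟩)
  have hw0 : w ≠ 0 := by
    rintro rfl
    exact c.Yo_ne R hg ho (by rw [hw]; simp)
  refine final_arith L c.q (by omega) H.det B.det y w cc _ m (b + N1) (c.q % 4 = 3) hpar hyL hwL hw0 hccL hcc0 hccr
    hccd hu.ne_zero ?_ rfl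
  have := congrArg norm hy
  rw [Matrix.det_mul, Matrix.det_mul, Matrix.det_mul, hw] at this
  simp only [norm_mul, norm_pow] at this
  rw [det_norm_one, c.Ps_det R h0 b N1 (c.tr_eD_eZ R hR g b hd) hN1, one_mul] at this
  exact this

end Cfg
end Paper

namespace Paper

section mats
variable {F : Type} [Field F] (cj : F →+* F)

/-- the antidiagonal matrix -/
def oM (F : Type) [Field F] : Matrix (Fin 3) (Fin 3) F := !![0, 0, 1; 0, 1, 0; 1, 0, 0]

theorem Om_eq : Om F = oM F := by
  ext i j
  fin_cases i <;> fin_cases j <;> simp [Om, oM]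

/-- unitarity -/
def IsU (M : Matrix (Fin 3) (Fin 3) F) : Prop := (M.map cj)ᵀ * oM F * M = oM F

theorem isU_iff (M : Matrix (Fin 3) (Fin 3) F) : IsU cj M ↔ ∀ i j,
    cj (M 0 i) * M 2 j + cj (M 1 i) * M 1 j + cj (M 2 i) * M 0 j = oM F i j := by
  have h : ∀ i j, ((M.map cj)ᵀ * oM F * M) i j =
      cj (M 0 i) * M 2 j + cj (M 1 i) * M 1 j + cj (M 2 i) * M 0 j := by
    intro i j
    simp only [Matrix.mul_apply, Fin.sum_univ_three, oM, Matrix.transpose_apply, Matrix.map_apply]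
    simp
    ring
  unfold IsU
  constructor
  · intro h1 i j
    rw [← h, h1]
  · intro h1
    ext i j
    rw [h, h1]

theorem oM_sq : oM F * oM F = 1 := by
  ext i j
  fin_cases i <;> fin_cases j <;> simp [oM, Matrix.mul_apply, Fin.sum_univ_three]

/-- the other form of unitarity -/
theorem isU_right (M : Matrix (Fin 3) (Fin 3) F) (h : IsU cj M) : M * oM F * (M.map cj)ᵀ = oM F := by
  have h1 : (oM F * (M.map cj)ᵀ * oM F) * M = 1 := by
    have : oM F * ((M.map cj)ᵀ * oM F * M) = oM F * oM F := congrArg _ h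
    rw [oM_sq] at this
    rw [← this]; simp only [Matrix.mul_assoc]
  have h2 := mul_eq_one_comm.1 h1
  have h3 : M * (oM F * (M.map cj)ᵀ * oM F) * oM F = oM F := by rw [h2, Matrix.one_mul]
  simp only [Matrix.mul_assoc, oM_sq, Matrix.mul_one] at h3 ⊢
  exact h3

theorem isU_right_iff (M : Matrix (Fin 3) (Fin 3) F) (h : IsU cj M) (i j : Fin 3) :
    M i 0 * cj (M j 2) + M i 1 * cj (M j 1) + M i 2 * cj (M j 0) = oM F i j := by
  rw [← isU_right cj M h]
  simp only [Matrix.mul_apply, Fin.sum_univ_three, oM, Matrix.transpose_apply, Matrix.map_apply]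
  simp
  ring

/-- unipotent matrices -/
def uM (a b : F) : Matrix (Fin 3) (Fin 3) F := !![1, a, b; 0, 1, -cj a; 0, 0, 1]
/-- diagonal matrices -/
def tM (t : F) : Matrix (Fin 3) (Fin 3) F := !![t, 0, 0; 0, cj t / t, 0; 0, 0, (cj t)⁻¹]
/-- the Weyl element -/
def wM (F : Type) [Field F] : Matrix (Fin 3) (Fin 3) F := !![0, 0, 1; 0, -1, 0; 1, 0, 0]
/-- the antiautomorphism -/
def sM (s : F) (M : Matrix (Fin 3) (Fin 3) F) : Matrix (Fin 3) (Fin 3) F :=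
  !![M 2 2, s * M 1 2, M 0 2; s⁻¹ * M 2 1, M 1 1, s⁻¹ * M 0 1; M 2 0, s * M 1 0, M 0 0]

theorem uM_det (a b : F) : (uM cj a b).det = 1 := by
  rw [Matrix.det_fin_three]; simp [uM]
theorem tM_det (t : F) (ht : t ≠ 0) : (tM cj t).det = 1 := by
  have : cj t ≠ 0 := by simpa using ht
  rw [Matrix.det_fin_three]; simp [tM]; field_simp
theorem wM_det : (wM F).det = 1 := by
  rw [Matrix.det_fin_three]; simp [wM]
theorem sM_det (s : F) (hs : s ≠ 0) (M : Matrix (Fin 3) (Fin 3) F) : (sM s M).det = M.det := by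
  rw [Matrix.det_fin_three, Matrix.det_fin_three]; simp [sM]; field_simp; ring

theorem uM_isU (hcj : ∀ x, cj (cj x) = x) (a b : F) (h : b + cj b + a * cj a = 0) : IsU cj (uM cj a b) := by
  rw [isU_iff]
  intro i j
  fin_cases i <;> fin_cases j <;> simp [uM, oM, hcj]
  linear_combination h
theorem tM_isU (hcj : ∀ x, cj (cj x) = x) (t : F) (ht : t ≠ 0) : IsU cj (tM cj t) := by
  have : cj t ≠ 0 := by simpa using ht
  rw [isU_iff]
  intro i j
  fin_cases i <;> fin_cases j <;> simp [tM, oM, hcj] <;> field_simp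
theorem wM_isU : IsU cj (wM F) := by
  rw [isU_iff]
  intro i j
  fin_cases i <;> fin_cases j <;> simp [wM, oM]

theorem sM_mul (s : F) (hs : s ≠ 0) (M N : Matrix (Fin 3) (Fin 3) F) : sM s (M * N) = sM s N * sM s M := by
  ext i j
  fin_cases i <;> fin_cases j <;> simp [sM, Matrix.mul_apply, Fin.sum_univ_three] <;> field_simp <;> ring

theorem sM_sM (s : F) (hs : s ≠ 0) (M : Matrix (Fin 3) (Fin 3) F) : sM s (sM s M) = M := by
  ext i j
  fin_cases i <;> fin_cases j <;> simp [sM, hs]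

theorem sM_isU (s : F) (hs : s * cj s = 1) (M : Matrix (Fin 3) (Fin 3) F) (h : IsU cj M) : IsU cj (sM s M) := by
  have hs0 : s ≠ 0 := by rintro rfl; simp at hs
  have hcs : cj s = s⁻¹ := eq_inv_of_mul_eq_one_right hs
  have h1 := isU_right cj M h
  have h2 : ((sM s M).map cj)ᵀ = sM s ((M.map cj)ᵀ) := by
    ext i j
    fin_cases i <;> fin_cases j <;> simp [sM, hcs]
  have h3 : sM s (oM F) = oM F := by
    ext i j
    fin_cases i <;> fin_cases j <;> simp [sM, oM]
  unfold IsU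
  have h4 := congrArg (sM s) h1
  rw [sM_mul s hs0, sM_mul s hs0, h3, ← Matrix.mul_assoc] at h4
  rw [h2]; exact h4

theorem uM_mul (a b a' b' : F) : uM cj a b * uM cj a' b' = uM cj (a + a') (b + b' - a * cj a') := by
  ext i j
  fin_cases i <;> fin_cases j <;> simp [uM, Matrix.mul_apply, Fin.sum_univ_three] <;> ring

theorem tM_uM (hcj : ∀ x, cj (cj x) = x) (t a b : F) (ht : t ≠ 0) :
    tM cj t * uM cj a b = uM cj (t ^ 2 / cj t * a) (t * cj t * b) * tM cj t := by
  have : cj t ≠ 0 := by simpa using ht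
  ext i j
  fin_cases i <;> fin_cases j <;> simp [uM, tM, Matrix.mul_apply, Fin.sum_univ_three, hcj] <;> field_simp

theorem tM_mul (s t : F) : tM cj (s * t) = tM cj s * tM cj t := by
  ext i j
  fin_cases i <;> fin_cases j <;> simp [tM, Matrix.mul_apply, Fin.sum_univ_three] <;> ring

theorem tM_one : tM cj 1 = 1 := by
  ext i j
  fin_cases i <;> fin_cases j <;> simp [tM]

theorem sM_uM (hcj : ∀ x, cj (cj x) = x) (s : F) (hs : s * cj s = 1) (a b : F) :
    sM s (uM cj a b) = uM cj (-s * cj a) b := by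
  have hs0 : s ≠ 0 := by rintro rfl; simp at hs
  have hcs : cj s = s⁻¹ := eq_inv_of_mul_eq_one_right hs
  ext i j
  fin_cases i <;> fin_cases j <;> simp [uM, sM, hcj, hcs]

theorem sM_tM (hcj : ∀ x, cj (cj x) = x) (s t : F) (ht : t ≠ 0) : sM s (tM cj t) = tM cj (cj t)⁻¹ := by
  have : cj t ≠ 0 := by simpa using ht
  ext i j
  fin_cases i <;> fin_cases j <;> simp [tM, sM, hcj]
  field_simp

theorem sM_wtM (s t : F) : sM s (wM F * tM cj t) = wM F * tM cj t := by
  ext i j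
  fin_cases i <;> fin_cases j <;> simp [tM, sM, wM, Matrix.mul_apply, Fin.sum_univ_three]

theorem tri (hcj : ∀ x, cj (cj x) = x) (M : Matrix (Fin 3) (Fin 3) F) (h : IsU cj M) (hd : M.det = 1) (h0 : M 2 0 = 0) :
    ∃ a b t : F, t ≠ 0 ∧ b + cj b + a * cj a = 0 ∧ M = uM cj a b * tM cj t := by
  have hl := (isU_iff cj M).1 h
  have hr := isU_right_iff cj M h
  have h10 : M 1 0 = 0 := by
    have := hl 0 0
    simpa [h0, oM] using this
  have h21 : M 2 1 = 0 := by
    have := hr 2 2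
    simpa [h0, oM] using this
  rw [Matrix.det_fin_three] at hd
  simp only [h0, h10, h21, mul_zero, zero_mul, sub_zero, add_zero] at hd
  have e02 := hl 0 2
  have e12 := hl 1 2
  have e22 := hl 2 2
  simp [oM, h0, h10, h21] at e02 e12 e22
  have ht : M 0 0 ≠ 0 := by intro h; simp [h] at hd
  have hct : cj (M 0 0) ≠ 0 := by simpa using ht
  have e5 : M 2 2 = (cj (M 0 0))⁻¹ := by exact eq_inv_of_mul_eq_one_right e02
  have e4 : M 1 1 = cj (M 0 0) / M 0 0 := by
    rw [e5] at hd
    field_simp at hd ⊢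
    linear_combination hd
  set t := M 0 0
  have e6 : M 1 2 = - cj (M 0 1 * t / cj t) * (cj t)⁻¹ := by
    rw [e4, e5, map_div₀, hcj] at e12
    simp only [map_div₀, map_mul, hcj]
    field_simp at e12 ⊢
    linear_combination e12
  refine ⟨M 0 1 * t / cj t, M 0 2 * cj t, t, ht, ?_, ?_⟩
  · rw [e6, e5] at e22
    simp only [map_div₀, map_mul, hcj, map_neg, map_inv₀] at e22 ⊢
    field_simp at e22 ⊢
    linear_combination e22
  · ext i j
    fin_cases i <;> fin_cases j <;> simp [uM, tM, Matrix.mul_apply, Fin.sum_univ_three, h0, h10, h21, e4, e5]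
    · rfl
    · field_simp
    · field_simp
    · rw [e6]; simp
end mats
end Paper

namespace Paper

section inst
set_option linter.unusedSectionVars false
variable (p k : ℕ) (F : Type) [Field F] [Fintype F] [ExpChar F p]

/-- conjugation -/
def cjF : F →+* F := iterateFrobenius F p k

theorem mem_SU3 (g : Matrix.SpecialLinearGroup (Fin 3) F) : g ∈ SU3 p k F ↔ IsU (cjF p k F) g.val := by
  unfold IsU
  rw [← Om_eq]
  rfl

/-- constructor -/
def mkS (M : Matrix (Fin 3) (Fin 3) F) (hd : M.det = 1) (h : IsU (cjF p k F) M) : ↥(SU3 p k F) :=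
  ⟨⟨M, hd⟩, (mem_SU3 p k F _).2 h⟩

variable {p k F}

/-- underlying matrix -/
def mt (g : ↥(SU3 p k F)) : Matrix (Fin 3) (Fin 3) F := g.val.val

theorem mt_ext {g h : ↥(SU3 p k F)} (e : mt g = mt h) : g = h := Subtype.ext (Subtype.ext e)
theorem mt_mul (g h : ↥(SU3 p k F)) : mt (g * h) = mt g * mt h := rfl
theorem mt_one : mt (1 : ↥(SU3 p k F)) = 1 := rfl
theorem mt_mk (M : Matrix (Fin 3) (Fin 3) F) (hd : M.det = 1) (h : IsU (cjF p k F) M) : mt (mkS p k F M hd h) = M := rfl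
theorem mt_det (g : ↥(SU3 p k F)) : (mt g).det = 1 := g.val.2
theorem mt_isU (g : ↥(SU3 p k F)) : IsU (cjF p k F) (mt g) := (mem_SU3 p k F _).1 g.2

variable (p k F)

/-- fixed field -/
def KF : Subfield F := RingHom.eqLocusField (cjF p k F) (RingHom.id F)

theorem mem_KF (x : F) : x ∈ KF p k F ↔ cjF p k F x = x := Iff.rfl

theorem cjF_eq (x : F) : cjF p k F x = x ^ (p ^ k) := iterateFrobenius_def p k x

theorem cjF_cj (hF : Fintype.card F = (p ^ k) ^ 2) (x : F) : cjF p k F (cjF p k F x) = x := by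
  rw [cjF_eq, cjF_eq, ← pow_mul, ← pow_two, ← hF, FiniteField.pow_card]

theorem exists_eps (hF : Fintype.card F = (p ^ k) ^ 2) (hq : 3 ≤ p ^ k) :
    ∃ e : F, e ≠ 0 ∧ cjF p k F e = -e := by
  obtain ⟨g, hg⟩ := IsCyclic.exists_generator (α := Fˣ)
  have ho : orderOf g = (p ^ k) ^ 2 - 1 := by
    classical
    rw [orderOf_eq_card_of_forall_mem_zpowers hg, Nat.card_eq_fintype_card, Fintype.card_units, hF]
  refine ⟨g - cjF p k F g, ?_, ?_⟩
  · intro h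
    rw [sub_eq_zero, cjF_eq] at h
    have h1 : g ^ 1 = g ^ (p ^ k) := Units.ext (by simpa using h)
    rw [pow_eq_pow_iff_modEq, ho] at h1
    have h3 := (Nat.modEq_iff_dvd' (by omega)).1 h1
    have h4 := Nat.le_of_dvd (by omega) h3
    have : (p ^ k) ^ 2 = p ^ k * p ^ k := pow_two _
    nlinarith [Nat.sub_add_cancel (show 1 ≤ (p ^ k) ^ 2 by nlinarith), Nat.sub_add_cancel (show 1 ≤ p ^ k by omega)]
  · rw [map_sub, cjF_cj p k F hF]; ring

/-- the upper right entry -/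
def bE (e a r : F) : F := -(a * cjF p k F a) / 2 + e * r

theorem bE_cond (hF : Fintype.card F = (p ^ k) ^ 2) (h2 : (2 : F) ≠ 0) (e : F) (he : cjF p k F e = -e) (a : F)
    (r : KF p k F) : bE p k F e a r + cjF p k F (bE p k F e a r) + a * cjF p k F a = 0 := by
  unfold bE
  have hr : cjF p k F (r : F) = r := r.2
  simp only [map_add, map_div₀, map_neg, map_mul, cjF_cj p k F hF, he, hr, map_ofNat]
  field_simp
  ring

/-- unipotent elements -/
def uS (hF : Fintype.card F = (p ^ k) ^ 2) (h2 : (2 : F) ≠ 0) (e : F) (he : cjF p k F e = -e) (a : F)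
    (r : KF p k F) : ↥(SU3 p k F) :=
  mkS p k F (uM (cjF p k F) a (bE p k F e a r)) (uM_det _ _ _)
    (uM_isU _ (cjF_cj p k F hF) _ _ (bE_cond p k F hF h2 e he a r))

/-- torus -/
def tS (hF : Fintype.card F = (p ^ k) ^ 2) : Fˣ →* ↥(SU3 p k F) where
  toFun t := mkS p k F (tM (cjF p k F) t) (tM_det _ _ t.ne_zero) (tM_isU _ (cjF_cj p k F hF) _ t.ne_zero)
  map_one' := mt_ext (by rw [mt_mk, mt_one, Units.val_one, tM_one])
  map_mul' s t := mt_ext (by rw [mt_mul, mt_mk, mt_mk, mt_mk, Units.val_mul, tM_mul])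

/-- Weyl element -/
def wS : ↥(SU3 p k F) := mkS p k F (wM F) wM_det (wM_isU _)

open Classical in
/-- star -/
def sS (s : F) (g : ↥(SU3 p k F)) : ↥(SU3 p k F) :=
  if h : s * cjF p k F s = 1 then
    mkS p k F (sM s (mt g)) (by rw [sM_det s (left_ne_zero_of_mul_eq_one h), mt_det]) (sM_isU _ s h _ (mt_isU g)) else g

theorem mt_sS (s : F) (h : s * cjF p k F s = 1) (g : ↥(SU3 p k F)) : mt (sS p k F s g) = sM s (mt g) := by
  unfold sS; rw [dif_pos h]; rfl

theorem tri_S (hF : Fintype.card F = (p ^ k) ^ 2) (h2 : (2 : F) ≠ 0) (e : F) (he : cjF p k F e = -e) (he0 : e ≠ 0)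
    (g : ↥(SU3 p k F)) (h0 : mt g 2 0 = 0) : ∃ a r t, g = uS p k F hF h2 e he a r * tS p k F hF t := by
  obtain ⟨a, b, t, ht, hb, hg⟩ := tri (cjF p k F) (cjF_cj p k F hF) (mt g) (mt_isU g) (mt_det g) h0
  have hr : cjF p k F ((b + a * cjF p k F a / 2) / e) = (b + a * cjF p k F a / 2) / e := by
    simp only [map_add, map_div₀, map_mul, cjF_cj p k F hF, he, map_ofNat]
    field_simp
    linear_combination (-2) * hb
  refine ⟨a, ⟨_, hr⟩, Units.mk0 t ht, mt_ext ?_⟩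
  rw [hg, mt_mul]
  show _ = uM (cjF p k F) a (bE p k F e a _) * tM (cjF p k F) t
  congr 2
  unfold bE
  field_simp
  ring

theorem wS_sq : wS p k F * wS p k F = 1 := mt_ext (by
  rw [mt_mul, mt_one]
  show wM F * wM F = 1
  ext i j
  fin_cases i <;> fin_cases j <;> simp [wM, Matrix.mul_apply, Fin.sum_univ_three])

theorem exists_u_S (hF : Fintype.card F = (p ^ k) ^ 2) (h2 : (2 : F) ≠ 0) (e : F) (he : cjF p k F e = -e) (he0 : e ≠ 0)
    (g : ↥(SU3 p k F)) (h0 : mt g 2 0 ≠ 0) : ∃ a r, mt (wS p k F * (uS p k F hF h2 e he a r)⁻¹ * g) 2 0 = 0 := by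
  have hc : cjF p k F (mt g 2 0) ≠ 0 := by simpa using h0
  set x := mt g 2 0 with hx
  set a := - cjF p k F (mt g 1 0 / x) with ha
  set b := mt g 0 0 / x with hb
  clear_value a b
  have hl := (isU_iff _ _).1 (mt_isU g) 0 0
  simp [oM] at hl
  have hbb : b + cjF p k F b + a * cjF p k F a = 0 := by
    rw [ha, hb]
    simp only [map_div₀, map_neg, cjF_cj p k F hF]
    field_simp
    linear_combination hl
  have hr : cjF p k F ((b + a * cjF p k F a / 2) / e) = (b + a * cjF p k F a / 2) / e := by
    simp only [map_add, map_div₀, map_mul, cjF_cj p k F hF, he, map_ofNat]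
    field_simp
    linear_combination (-2) * hbb
  have hinv : (uS p k F hF h2 e he a ⟨_, hr⟩)⁻¹ = uS p k F hF h2 e he (-a) (-⟨_, hr⟩) := by
    rw [inv_eq_iff_mul_eq_one]
    apply mt_ext
    rw [mt_mul, mt_one]
    show uM _ _ (bE _ _ _ _ _ _) * uM _ _ (bE _ _ _ _ _ _) = 1
    rw [uM_mul]
    have : bE p k F e a ((b + a * cjF p k F a / 2) / e) + bE p k F e (-a) (-((b + a * cjF p k F a / 2) / e)) - a * cjF p k F (-a) = 0 := by
      unfold bE; rw [map_neg]; field_simp; ring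
    push_cast
    rw [this]
    ext i j
    fin_cases i <;> fin_cases j <;> simp [uM]
  refine ⟨a, ⟨_, hr⟩, ?_⟩
  rw [hinv, mt_mul, mt_mul]
  show (wM F * uM (cjF p k F) (-a) (bE p k F e (-a) (-((b + a * cjF p k F a / 2) / e))) * mt g) 2 0 = 0
  have hbe : bE p k F e (-a) (-((b + a * cjF p k F a / 2) / e)) = - a * cjF p k F a - b := by
    unfold bE; rw [map_neg]; field_simp; ring
  rw [hbe]
  simp [wM, uM, Matrix.mul_apply, Fin.sum_univ_three]
  rw [← hx]
  have hca : cjF p k F a = - (mt g 1 0 / x) := by rw [ha, map_neg, cjF_cj p k F hF]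
  rw [hca, hb]
  field_simp
  ring

theorem comm_S (hF : Fintype.card F = (p ^ k) ^ 2) (c : Fˣ) (h1 : (c : F) * cjF p k F c ≠ 1)
    (h2 : (c : F) ^ 2 ≠ cjF p k F c) (g : ↥(SU3 p k F)) (hg : g * g = 1) (hcg : tS p k F hF c * g = g * tS p k F hF c) :
    g = 1 ∨ g = tS p k F hF (-1) := by
  have hc0 : (c : F) ≠ 0 := c.ne_zero
  have hcc : cjF p k F c ≠ 0 := by simp
  have h3 : (cjF p k F c) ^ 2 ≠ c := by
    intro h
    apply h2
    have := congrArg (cjF p k F) h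
    rw [map_pow, cjF_cj p k F hF] at this
    exact this
  have hm : tM (cjF p k F) c * mt g = mt g * tM (cjF p k F) c := congrArg mt hcg
  have hE : ∀ i j, (tM (cjF p k F) c * mt g) i j = (mt g * tM (cjF p k F) c) i j := fun i j => by rw [hm]
  have e01 := hE 0 1
  have e02 := hE 0 2
  have e10 := hE 1 0
  have e12 := hE 1 2
  have e20 := hE 2 0
  have e21 := hE 2 1
  simp [tM, Matrix.mul_apply, Fin.sum_univ_three] at e01 e02 e10 e12 e20 e21
  field_simp at e01 e02 e10 e12 e20 e21
  have hz : ∀ {x y m : F}, x ≠ y → x * m = y * m → m = 0 := by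
    intro x y m hxy h
    by_contra hm
    exact hxy (mul_right_cancel₀ hm h)
  have z01 := hz h2 (by rw [e01, mul_comm])
  have z02 := hz h1 (by rw [e02, one_mul])
  have z10 := hz h2 e10.symm
  have z12 := hz h3 e12
  have z20 := hz h1 (by rw [← e20, one_mul])
  have z21 := hz h3 e21.symm
  have hgg : ∀ i j, (mt g * mt g) i j = (1 : Matrix (Fin 3) (Fin 3) F) i j := fun i j => by
    rw [← mt_mul, hg, mt_one]
  have d0 := hgg 0 0
  simp [Matrix.mul_apply, Fin.sum_univ_three, z01, z02] at d0
  have hl := (isU_iff _ _).1 (mt_isU g) 0 2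
  simp [oM, z20, z02, z10] at hl
  have hd := mt_det g
  rw [Matrix.det_fin_three] at hd
  simp [z01, z02, z10, z12, z20, z21] at hd
  have h0 : mt g 0 0 = 1 ∨ mt g 0 0 = -1 := mul_self_eq_one_iff.1 d0
  rcases h0 with h0 | h0
  · left
    rw [h0] at hl hd
    simp at hl
    rw [hl] at hd
    simp at hd
    apply mt_ext
    rw [mt_one]
    ext i j
    fin_cases i <;> fin_cases j <;> simp [z01, z02, z10, z12, z20, z21, h0, hl, hd]
  · right
    rw [h0] at hl hd
    simp at hl
    have hl' : mt g 2 2 = -1 := by linear_combination -hl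
    rw [hl'] at hd
    simp at hd
    apply mt_ext
    show mt g = tM (cjF p k F) ((-1 : Fˣ) : F)
    ext i j
    fin_cases i <;> fin_cases j <;> simp [tM, z01, z02, z10, z12, z20, z21, h0, hl', hd]

/-- the norm -/
def nS (hF : Fintype.card F = (p ^ k) ^ 2) (t : Fˣ) : KF p k F :=
  ⟨t * cjF p k F t, by rw [mem_KF, map_mul, cjF_cj p k F hF, mul_comm]⟩

theorem T_u_S (hF : Fintype.card F = (p ^ k) ^ 2) (h2 : (2 : F) ≠ 0) (e : F) (he : cjF p k F e = -e) (t : Fˣ) (a : F)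
    (r : KF p k F) : tS p k F hF t * uS p k F hF h2 e he a r =
      uS p k F hF h2 e he ((t : F) ^ 2 / cjF p k F t * a) (nS p k F hF t * r) * tS p k F hF t := mt_ext (by
    rw [mt_mul, mt_mul]
    show tM _ _ * uM _ _ (bE _ _ _ _ _ _) = uM _ _ (bE _ _ _ _ _ _) * tM _ _
    have ht : (t : F) ≠ 0 := t.ne_zero
    have hct : cjF p k F t ≠ 0 := by simp
    rw [tM_uM _ (cjF_cj p k F hF) _ _ _ ht]
    congr 2
    unfold bE nS
    push_cast
    simp only [map_mul, map_div₀, map_pow, cjF_cj p k F hF]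
    field_simp)

theorem bruhat_S (hF : Fintype.card F = (p ^ k) ^ 2) (h2 : (2 : F) ≠ 0) (e : F) (he : cjF p k F e = -e) (he0 : e ≠ 0)
    (g : ↥(SU3 p k F)) : (∃ a r t, g = uS p k F hF h2 e he a r * tS p k F hF t) ∨
      ∃ a r t a' r', g = uS p k F hF h2 e he a r * (wS p k F * tS p k F hF t) * uS p k F hF h2 e he a' r' := by
  by_cases h0 : mt g 2 0 = 0
  · exact Or.inl (tri_S p k F hF h2 e he he0 g h0)
  · right
    obtain ⟨a, r, h1⟩ := exists_u_S p k F hF h2 e he he0 g h0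
    obtain ⟨a', r', t, ht⟩ := tri_S p k F hF h2 e he he0 _ h1
    have h3 := T_u_S p k F hF h2 e he t⁻¹ a' r'
    refine ⟨a, r, t, ((t⁻¹ : Fˣ) : F) ^ 2 / cjF p k F (t⁻¹ : Fˣ) * a', nS p k F hF t⁻¹ * r', ?_⟩
    rw [map_inv, inv_mul_eq_iff_eq_mul, ← mul_assoc, eq_mul_inv_iff_mul_eq] at h3
    have h4 : g = uS p k F hF h2 e he a r * (wS p k F * (uS p k F hF h2 e he a' r' * tS p k F hF t)) := by
      rw [← ht, mul_assoc (wS p k F), ← mul_assoc (wS p k F), wS_sq, one_mul, mul_inv_cancel_left]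
    rw [h4, h3]
    simp only [mul_assoc]

/-- `SU₃(q)` as a configuration -/
def cfgS (hF : Fintype.card F = (p ^ k) ^ 2) (h2 : (2 : F) ≠ 0) (hq : 3 ≤ p ^ k) (hodd : Odd (p ^ k))
    (e : F) (he0 : e ≠ 0) (he : cjF p k F e = -e) : Cfg F ↥(SU3 p k F) where
  q := p ^ k
  q_odd := hodd
  q_ge := hq
  cardF := hF
  cj := cjF p k F
  cj_eq := cjF_eq p k F
  two_ne := h2
  K := KF p k F
  memK := mem_KF p k F
  eps := e
  eps_ne := he0
  cj_eps := he
  u := uS p k F hF h2 e he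
  beta a a' := ⟨(a' * cjF p k F a - a * cjF p k F a') / (2 * e), by
    rw [mem_KF]
    simp only [map_sub, map_div₀, map_mul, cjF_cj p k F hF, he, map_ofNat]
    field_simp
    ring⟩
  beta_eq _ _ := rfl
  u_mul a r a' r' := mt_ext (by
    rw [mt_mul]
    show uM _ _ (bE _ _ _ _ _ _) * uM _ _ (bE _ _ _ _ _ _) = uM _ _ (bE _ _ _ _ _ _)
    rw [uM_mul]
    congr 1
    unfold bE
    push_cast
    rw [map_add]
    field_simp
    ring)
  T := tS p k F hF
  Nm := nS p k F hF
  Nm_eq _ := rfl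
  T_u := T_u_S p k F hF h2 e he
  w := wS p k F
  bruhat := bruhat_S p k F hF h2 e he he0
  st := sS p k F
  st_mul s hs g h := mt_ext (by
    rw [mt_sS p k F s hs, mt_mul, mt_mul, mt_sS p k F s hs, mt_sS p k F s hs, sM_mul s (left_ne_zero_of_mul_eq_one hs)])
  st_st s hs g := mt_ext (by
    rw [mt_sS p k F s hs, mt_sS p k F s hs, sM_sM s (left_ne_zero_of_mul_eq_one hs)])
  st_u s hs a r := mt_ext (by
    rw [mt_sS p k F s hs]
    show sM s (uM _ _ (bE _ _ _ _ _ _)) = uM _ _ (bE _ _ _ _ _ _)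
    rw [sM_uM _ (cjF_cj p k F hF) s hs]
    congr 1
    unfold bE
    simp only [map_mul, map_neg, cjF_cj p k F hF]
    linear_combination (a * cjF p k F a / 2) * hs)
  st_T s hs t := mt_ext (by
    rw [mt_sS p k F s hs]
    show sM s (tM _ _) = tM _ _
    rw [sM_tM _ (cjF_cj p k F hF) _ _ t.ne_zero]
    simp)
  st_w s hs t := mt_ext (by
    rw [mt_sS p k F s hs, mt_mul]
    exact sM_wtM _ _ _)
  T_neg h := by
    have h1 : tM (cjF p k F) ((-1 : Fˣ) : F) = 1 := congrArg mt h
    have h3 := congrFun (congrFun h1 0) 0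
    simp [tM] at h3
    apply h2
    linear_combination -h3
  comm_T := comm_S p k F hF

end inst
end Paper

namespace Paper

theorem stmt15_aux (p k q : ℕ) (hp : p.Prime) (hpodd : Odd p) (hk : 0 < k) (hq : q = p ^ k)
    (F : Type) [Field F] [Fintype F] [ExpChar F p] (hF : Fintype.card F = q ^ 2)
    (χ : ↥(SU3 p k F) → ℂ) (hχ : IsIrrChar χ)
    (hdeg : χ 1 = (((q + 1) * (q ^ 2 - 1) : ℕ) : ℂ) ∨
      (3 ∣ q + 1 ∧ χ 1 = (((q + 1) * (q ^ 2 - 1) / 3 : ℕ) : ℂ))) :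
    HasUnitaryDisc χ (if q % 4 = 3 then 1 else (q : ℂ)) := by
  subst hq
  have hodd : Odd (p ^ k) := hpodd.pow
  have hq3 : 3 ≤ p ^ k := by
    have h1 : p ≤ p ^ k := Nat.le_self_pow hk.ne' p
    have h2 := hp.two_le
    obtain ⟨m, hm⟩ := hpodd
    omega
  have h2 : (2 : F) ≠ 0 := by
    intro h
    have h3 : ((Fintype.card F : ℕ) : F) = 0 := FiniteField.cast_card_eq_zero F
    rw [hF] at h3
    obtain ⟨m, hm⟩ : Odd ((p ^ k) ^ 2) := hodd.pow
    rw [hm] at h3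
    push_cast at h3
    rw [h] at h3
    simp at h3
  obtain ⟨e, he0, he⟩ := exists_eps p k F hF hq3
  have : Fintype ↥(SU3 p k F) := Fintype.ofFinite _
  obtain ⟨n, ρ0, hirr, hχ0⟩ := hχ
  intro m ρ hχρ hL H hHL hu hH hinv
  have hn : χ 1 = (n : ℂ) := by rw [hχ0]; simp [charOf]
  have hm : χ 1 = (m : ℂ) := by rw [hχρ]; simp [charOf]
  have hnm : n = m := by exact_mod_cast hn.symm.trans hm
  subst hnm
  let R0 : ↥(SU3 p k F) →* Matrix (Fin n) (Fin n) ℂ := (Units.coeHom _).comp ρ0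
  let R : ↥(SU3 p k F) →* Matrix (Fin n) (Fin n) ℂ := (Units.coeHom _).comp ρ
  have hR0 : Irr R0 := hirr
  have hR : Irr R := irr_transfer hR0 R (fun g => by
    have := congrFun (hχρ.symm.trans hχ0) g
    exact this)
  have hLc : ∀ x ∈ charField χ, (starRingEnd ℂ) x ∈ charField χ := by
    have : charField χ ≤ (charField χ).comap (starRingEnd ℂ) := by
      apply Subfield.closure_le.2
      rintro _ ⟨g, rfl⟩
      show (starRingEnd ℂ) (χ g) ∈ charField χ
      have h5 : (starRingEnd ℂ) (χ g) = χ g⁻¹ := by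
        rw [hχρ]
        exact trace_conj R g
      rw [h5]
      exact Subfield.subset_closure ⟨_, rfl⟩
    exact this
  have hsq : (p ^ k) ^ 2 - 1 = (p ^ k + 1) * (p ^ k - 1) := by
    have := Nat.sq_sub_sq (p ^ k) 1
    simpa using this
  have hd : ∃ g b, (cfgS p k F hF h2 hq3 hodd e he0 he).Deg n g b := by
    rcases hdeg with h | ⟨⟨b, hb⟩, h⟩
    · refine ⟨1, p ^ k + 1, Or.inl rfl, one_mul _, ?_⟩
      have h6 : n = (p ^ k + 1) * ((p ^ k) ^ 2 - 1) := by exact_mod_cast hn.symm.trans h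
      rw [h6, hsq]
      show _ = (p ^ k + 1) * (p ^ k + 1) * (p ^ k - 1)
      ring
    · refine ⟨3, b, Or.inr rfl, hb.symm, ?_⟩
      have h6 : n = (p ^ k + 1) * ((p ^ k) ^ 2 - 1) / 3 := by exact_mod_cast hn.symm.trans h
      rw [h6, hsq]
      show _ = b * (p ^ k + 1) * (p ^ k - 1)
      apply Nat.div_eq_of_eq_mul_right (by norm_num)
      nth_rewrite 1 [hb]
      ring
  obtain ⟨g, b, hd⟩ := hd
  exact (cfgS p k F hF h2 hq3 hodd e he0 he).main_disc R hR g b hd (charField χ) hLc hL H hHL hu hH hinv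

/-- every irreducible character of `SU₃(q)`, `q` odd, of degree
`(q+1)(q²-1)`, or of degree `(q+1)(q²-1)/3` when `3 ∣ q+1`, with non-real character
field has unitary discriminant `q` if `q ≡ 1 (mod 4)` and `1` if `q ≡ 3 (mod 4)`. -/
theorem stmt15 (p k q : ℕ) (hp : p.Prime) (hpodd : Odd p) (hk : 0 < k) (hq : q = p ^ k)
    (F : Type) [Field F] [Fintype F] [ExpChar F p] (hF : Fintype.card F = q ^ 2)
    (χ : ↥(SU3 p k F) → ℂ) (hχ : IsIrrChar χ)
    (hdeg : χ 1 = (((q + 1) * (q ^ 2 - 1) : ℕ) : ℂ) ∨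
      (3 ∣ q + 1 ∧ χ 1 = (((q + 1) * (q ^ 2 - 1) / 3 : ℕ) : ℂ)))
    (hnr : NotReal χ) :
    (q % 4 = 1 → HasUnitaryDisc χ (q : ℂ)) ∧
    (q % 4 = 3 → HasUnitaryDisc χ (1 : ℂ)) := by
  have h := stmt15_aux p k q hp hpodd hk hq F hF χ hχ hdeg
  refine ⟨fun h1 => ?_, fun h1 => ?_⟩
  · rwa [if_neg (by omega)] at h
  · rwa [if_pos h1] at h

end Paper
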